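/- Let (W,S) be a Coxeter system of finite rank and let F be a family of isomorphism types of finite irreducible Coxeter systems. Then: (i) the pair (W(F), S(F)) = (W/N(F), η(S)) is a Coxeter system; and (ii) for any other set of Coxeter generators S' of W, the subgroup N(F) defined with respect to (W,S') equals the subgroup N(F) defined with respect to (W,S); consequently N(F) is a characteristic subgroup of W. -/

import Mathlib

/-!
Fix a Coxeter system with generators indexed by `B`. The group acts on `ℝ^B` by the geometric
representation `rep`. The image of a simple root under a group element is a positive or a negative
vector according to descents, which makes `rep` faithful (`rep_injective`). Dually, a functional
which is nonnegative on simple roots has a visual subgroup as stabilizer (`stabilizer`), so every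
finite subgroup is conjugate into a finite visual one (`finite_subgroup`), and the invariant form is
positive definite on the root space of a finite visual subgroup (`pos_def`).

Matching. By `finite_subgroup`, maximal finite visual subgroups of two systems on the same group
agree up to conjugation (`max_spherical_match`). Inside such a common finite group, a connected set
of simple reflections, each of which factors through two commuting subgroups, is centralized by one
of the two (`split_one`, `split_conn`). An irreducible factor for the one system is therefore equal
to one for the other up to elements centralizing both; this relation is `Link`, and it forces equal
commutator subgroups. If a visual subgroup contains a conjugate of the commutator subgroup of
a base, then its set of generators contains the base (`par_le_of_commutator`, `sat_subset`). This
gives existence (`matching`) and uniqueness (`IsB.unique`) of the base matching a given one.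

Types. The connected positive definite diagrams are classified by attaching one end vertex at a
time (`classification`), and the orders of their groups are found by counting the orbit of a
fundamental weight (`card_orbit`). The order of an irreducible finite Coxeter group determines its
type, with two kinds of exception. A group of rank two may have the order of one of higher rank, but
its commutator subgroup is cyclic, which never happens in higher rank (`tri_not_cyclic`). The types
`A₄` and `H₃` both have order `120`, but only the second group has a nontrivial center, and
linked finite groups of equal order agree in this respect (`Link.no_center`). Hence linked bases of
equal order have isomorphic diagrams (`type_thm`).

Independence. Two matching reduced bases have equal order, hence the same type, so the bases which
contribute to `N(F)`, described by `Sel`, match those for any other set of generators (`Sel.match`).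
This shows `NF_le`, and by symmetry `N(F)` does not depend on the generators. An automorphism `φ`
takes `N(F)` for `S` to `N(F)` for `φ(S)`, which is again `N(F)` (`NF_char`).

Quotient. Consider the Coxeter group presented by the images of the generators in `W / N(F)` and
the orders of their products. It maps onto `W / N(F)`. Conversely `W` maps to it, and this map kills
`N(F)`: for `s` and `t` in a base contributing to `N(F)` we have `(st)² = [s, t] ∈ N(F)`, so the
generators of the presented group belonging to `s` and `t` commute. The two maps are mutually
inverse (`quot_coxeter`, `NF_quot`).
-/

variable {W : Type*} [Group W]

/-- `S` is a set of Coxeter generators of the group `W`, with Coxeter matrix given by the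
restriction of `m` to `S × S` (the value `0` of `m` encodes `∞`). -/
def IsCoxeterSystemOn (m : W → W → ℕ) (S : Set W) : Prop :=
  ∃ (cm : CoxeterMatrix S) (cs : CoxeterSystem cm W),
    (∀ s : S, cs.simple s = (s : W)) ∧ ∀ s t : S, cm.M s t = m s t

/-- The subset `B` is irreducible: its Coxeter diagram (edges between distinct `x, y` with
`m x y > 2`, including `m x y = ∞`, i.e. `m x y = 0`) is nonempty and connected. -/
def IsIrreducibleOn (m : W → W → ℕ) (B : Set W) : Prop :=
  B.Nonempty ∧ ∀ u ∈ B, ∀ v ∈ B,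
    Relation.ReflTransGen
      (fun x y => x ∈ B ∧ y ∈ B ∧ x ≠ y ∧ (m x y = 0 ∨ 2 < m x y)) u v

/-- `B` is a base of the Coxeter system `(W, S)`: the visual subgroup `⟨B⟩` is a noncyclic,
maximal, finite, irreducible visual subgroup. -/
def IsBase (m : W → W → ℕ) (S B : Set W) : Prop :=
  B ⊆ S ∧ IsIrreducibleOn m B ∧ (Subgroup.closure B : Set W).Finite ∧
    ¬ IsCyclic ↥(Subgroup.closure B) ∧
    ∀ B' : Set W, B' ⊆ S → B ⊆ B' → IsIrreducibleOn m B' →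
      (Subgroup.closure B' : Set W).Finite → B' = B

/-- The base `B` matches the base `B'`: the commutator subgroups of the visual subgroups
`⟨B⟩` and `⟨B'⟩` are conjugate in `W`. -/
def Matches (B B' : Set W) : Prop :=
  ∃ w : W,
    Subgroup.map ((MulAut.conj w).toMonoidHom)
        (⁅Subgroup.closure B, Subgroup.closure B⁆ : Subgroup W)
      = ⁅Subgroup.closure B', Subgroup.closure B'⁆

/-- `(⟨B⟩, B)` has the isomorphism type of the Coxeter system of the Coxeter matrix `std`. -/
def HasType (m : W → W → ℕ) (B : Set W) {n : ℕ} (std : Fin n → Fin n → ℕ) : Prop :=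
  ∃ e : ↥B ≃ Fin n, ∀ u v : ↥B, m u v = std (e u) (e v)

/-- The Coxeter matrix of type `Aₙ` (Coxeter's notation): linear diagram, all labels 3. -/
def aMat (n : ℕ) : Fin n → Fin n → ℕ := fun i j =>
  if i = j then 1 else if i.val + 1 = j.val ∨ j.val + 1 = i.val then 3 else 2

/-- The Coxeter matrix of type `Cₙ` in Coxeter's notation (Bourbaki's `Bₙ`):
linear diagram with labels 3, …, 3, 4. -/
def cMat (n : ℕ) : Fin n → Fin n → ℕ := fun i j =>
  if i = j then 1
  else if i.val + 1 = j.val ∨ j.val + 1 = i.val then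
    (if i.val + 1 = n ∨ j.val + 1 = n then 4 else 3)
  else 2

/-- The Coxeter matrix of type `Bₙ` in Coxeter's notation (Bourbaki's `Dₙ`), for `n ≥ 3`:
a chain `0, …, n-2` with labels 3 together with the edge `{n-3, n-1}` labelled 3. -/
def bMat (n : ℕ) : Fin n → Fin n → ℕ := fun i j =>
  if i = j then 1
  else if ((i.val + 1 = j.val ∧ j.val + 2 ≤ n) ∨ (j.val + 1 = i.val ∧ i.val + 2 ≤ n))
      ∨ (i.val + 3 = n ∧ j.val + 1 = n) ∨ (j.val + 3 = n ∧ i.val + 1 = n) then 3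
  else 2

/-- The dihedral Coxeter matrix `D₂(k)` (i.e. `I₂(k)`). -/
def d2Mat (k : ℕ) : Fin 2 → Fin 2 → ℕ := fun i j => if i = j then 1 else k

/-- The Coxeter matrix of type `G₃` in Coxeter's notation (i.e. `H₃`). -/
def g3Mat : Fin 3 → Fin 3 → ℕ := ![![1,3,2], ![3,1,5], ![2,5,1]]

/-- The Coxeter matrix of type `G₄` in Coxeter's notation (i.e. `H₄`). -/
def g4Mat : Fin 4 → Fin 4 → ℕ := ![![1,3,2,2], ![3,1,3,2], ![2,3,1,5], ![2,2,5,1]]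

/-- The Coxeter matrix of type `F₄`. -/
def f4Mat : Fin 4 → Fin 4 → ℕ := ![![1,3,2,2], ![3,1,4,2], ![2,4,1,3], ![2,2,3,1]]

/-- The 2-part of `k`: the largest power of 2 dividing `k` (with `0` encoding `∞`;
the 2-part of `∞` is `∞`). -/
def twoPart (k : ℕ) : ℕ := if k = 0 then 0 else 2 ^ (k.factorization 2)

/-- The subgroup `N_b`: the normal closure in `W` of the elements `(st) ^ b(s,t)` for
`s, t ∈ S` with `m s t < ∞`, where `b(s,t)` is the 2-part of `m s t`. -/
def NbSubgroup (m : W → W → ℕ) (S : Set W) : Subgroup W :=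
  Subgroup.normalClosure
    {x | ∃ s ∈ S, ∃ t ∈ S, m s t ≠ 0 ∧ x = (s * t) ^ twoPart (m s t)}

instance (m : W → W → ℕ) (S : Set W) : (NbSubgroup m S).Normal :=
  Subgroup.normalClosure_normal

/-- `(a, b)` is a special pair of elements of `S`: `m a b ≡ 2 mod 4` and either `v = a` or
`v = b` has the property that `m s a = m s b = 2` for every `s ∈ S \ {a, b}` with
`m s v < ∞`. -/
def IsSpecialPair (m : W → W → ℕ) (S : Set W) (a b : W) : Prop :=
  a ∈ S ∧ b ∈ S ∧ a ≠ b ∧ m a b % 4 = 2 ∧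
    ((∀ s ∈ S, s ≠ a → s ≠ b → m s a ≠ 0 → m s a = 2 ∧ m s b = 2) ∨
     (∀ s ∈ S, s ≠ a → s ≠ b → m s b ≠ 0 → m s a = 2 ∧ m s b = 2))

open scoped Classical in
/-- `m̄ a b = 2` if `(a, b)` is a special pair and `m̄ a b = m a b` otherwise. -/
noncomputable def mbar (m : W → W → ℕ) (S : Set W) (a b : W) : ℕ :=
  if IsSpecialPair m S a b then 2 else m a b

/-- The subgroup `N_e`: the normal closure in `W` of the elements `st` with `m s t` odd
together with the elements `(ab)²` with `(a, b)` a special pair. -/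
def NeSubgroup (m : W → W → ℕ) (S : Set W) : Subgroup W :=
  Subgroup.normalClosure
    ({x | ∃ s ∈ S, ∃ t ∈ S, Odd (m s t) ∧ x = s * t} ∪
     {x | ∃ a b : W, IsSpecialPair m S a b ∧ x = (a * b) ^ 2})

instance (m : W → W → ℕ) (S : Set W) : (NeSubgroup m S).Normal :=
  Subgroup.normalClosure_normal

/-- The word length of `w` with respect to the generating set `B`. -/
noncomputable def wordLength (B : Set W) (w : W) : ℕ :=
  sInf {n | ∃ l : List W, (∀ x ∈ l, x ∈ B) ∧ l.length = n ∧ l.prod = w}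

/-- `z` is a longest element of the visual subgroup `⟨B⟩`. -/
def IsLongestElement (B : Set W) (z : W) : Prop :=
  z ∈ Subgroup.closure B ∧
    ∀ w ∈ Subgroup.closure B, wordLength B w ≤ wordLength B z

/-- The basic subgroup `⟨B⟩` of `(W, S)` is reduced: for every set of Coxeter generators `S'`
of `W`, any base of `(W, S')` matching `B` generates a subgroup of order at least `|⟨B⟩|`. -/
def IsReducedBase (m : W → W → ℕ) (S B : Set W) : Prop :=
  ∀ (S' : Set W) (m' : W → W → ℕ) (B' : Set W),
    IsCoxeterSystemOn m' S' → S'.Finite → IsBase m' S' B' → Matches B B' →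
      Nat.card ↥(Subgroup.closure B) ≤ Nat.card ↥(Subgroup.closure B')

/-- The isomorphism type of `(⟨B⟩, B)` belongs to the family `F` of isomorphism types of
Coxeter systems (a family of Coxeter matrices). -/
def TypeIn (F : ∀ n : ℕ, (Fin n → Fin n → ℕ) → Prop) (m : W → W → ℕ) (B : Set W) : Prop :=
  ∃ (n : ℕ) (Mt : Fin n → Fin n → ℕ), F n Mt ∧ HasType m B Mt

/-- The subgroup `N(F)`: the normal closure in `W` of the commutator subgroups of all
reduced basic subgroups of `(W, S)` of type in `F` together with the commutator subgroups of
all unreduced basic subgroups of `(W, S)` matching a reduced basic subgroup of type in `F`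
of another system `(W, S')`. -/
def NFSubgroup (F : ∀ n : ℕ, (Fin n → Fin n → ℕ) → Prop)
    (m : W → W → ℕ) (S : Set W) : Subgroup W :=
  Subgroup.normalClosure
    {x | ∃ B : Set W, IsBase m S B ∧
      x ∈ (⁅Subgroup.closure B, Subgroup.closure B⁆ : Subgroup W) ∧
      ((IsReducedBase m S B ∧ TypeIn F m B) ∨
       (¬ IsReducedBase m S B ∧ ∃ (S' : Set W) (m' : W → W → ℕ) (B' : Set W),
          IsCoxeterSystemOn m' S' ∧ S'.Finite ∧ IsBase m' S' B' ∧
          IsReducedBase m' S' B' ∧ TypeIn F m' B' ∧ Matches B B'))}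

instance (F : ∀ n : ℕ, (Fin n → Fin n → ℕ) → Prop) (m : W → W → ℕ) (S : Set W) :
    (NFSubgroup F m S).Normal :=
  Subgroup.normalClosure_normal

/-- The normal closure, within the subgroup `H`, of the subset `X ⊆ H`,
as a subgroup of the ambient group. -/
def nClosIn (H : Subgroup W) (X : Set W) : Subgroup W :=
  Subgroup.map H.subtype (Subgroup.normalClosure ((fun x : H => (x : W)) ⁻¹' X))

/-- The generating set for the subgroup `N(⟨B⟩)` of a basic subgroup `⟨B⟩` of rank at least 3:
the commutator subgroup of `⟨B⟩` if the rank is at least 5 or the type is `A₄`, `G₃` or `G₄`;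
`a₁a₃` for type `A₃`; `b₁b₂, b₂b₃` (products of distinct commuting generators) for type `B₄`;
`(c₂c₃)²` for type `C₃`; `c₁c₃` for type `C₄`; and `(f₂f₃)²` for type `F₄`. -/
def genSetNB (m : W → W → ℕ) (B : Set W) : Set W :=
  {x | ((5 ≤ B.ncard ∨ HasType m B (aMat 4) ∨ HasType m B g3Mat ∨ HasType m B g4Mat) ∧
          x ∈ (⁅Subgroup.closure B, Subgroup.closure B⁆ : Subgroup W)) ∨
       (HasType m B (aMat 3) ∧ ∃ u ∈ B, ∃ v ∈ B, u ≠ v ∧ m u v = 2 ∧ x = u * v) ∨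
       (HasType m B (bMat 4) ∧ ∃ u ∈ B, ∃ v ∈ B, u ≠ v ∧ m u v = 2 ∧ x = u * v) ∨
       (HasType m B (cMat 3) ∧ ∃ u ∈ B, ∃ v ∈ B, m u v = 4 ∧ x = (u * v) ^ 2) ∨
       (HasType m B (cMat 4) ∧ ∃ u ∈ B, ∃ p ∈ B, ∃ v ∈ B, ∃ q ∈ B,
          m u p = 3 ∧ m p v = 3 ∧ m v q = 4 ∧ m u v = 2 ∧ x = u * v) ∨
       (HasType m B f4Mat ∧ ∃ u ∈ B, ∃ v ∈ B, m u v = 4 ∧ x = (u * v) ^ 2)}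

/-- The subgroup `N(⟨B⟩)` of the visual subgroup `⟨B⟩`, viewed as a subgroup of `W`. -/
def NBSubgroup (m : W → W → ℕ) (B : Set W) : Subgroup W :=
  nClosIn (Subgroup.closure B) (genSetNB m B)

/-- The subgroup `N(W)`: the normal closure in `W` of the subgroups `N(⟨B⟩)` over all
bases `B` of `(W, S)` of rank greater than 2. -/
def NWSubgroup (m : W → W → ℕ) (S : Set W) : Subgroup W :=
  Subgroup.normalClosure
    {x | ∃ B : Set W, IsBase m S B ∧ 2 < B.ncard ∧ x ∈ NBSubgroup m B}

instance (m : W → W → ℕ) (S : Set W) : (NWSubgroup m S).Normal :=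
  Subgroup.normalClosure_normal

/-! ### The geometric representation and its faithfulness -/

namespace CoxRep

set_option linter.unusedSectionVars false

open Polynomial.Chebyshev

section Geometric

variable {B : Type*} [Fintype B] [DecidableEq B]

/-- Entries of the (doubled) cosine matrix; `m = 0` (that is `∞`) gives `-2` since `π / 0 = 0`. -/
noncomputable def kk (m : ℕ) : ℝ := -2 * Real.cos (Real.pi / m)

lemma kk_one : kk 1 = 2 := by simp [kk]
lemma kk_zero : kk 0 = -2 := by simp [kk]
lemma kk_two : kk 2 = 0 := by simp [kk]

lemma kk_neg_of {m : ℕ} (h1 : m ≠ 1) (h2 : m ≠ 2) : kk m < 0 := by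
  unfold kk
  have : 0 < Real.cos (Real.pi / m) := by
    rcases Nat.eq_zero_or_pos m with h | h
    · subst h; simp
    · have h3 : (3:ℝ) ≤ m := by exact_mod_cast (show 3 ≤ m by omega)
      have hp := Real.pi_pos
      apply Real.cos_pos_of_mem_Ioo
      have : Real.pi / m ≤ Real.pi / 3 := by gcongr
      have : 0 ≤ Real.pi / m := by positivity
      constructor <;> linarith
  linarith

lemma kk_nonpos_of {m : ℕ} (h1 : m ≠ 1) : kk m ≤ 0 := by
  by_cases h2 : m = 2
  · subst h2; rw [kk_two]
  · exact (kk_neg_of h1 h2).le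

/-- The linear functional `2⟨α_s, ·⟩` of the geometric representation. -/
noncomputable def kv (M : CoxeterMatrix B) (s : B) : (B → ℝ) →ₗ[ℝ] ℝ :=
  ∑ t, kk (M.M s t) • LinearMap.proj t

lemma kv_apply (M : CoxeterMatrix B) (s : B) (v : B → ℝ) :
    kv M s v = ∑ t, kk (M.M s t) * v t := by simp [kv]

/-- The simple root `α_s`. -/
def sr (s : B) : B → ℝ := Pi.single s 1

lemma sr_self (s : B) : sr s s = 1 := by simp [sr]
lemma sr_ne {s t : B} (h : t ≠ s) : sr s t = 0 := by simp [sr, h]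
lemma sr_nonneg (s : B) : 0 ≤ sr s := by
  intro t; by_cases h : t = s
  · subst h; simp [sr_self]
  · simp [sr_ne h]

lemma sum_sr (v : B → ℝ) : v = ∑ s, v s • sr s := by
  ext t; simp [sr, Finset.sum_apply, Pi.single_apply]

lemma kv_sr (M : CoxeterMatrix B) (s t : B) : kv M s (sr t) = kk (M.M s t) := by
  simp [kv_apply, sr, Pi.single_apply]

lemma kv_self (M : CoxeterMatrix B) (s : B) : kv M s (sr s) = 2 := by
  rw [kv_sr, M.diagonal, kk_one]

/-- The reflection of a simple generator. -/
noncomputable def refl (M : CoxeterMatrix B) (s : B) : Module.End ℝ (B → ℝ) :=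
  (Module.reflection (kv_self M s) : (B → ℝ) ≃ₗ[ℝ] (B → ℝ)).toLinearMap

lemma refl_apply (M : CoxeterMatrix B) (s : B) (v : B → ℝ) :
    refl M s v = v - kv M s v • sr s := by
  simp [refl, Module.reflection_apply]

/-- Chebyshev values at `2 cos φ` are quotients of sines, multiplied out to allow `sin φ = 0`. -/
lemma S_cos (φ : ℝ) (n : ℕ) :
    (S ℝ ((n:ℤ) - 1)).eval (2 * Real.cos φ) * Real.sin φ = Real.sin (n * φ) := by
  have := S_two_mul_real_cos φ ((n:ℤ)-1)
  rw [this]; push_cast; congr 1; ring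

/-- The reflections satisfy the Coxeter relations: the product of two of them acts on the span of the
two simple roots as a rotation through `2π / m` when `m` is finite. -/
lemma refl_liftable (M : CoxeterMatrix B) : M.IsLiftable (refl M) := by
  intro s t
  set m := M.M s t with hm
  by_cases h1 : m = 1
  · have hst : s = t := by
      by_contra h; exact M.off_diagonal s t h h1
    subst hst
    rw [h1, pow_one]
    exact LinearMap.ext fun v => Module.involutive_reflection (kv_self M s) v
  by_cases h0 : m = 0
  · rw [h0, pow_zero]
  have hsym : M.M t s = m := M.symmetric t s
  by_cases h2 : m = 2
  · have e1 : kk (M.M s t) = 0 := by rw [← hm, h2, kk_two]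
    have e2 : kk (M.M t s) = 0 := by rw [hsym, h2, kk_two]
    rw [h2]
    refine LinearMap.ext fun v => ?_
    simp only [pow_two, Module.End.mul_apply, refl_apply, map_sub, map_smul, kv_sr, e1, e2,
      Module.End.one_apply, M.diagonal, kk_one]
    ext b
    simp; ring
  have hm3 : 3 ≤ m := by omega
  have hmr : (3:ℝ) ≤ m := by exact_mod_cast hm3
  set θ := Real.pi / m with hθ
  have hmθ : m * θ = Real.pi := by rw [hθ]; field_simp
  have hp := Real.pi_pos
  have hsin : Real.sin (2 * θ) ≠ 0 := by
    apply ne_of_gt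
    have : θ ≤ Real.pi / 3 := by rw [hθ]; gcongr
    have : 0 < θ := by rw [hθ]; positivity
    apply Real.sin_pos_of_pos_of_lt_pi <;> linarith
  have key := Module.reflection_mul_reflection_pow (kv_self M s) (kv_self M t) m
    (2 * Real.cos (2 * θ)) (by
      rw [kv_sr, kv_sr, hsym, ← hm, kk, ← hθ, Real.cos_two_mul]; ring)
  have hrr : (refl M s * refl M t) ^ m =
      ((Module.reflection (kv_self M s) * Module.reflection (kv_self M t)) ^ m).toLinearMap := by
    induction m with
    | zero => rfl
    | succ k ih =>
      clear ih
      generalize k + 1 = j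
      induction j with
      | zero => rfl
      | succ j ih => rw [pow_succ, pow_succ, ih]; rfl
  rw [hrr, key]
  have hz : ∀ x : ℝ, x * Real.sin (2 * θ) = 0 → x = 0 := fun x hx =>
    (mul_eq_zero.mp hx).resolve_right hsin
  rcases Nat.even_or_odd' m with ⟨k, hk | hk⟩
  · have i1 : ((m:ℤ) - 2) / 2 = (k:ℤ) - 1 := by omega
    have i2 : ((m:ℤ) - 1) / 2 = (k:ℤ) - 1 := by omega
    have : (S ℝ ((k:ℤ) - 1)).eval (2 * Real.cos (2 * θ)) = 0 := by
      apply hz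
      rw [S_cos, ← Real.sin_pi, ← hmθ, hk]; push_cast; congr 1; ring
    rw [i1, i2, this]; simp; rfl
  · have i1 : ((m:ℤ) - 2) / 2 = (k:ℤ) - 1 := by omega
    have i2 : ((m:ℤ) - 1) / 2 = ((k+1:ℕ):ℤ) - 1 := by push_cast; omega
    have i3 : ((m:ℤ) - 3) / 2 = (k:ℤ) - 1 := by omega
    have i4 : (m:ℤ) / 2 = ((k+1:ℕ):ℤ) - 1 := by push_cast; omega
    have : (S ℝ (((k+1:ℕ):ℤ) - 1)).eval (2 * Real.cos (2 * θ)) +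
        (S ℝ ((k:ℤ) - 1)).eval (2 * Real.cos (2 * θ)) = 0 := by
      apply hz
      rw [add_mul, S_cos, S_cos]
      have e : ((k+1:ℕ):ℝ) * (2*θ) = (m*θ) + θ := by rw [hk]; push_cast; ring
      have e' : (k:ℝ) * (2*θ) = (m*θ) - θ := by rw [hk]; push_cast; ring
      rw [e, e', hmθ, add_comm Real.pi, Real.sin_add_pi, Real.sin_pi_sub]; ring
    rw [i1, i2, i3, i4, this]; simp; rfl

variable {M : CoxeterMatrix B} {W : Type*} [Group W] (cs : CoxeterSystem M W)

/-- The geometric representation. -/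
noncomputable def rep : W →* Module.End ℝ (B → ℝ) := cs.lift ⟨refl M, refl_liftable M⟩

lemma rep_simple (s : B) : rep cs (cs.simple s) = refl M s := by
  simp [rep, cs.lift_apply_simple (refl_liftable M) s]

lemma rep_simple_apply (s : B) (v : B → ℝ) :
    rep cs (cs.simple s) v = v - kv M s v • sr s := by rw [rep_simple, refl_apply]

lemma rep_mul (a b : W) (v : B → ℝ) : rep cs (a * b) v = rep cs a (rep cs b v) := by
  rw [map_mul, Module.End.mul_apply]

lemma rep_one (v : B → ℝ) : rep cs 1 v = v := by simp

lemma rep_inv_apply (a : W) (v : B → ℝ) : rep cs a⁻¹ (rep cs a v) = v := by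
  rw [← rep_mul]; simp

lemma rep_apply_inv (a : W) (v : B → ℝ) : rep cs a (rep cs a⁻¹ v) = v := by
  rw [← rep_mul]; simp

lemma rep_simple_self (s : B) : rep cs (cs.simple s) (sr s) = - sr s := by
  rw [rep_simple_apply, kv_self, two_smul]; abel

lemma rep_inj_apply (a : W) {u v : B → ℝ} (h : rep cs a u = rep cs a v) : u = v := by
  rw [← rep_inv_apply cs a u, h, rep_inv_apply]

/-- The coefficients `sin (kθ) / sin θ` of roots of a dihedral subgroup, by their recursion. -/
def cc (x : ℝ) : ℕ → ℝ
  | 0 => 0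
  | 1 => 1
  | (k+2) => x * cc x (k+1) - cc x k

lemma cc_sin (θ : ℝ) (k : ℕ) : cc (2 * Real.cos θ) k * Real.sin θ = Real.sin (k * θ) ∧
    cc (2 * Real.cos θ) (k+1) * Real.sin θ = Real.sin ((k+1) * θ) := by
  induction k with
  | zero => simp [cc]
  | succ k ih =>
    refine ⟨by rw [ih.2]; push_cast; ring_nf, ?_⟩
    simp only [cc]
    rw [sub_mul, ih.1, mul_assoc, ih.2]
    have e1 : ((↑(k+1):ℝ) + 1) * θ = (k+1)*θ + θ := by push_cast; ring
    have e2 : (k:ℝ) * θ = (k+1)*θ - θ := by ring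
    rw [e1, e2, Real.sin_add, Real.sin_sub]; ring

lemma cc_two (k : ℕ) : cc 2 k = k ∧ cc 2 (k+1) = k+1 := by
  induction k with
  | zero => simp [cc]
  | succ k ih =>
    refine ⟨by rw [ih.2]; push_cast; ring, ?_⟩
    simp only [cc]; rw [ih.1, ih.2]; push_cast; ring

lemma cc_nonneg (m : ℕ) (hm1 : m ≠ 1) (k : ℕ) (hk : m ≠ 0 → k ≤ m) : 0 ≤ cc (-kk m) k := by
  rcases Nat.eq_zero_or_pos m with h | h
  · subst h; rw [kk_zero, neg_neg, (cc_two k).1]; positivity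
  · have h2 : (2:ℝ) ≤ m := by exact_mod_cast (show 2 ≤ m by omega)
    have hp := Real.pi_pos
    set θ := Real.pi / m with hθ
    have hx : -kk m = 2 * Real.cos θ := by rw [kk, ← hθ]; ring
    have hθ1 : θ ≤ Real.pi / 2 := by rw [hθ]; gcongr
    have hθ0 : 0 < θ := by rw [hθ]; positivity
    have hs : 0 < Real.sin θ := Real.sin_pos_of_pos_of_lt_pi hθ0 (by linarith)
    have hkm : (k:ℝ) ≤ m := by exact_mod_cast hk (by omega)
    have hn : 0 ≤ Real.sin (k * θ) := by
      apply Real.sin_nonneg_of_nonneg_of_le_pi (by positivity)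
      calc k * θ ≤ m * θ := by gcongr
        _ = Real.pi := by rw [hθ]; field_simp
    rw [← (cc_sin θ k).1, ← hx] at hn
    exact nonneg_of_mul_nonneg_left hn hs

open CoxeterSystem in
/-- An alternating word in `s` and `t` takes the simple root of `s` to a combination of the two simple
roots whose coefficients are Chebyshev values. -/
lemma rep_alternating (s t : B) (k : ℕ) :
    rep cs (cs.wordProd (alternatingWord s t k)) (sr s) =
      if Even k then cc (-kk (M.M s t)) (k+1) • sr s + cc (-kk (M.M s t)) k • sr t
      else cc (-kk (M.M s t)) k • sr s + cc (-kk (M.M s t)) (k+1) • sr t := by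
  induction k with
  | zero => simp [alternatingWord, cc]
  | succ k ih =>
    rw [alternatingWord_succ', cs.wordProd_cons, rep_mul, ih]
    by_cases hk : Even k
    · have : ¬ Even (k+1) := by simpa [Nat.even_add_one] using hk
      rw [if_pos hk, if_neg this, if_pos hk, rep_simple_apply]
      simp only [map_add, map_smul, kv_sr, M.diagonal, kk_one, M.symmetric t s, smul_eq_mul, cc]
      module
    · have : Even (k+1) := by simpa [Nat.even_add_one] using hk
      rw [if_neg hk, if_pos this, if_neg hk, rep_simple_apply]
      simp only [map_add, map_smul, kv_sr, M.diagonal, kk_one, smul_eq_mul, cc]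
      module

open CoxeterSystem in
/-- Splitting off from `w` its alternating right factor in `s` and `t`: the remaining factor is a
shortest representative of the coset of the dihedral subgroup. -/
lemma exists_alternating (s t : B) (w : W) (hs : ¬ cs.IsRightDescent w s) :
    ∃ (v : W) (k : ℕ), w = v * cs.wordProd (alternatingWord s t k) ∧
      cs.length w = cs.length v + k ∧ ¬ cs.IsRightDescent v s ∧ ¬ cs.IsRightDescent v t := by
  suffices H : ∀ n (v : W) (k : ℕ), cs.length v = n →
      w = v * cs.wordProd (alternatingWord s t k) →
      cs.length w = cs.length v + k → ∃ (v : W) (k : ℕ),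
      w = v * cs.wordProd (alternatingWord s t k) ∧
      cs.length w = cs.length v + k ∧ ¬ cs.IsRightDescent v s ∧ ¬ cs.IsRightDescent v t from
    H _ w 0 rfl (by simp [alternatingWord]) (by simp)
  intro n
  induction n with
  | zero =>
    intro v k h1 h2 h3
    have : v = 1 := cs.length_eq_zero_iff.mp h1
    subst this
    exact ⟨1, k, h2, h3, cs.not_isRightDescent_one s, cs.not_isRightDescent_one t⟩
  | succ n ih =>
    intro v k h1 h2 h3
    by_cases hd : ¬ cs.IsRightDescent v s ∧ ¬ cs.IsRightDescent v t
    · exact ⟨v, k, h2, h3, hd.1, hd.2⟩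
    -- a descent of `v` that differs from the first letter of the word extends the word
    set a := if Even k then t else s with ha
    set a' := if Even k then s else t with ha'
    have hna' : ¬ cs.IsRightDescent v a' := by
      intro hda
      rcases Nat.eq_zero_or_pos k with hk | hk
      · subst hk
        simp [alternatingWord] at h2 ha'
        rw [ha', ← h2] at hda; exact hs hda
      · obtain ⟨j, rfl⟩ : ∃ j, k = j + 1 := ⟨k-1, by omega⟩
        have haj : (if Even j then t else s) = a' := by
          rw [ha']; by_cases hj : Even j <;> simp [hj, Nat.even_add_one]
        rw [alternatingWord_succ', cs.wordProd_cons, haj, ← mul_assoc] at h2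
        have := cs.length_mul_le (v * cs.simple a') (cs.wordProd (alternatingWord s t j))
        have h5 := cs.length_wordProd_le (alternatingWord s t j)
        rw [length_alternatingWord] at h5
        rw [← h2] at this
        unfold IsRightDescent at hda
        omega
    have hda : cs.IsRightDescent v a := by
      by_contra h
      apply hd
      by_cases hk : Even k
      · rw [ha, if_pos hk] at h
        rw [ha', if_pos hk] at hna'
        exact ⟨hna', h⟩
      · rw [ha, if_neg hk] at h
        rw [ha', if_neg hk] at hna'
        exact ⟨h, hna'⟩
    have hl := cs.isRightDescent_iff.mp hda
    refine ih (v * cs.simple a) (k+1) (by omega) ?_ (by omega)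
    rw [alternatingWord_succ', cs.wordProd_cons, ← ha, ← mul_assoc,
      cs.simple_mul_simple_cancel_right, h2]

open CoxeterSystem in
/-- The fundamental fact on the geometric representation: `w` takes the simple root of `s` to a
positive vector unless `s` is a right descent of `w`. -/
theorem nonneg_of_not_descent (w : W) (s : B) (h : ¬ cs.IsRightDescent w s) :
    0 ≤ rep cs w (sr s) := by
  generalize hn : cs.length w = n
  induction n using Nat.strong_induction_on generalizing w s with
  | _ n ih =>
  by_cases hw : w = 1
  · subst hw; rw [rep_one]; exact sr_nonneg s
  obtain ⟨t, ht⟩ := cs.exists_rightDescent_of_ne_one hw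
  have hst : s ≠ t := by rintro rfl; exact h ht
  obtain ⟨v, k, h1, h2, h3, h4⟩ := exists_alternating cs s t w h
  have hk : k ≠ 0 := by
    rintro rfl
    simp [alternatingWord] at h1
    subst h1; exact h4 ht
  have hm1 : M.M s t ≠ 1 := M.off_diagonal s t hst
  have hlen : cs.length (w * cs.simple s) = cs.length w + 1 := cs.not_isRightDescent_iff.mp h
  have hbound : M.M s t ≠ 0 → k + 1 ≤ M.M s t := by
    intro hm0
    by_contra hlt
    have hnr := cs.not_isReduced_alternatingWord t s (m := k+1)
      (by rw [M.symmetric]; exact hm0) (by rw [M.symmetric]; omega)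
    apply hnr
    unfold CoxeterSystem.IsReduced
    apply le_antisymm (cs.length_wordProd_le _)
    rw [length_alternatingWord]
    have e : w * cs.simple s = v * cs.wordProd (alternatingWord t s (k+1)) := by
      rw [alternatingWord_succ, cs.wordProd_concat, h1, mul_assoc]
    have := cs.length_mul_le v (cs.wordProd (alternatingWord t s (k+1)))
    rw [← e] at this
    omega
  have n1 := cc_nonneg (M.M s t) hm1 k (fun h0 => by have := hbound h0; omega)
  have n2 := cc_nonneg (M.M s t) hm1 (k+1) hbound
  have i1 := ih (cs.length v) (by omega) v s h3 rfl
  have i2 := ih (cs.length v) (by omega) v t h4 rfl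
  rw [h1, rep_mul, rep_alternating]
  split_ifs
  · rw [map_add, map_smul, map_smul]
    exact add_nonneg (smul_nonneg n2 i1) (smul_nonneg n1 i2)
  · rw [map_add, map_smul, map_smul]
    exact add_nonneg (smul_nonneg n1 i1) (smul_nonneg n2 i2)

open CoxeterSystem in
theorem nonpos_of_descent (w : W) (s : B) (h : cs.IsRightDescent w s) :
    rep cs w (sr s) ≤ 0 := by
  have := nonneg_of_not_descent cs (w * cs.simple s) s
    (cs.isRightDescent_iff_not_isRightDescent_mul.mp h)
  rw [rep_mul, rep_simple_self, map_neg] at this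
  exact neg_nonneg.mp this

lemma sr_ne_zero (s : B) : sr s ≠ 0 := by
  intro h; have := congrFun h s; rw [sr_self] at this; simp at this

lemma rep_sr_ne_zero (w : W) (s : B) : rep cs w (sr s) ≠ 0 := by
  intro h
  apply sr_ne_zero s
  apply rep_inj_apply cs w; rw [h, map_zero]

lemma eq_one_of_nonneg (w : W) (h : ∀ s, 0 ≤ rep cs w (sr s)) : w = 1 := by
  by_contra hw
  obtain ⟨t, ht⟩ := cs.exists_rightDescent_of_ne_one hw
  exact rep_sr_ne_zero cs w t (le_antisymm (nonpos_of_descent cs w t ht) (h t))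

/-- The geometric representation is faithful. -/
theorem rep_injective : Function.Injective (rep cs) := by
  rw [injective_iff_map_eq_one]
  intro w hw
  apply eq_one_of_nonneg cs
  intro s; rw [hw]; exact sr_nonneg s

/-- The bilinear form `2⟨u, v⟩` of the geometric representation. -/
noncomputable def gf (M : CoxeterMatrix B) (u v : B → ℝ) : ℝ := ∑ s, u s * kv M s v

lemma gf_sr (s : B) (v : B → ℝ) : gf M (sr s) v = kv M s v := by
  simp [gf, sr, Pi.single_apply]

lemma gf_comm (u v : B → ℝ) : gf M u v = gf M v u := by
  simp only [gf, kv_apply, Finset.mul_sum]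
  rw [Finset.sum_comm]
  refine Finset.sum_congr rfl fun s _ => Finset.sum_congr rfl fun t _ => ?_
  rw [M.symmetric]; ring

lemma gf_add_left (u u' v : B → ℝ) : gf M (u + u') v = gf M u v + gf M u' v := by
  simp [gf, add_mul, Finset.sum_add_distrib]
lemma gf_smul_left (c : ℝ) (u v : B → ℝ) : gf M (c • u) v = c * gf M u v := by
  simp [gf, Finset.mul_sum, mul_assoc]
lemma gf_sub_left (u u' v : B → ℝ) : gf M (u - u') v = gf M u v - gf M u' v := by
  simp [gf, sub_mul, Finset.sum_sub_distrib]
lemma gf_sub_right (u v v' : B → ℝ) : gf M u (v - v') = gf M u v - gf M u v' := by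
  simp [gf, mul_sub, Finset.sum_sub_distrib]
lemma gf_smul_right (c : ℝ) (u v : B → ℝ) : gf M u (c • v) = c * gf M u v := by
  rw [gf_comm, gf_smul_left, gf_comm]

lemma gf_refl (s : B) (u v : B → ℝ) :
    gf M (rep cs (cs.simple s) u) (rep cs (cs.simple s) v) = gf M u v := by
  simp only [rep_simple_apply, gf_sub_left, gf_sub_right, gf_smul_left, gf_smul_right, gf_sr,
    kv_self]
  rw [gf_comm u (sr s), gf_sr]; ring

lemma gf_rep (w : W) (u v : B → ℝ) : gf M (rep cs w u) (rep cs w v) = gf M u v := by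
  induction w using cs.simple_induction_left with
  | one => simp
  | mul_simple_left w i ih => rw [rep_mul, rep_mul, gf_refl, ih]

/-- The roots. -/
def IsRoot (β : B → ℝ) : Prop := ∃ (w : W) (s : B), β = rep cs w (sr s)

variable {cs}

lemma IsRoot.rep {β : B → ℝ} (h : IsRoot cs β) (w : W) : IsRoot cs (rep cs w β) := by
  obtain ⟨u, s, rfl⟩ := h
  exact ⟨w * u, s, by rw [rep_mul]⟩

lemma IsRoot.pos_or_neg {β : B → ℝ} (h : IsRoot cs β) : 0 ≤ β ∨ β ≤ 0 := by
  obtain ⟨w, s, rfl⟩ := h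
  by_cases h : cs.IsRightDescent w s
  · exact Or.inr (nonpos_of_descent cs w s h)
  · exact Or.inl (nonneg_of_not_descent cs w s h)

lemma IsRoot.ne_zero {β : B → ℝ} (h : IsRoot cs β) : β ≠ 0 := by
  obtain ⟨w, s, rfl⟩ := h
  exact rep_sr_ne_zero cs w s

lemma IsRoot.neg {β : B → ℝ} (h : IsRoot cs β) : IsRoot cs (-β) := by
  obtain ⟨w, s, rfl⟩ := h
  exact ⟨w * cs.simple s, s, by rw [rep_mul, rep_simple_self, map_neg]⟩

lemma IsRoot.norm {β : B → ℝ} (h : IsRoot cs β) : gf M β β = 2 := by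
  obtain ⟨w, s, rfl⟩ := h
  rw [gf_rep, gf_sr, kv_self]

lemma isRoot_sr (s : B) : IsRoot cs (sr s) := ⟨1, s, by simp⟩

lemma eq_sr_of_supp {β : B → ℝ} (h : IsRoot cs β) (h0 : 0 ≤ β) (s : B)
    (hs : ∀ t, t ≠ s → β t = 0) : β = sr s := by
  have e : β = β s • sr s := by
    ext t; by_cases ht : t = s
    · subst ht; simp [sr_self]
    · simp [sr_ne ht, hs t ht]
  have hn := h.norm
  rw [e, gf_smul_left, gf_smul_right, gf_sr, kv_self] at hn
  have h1 : β s * β s = 1 := by linarith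
  have h2 : β s = 1 := by have := h0 s; simp at this; nlinarith
  rw [e, h2, one_smul]

lemma rep_simple_coord (s t : B) (h : t ≠ s) (v : B → ℝ) :
    rep cs (cs.simple s) v t = v t := by
  rw [rep_simple_apply]; simp [sr_ne h]

/-- A simple reflection permutes the positive roots other than its own. -/
lemma simple_nonneg {β : B → ℝ} (h : IsRoot cs β) (h0 : 0 ≤ β) (s : B) (hs : β ≠ sr s) :
    0 ≤ rep cs (cs.simple s) β := by
  rcases (h.rep (cs.simple s)).pos_or_neg with h1 | h1
  · exact h1
  · exfalso; apply hs
    apply eq_sr_of_supp h h0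
    intro t ht
    have a := h1 t
    rw [rep_simple_coord s t ht] at a
    exact le_antisymm a (h0 t)

variable (cs) in
/-- The positive roots made negative by `w`. -/
def Inv (w : W) : Set (B → ℝ) := {β | IsRoot cs β ∧ 0 ≤ β ∧ rep cs w β ≤ 0}

lemma inv_finite (w : W) : (Inv cs w).Finite := by
  induction w using cs.simple_induction_right with
  | one =>
    convert Set.finite_empty
    ext β; simp only [Inv, Set.mem_ofPred_eq, Set.mem_empty_iff_false, iff_false]
    rintro ⟨h, h0, h1⟩
    rw [rep_one] at h1
    exact h.ne_zero (le_antisymm h1 h0)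
  | mul_simple_right w i ih =>
    refine ((ih.image (rep cs (cs.simple i))).insert (sr i)).subset ?_
    rintro β ⟨h, h0, h1⟩
    by_cases hs : β = sr i
    · exact Or.inl hs
    · right
      refine ⟨rep cs (cs.simple i) β, ⟨h.rep _, simple_nonneg h h0 i hs, ?_⟩, ?_⟩
      · rwa [rep_mul] at h1
      · rw [← rep_mul, cs.simple_mul_simple_self, rep_one]

variable (cs) in
/-- An element taking a simple root to itself up to sign commutes with the simple reflection. -/
lemma comm_of_fix (x : W) (s : B) (h : rep cs x (sr s) = sr s ∨ rep cs x (sr s) = - sr s) :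
    x * cs.simple s = cs.simple s * x := by
  obtain ⟨ε, hε, h⟩ : ∃ ε : ℝ, ε * ε = 1 ∧ rep cs x (sr s) = ε • sr s := by
    rcases h with h | h
    · exact ⟨1, by norm_num, by simpa using h⟩
    · exact ⟨-1, by norm_num, by simpa using h⟩
  apply rep_injective cs
  refine LinearMap.ext fun v => ?_
  rw [rep_mul, rep_mul, rep_simple_apply, rep_simple_apply, map_sub, map_smul, h]
  have : kv M s (rep cs x v) = ε * kv M s v := by
    have := gf_rep cs x (sr s) v
    rw [h, gf_smul_left, gf_sr, gf_sr] at this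
    linear_combination ε * this - kv M s (rep cs x v) * hε
  rw [this, smul_smul, mul_comm]

variable (cs) in
/-- Distinct commuting simple reflections have label `2`. -/
lemma kk_zero_of_comm (s t : B) (hst : s ≠ t)
    (h : cs.simple s * cs.simple t = cs.simple t * cs.simple s) : M.M s t = 2 := by
  by_contra h2
  have hn := kk_neg_of (M.off_diagonal s t hst) h2
  have := congrArg (fun x => rep cs x (sr t) s) h
  simp only [rep_mul, rep_simple_self, map_neg] at this
  rw [rep_simple_coord t s hst, rep_simple_apply, kv_sr] at this
  simp [sr_ne hst, sr_self] at this
  linarith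

variable (cs) in
lemma simple_comm {s t : B} (h : M.M s t = 2) :
    cs.simple s * cs.simple t = cs.simple t * cs.simple s := by
  have := cs.simple_mul_simple_pow s t
  change (cs.simple s * cs.simple t) ^ (M.M s t) = 1 at this
  rw [h, pow_two] at this
  have h2 := eq_inv_of_mul_eq_one_left this
  rw [mul_inv_rev, cs.inv_simple, cs.inv_simple] at h2
  exact h2

variable (cs) in
lemma simple_inj : Function.Injective cs.simple := by
  intro s t h
  by_contra hst
  have := congrArg (fun x => rep cs x (sr t) t) h
  simp only [rep_simple_self] at this
  rw [rep_simple_coord s t (Ne.symm hst)] at this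
  simp [sr_self] at this
  linarith

end Geometric

end CoxRep

/-! ### Parabolic subgroups, positive definiteness and invariant functionals -/

namespace CoxRep

open scoped commutatorElement

set_option linter.unusedSectionVars false

section Parabolic

variable {B : Type*} [Fintype B] [DecidableEq B]
variable {M : CoxeterMatrix B} {W : Type*} [Group W] (cs : CoxeterSystem M W)

/-- The visual (standard parabolic) subgroup generated by `J`. -/
def par (J : Set B) : Subgroup W := Subgroup.closure (cs.simple '' J)

lemma simple_mem_par {J : Set B} {s : B} (h : s ∈ J) : cs.simple s ∈ par cs J :=
  Subgroup.subset_closure ⟨s, h, rfl⟩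

lemma par_mono {J J' : Set B} (h : J ⊆ J') : par cs J ≤ par cs J' :=
  Subgroup.closure_mono (Set.image_mono h)

/-- `J` is connected in the Coxeter diagram. -/
def Conn (M : CoxeterMatrix B) (J : Set B) : Prop :=
  ∀ i ∈ J, ∀ j ∈ J,
    Relation.ReflTransGen (fun x y => x ∈ J ∧ y ∈ J ∧ x ≠ y ∧ M.M x y ≠ 2) i j

lemma Conn.ind {J : Set B} (h : Conn M J) (P : B → Prop) {i : B} (hi : i ∈ J) (h0 : P i)
    (hs : ∀ x ∈ J, ∀ y ∈ J, x ≠ y → M.M x y ≠ 2 → P x → P y) : ∀ j ∈ J, P j := by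
  intro j hj
  induction h i hi j hj with
  | refl => exact h0
  | tail _ h2 ih => exact hs _ h2.1 _ h2.2.1 h2.2.2.1 h2.2.2.2 (ih h2.1)

lemma par_ind {J : Set B} (P : W → Prop) (h1 : P 1)
    (hs : ∀ s ∈ J, ∀ w ∈ par cs J, P w → P (cs.simple s * w)) : ∀ w ∈ par cs J, P w := by
  intro w hw
  refine Subgroup.closure_induction_left (p := fun x _ => P x) h1 ?_ ?_ hw
  · rintro x ⟨s, hs', rfl⟩ y hy ih
    exact hs s hs' y hy ih
  · rintro x ⟨s, hs', rfl⟩ y hy ih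
    rw [cs.inv_simple]
    exact hs s hs' y hy ih

/-- Elements of a visual subgroup only change the coordinates indexed by its generators. -/
lemma par_coord {J : Set B} {w : W} (hw : w ∈ par cs J) {t : B} (ht : t ∉ J) (v : B → ℝ) :
    rep cs w v t = v t := by
  refine par_ind cs (fun w => rep cs w v t = v t) (by simp) ?_ w hw
  intro s hs w _ ih
  rw [rep_mul, rep_simple_coord s t (by rintro rfl; exact ht hs), ih]

lemma eq_one_of_nonneg_par {J : Set B} {w : W} (hw : w ∈ par cs J)
    (h : ∀ s ∈ J, 0 ≤ rep cs w (sr s)) : w = 1 := by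
  apply eq_one_of_nonneg cs
  intro s
  by_cases hs : s ∈ J
  · exact h s hs
  · rcases ((isRoot_sr (cs := cs) s).rep w).pos_or_neg with h1 | h1
    · exact h1
    · have := h1 s
      rw [par_coord cs hw hs, sr_self] at this
      simp at this; linarith

/-- A visual subgroup with finitely many roots is finite, since it permutes them faithfully. -/
lemma par_finite_of_roots {J : Set B}
    (h : {β | ∃ u ∈ par cs J, ∃ j ∈ J, β = rep cs u (sr j)}.Finite) : Finite (par cs J) := by
  set R := {β | ∃ u ∈ par cs J, ∃ j ∈ J, β = rep cs u (sr j)} with hR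
  have : Finite R := h
  let f : par cs J → (J → R) := fun u j => ⟨rep cs u (sr j), u, u.2, j, j.2, rfl⟩
  apply Finite.of_injective f
  intro u u' huu
  have h1 : (u:W)⁻¹ * u' = 1 := by
    apply eq_one_of_nonneg_par cs (mul_mem (inv_mem u.2) u'.2)
    intro s hs
    have : rep cs u (sr s) = rep cs u' (sr s) := by
      have := congrFun huu ⟨s, hs⟩
      exact congrArg Subtype.val this
    rw [rep_mul, ← this, rep_inv_apply]; exact sr_nonneg s
  exact Subtype.ext (inv_mul_eq_one.mp h1)

/-- In a finite visual subgroup, an element of maximal length makes every simple root negative. -/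
lemma exists_longest {J : Set B} (h : Finite (par cs J)) :
    ∃ w ∈ par cs J, ∀ s ∈ J, rep cs w (sr s) ≤ 0 := by
  obtain ⟨w, hw⟩ := Finite.exists_max (fun w : par cs J => cs.length (w : W))
  refine ⟨w, w.2, fun s hs => nonpos_of_descent cs _ s ?_⟩
  have := hw ⟨w * cs.simple s, mul_mem w.2 (simple_mem_par cs hs)⟩
  have h2 := cs.length_mul_simple_ne w s
  unfold CoxeterSystem.IsRightDescent
  simp only at this
  omega

/-- A finite visual subgroup has finitely many positive roots: all of them are inverted by its longest
element. -/
lemma roots_finite {J : Set B} (h : Finite (par cs J)) :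
    {β | IsRoot cs β ∧ 0 ≤ β ∧ ∀ t ∉ J, β t = 0}.Finite := by
  obtain ⟨w, hw, hs⟩ := exists_longest cs h
  refine (inv_finite (cs := cs) w).subset ?_
  rintro β ⟨h1, h2, h3⟩
  refine ⟨h1, h2, ?_⟩
  conv_lhs => rw [sum_sr β]
  rw [map_sum]
  apply Finset.sum_nonpos
  intro s _
  rw [map_smul]
  by_cases hsJ : s ∈ J
  · exact smul_nonpos_of_nonneg_of_nonpos (h2 s) (hs s hsJ)
  · rw [h3 s hsJ, zero_smul]

/-- Finiteness criterion: finitely many positive roots are supported on `J`. -/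
lemma par_finite_of_pos {J : Set B}
    (h : {β | IsRoot cs β ∧ 0 ≤ β ∧ ∀ t ∉ J, β t = 0}.Finite) : Finite (par cs J) := by
  apply par_finite_of_roots
  refine (h.union (h.image (fun β => -β))).subset ?_
  rintro β ⟨u, hu, j, hj, rfl⟩
  have hr : IsRoot cs (rep cs u (sr j)) := ⟨u, j, rfl⟩
  have hsupp : ∀ t ∉ J, rep cs u (sr j) t = 0 := by
    intro t ht
    rw [par_coord cs hu ht, sr_ne (by rintro rfl; exact ht hj)]
  rcases hr.pos_or_neg with h1 | h1
  · exact Or.inl ⟨hr, h1, hsupp⟩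
  · exact Or.inr ⟨_, ⟨hr.neg, neg_nonneg.mpr h1, fun t ht => by simp [hsupp t ht]⟩, by simp⟩

/-! ### Linear functionals -/

lemma dual_nonneg (l : (B → ℝ) →ₗ[ℝ] ℝ) (h : ∀ s, 0 ≤ l (sr s)) {β : B → ℝ} (hβ : 0 ≤ β) :
    0 ≤ l β := by
  conv_rhs => rw [sum_sr β]
  rw [map_sum]
  apply Finset.sum_nonneg
  intro s _
  rw [map_smul]; exact mul_nonneg (hβ s) (h s)

lemma dual_ext {l l' : (B → ℝ) →ₗ[ℝ] ℝ} (h : ∀ s, l (sr s) = l' (sr s)) : l = l' := by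
  refine LinearMap.ext fun v => ?_
  rw [sum_sr v, map_sum, map_sum]
  exact Finset.sum_congr rfl fun s _ => by rw [map_smul, map_smul, h]

lemma dual_simple (l : (B → ℝ) →ₗ[ℝ] ℝ) (s : B) (v : B → ℝ) :
    l (rep cs (cs.simple s) v) = l v - kv M s v * l (sr s) := by
  rw [rep_simple_apply, map_sub, map_smul, smul_eq_mul]

/-- The dominant chamber is a strict fundamental domain, and stabilizers of dominant
functionals are visual subgroups. -/
theorem stabilizer (l : (B → ℝ) →ₗ[ℝ] ℝ) (w : W) (h : ∀ s, 0 ≤ l (sr s))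
    (hw : ∀ s, 0 ≤ l (rep cs w (sr s))) :
    w ∈ par cs {s | l (sr s) = 0} ∧ ∀ v, l (rep cs w v) = l v := by
  generalize hn : cs.length w = n
  induction n generalizing w with
  | zero =>
    have := cs.length_eq_zero_iff.mp hn
    subst this; simp [one_mem]
  | succ n ih =>
    obtain ⟨s, hs⟩ := cs.exists_leftDescent_of_ne_one (w := w) (by rintro rfl; simp at hn)
    have h1 : rep cs w⁻¹ (sr s) ≤ 0 :=
      nonpos_of_descent cs _ s (cs.isRightDescent_inv_iff.mpr hs)
    have h2 : l (sr s) = 0 := by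
      apply le_antisymm _ (h s)
      have := dual_nonneg (l ∘ₗ rep cs w) hw (neg_nonneg.mpr h1)
      simp only [LinearMap.comp_apply, map_neg] at this
      rw [rep_apply_inv] at this
      linarith
    have hl : ∀ v, l (rep cs (cs.simple s) v) = l v := by
      intro v; rw [dual_simple, h2]; ring
    have e : w = cs.simple s * (cs.simple s * w) := by rw [cs.simple_mul_simple_cancel_left]
    have hlen := cs.isLeftDescent_iff.mp hs
    have hw' : ∀ v, l (rep cs w v) = l (rep cs (cs.simple s * w) v) := by
      intro v; conv_lhs => rw [e]
      rw [rep_mul, hl]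
    obtain ⟨i1, i2⟩ := ih (cs.simple s * w) (fun t => by rw [← hw']; exact hw t) (by omega)
    refine ⟨?_, fun v => by rw [hw', i2]⟩
    rw [e]; exact mul_mem (simple_mem_par cs h2) i1

/-- A functional that is negative on only finitely many positive roots can be made dominant. -/
theorem exists_dominant (l : (B → ℝ) →ₗ[ℝ] ℝ)
    (hf : {β | IsRoot cs β ∧ 0 ≤ β ∧ l β < 0}.Finite) :
    ∃ w, ∀ s, 0 ≤ l (rep cs w (sr s)) := by
  generalize hn : {β | IsRoot cs β ∧ 0 ≤ β ∧ l β < 0}.ncard = n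
  induction n using Nat.strong_induction_on generalizing l with
  | _ n ih =>
  by_cases h : ∀ s, 0 ≤ l (sr s)
  · exact ⟨1, by simpa using h⟩
  push Not at h
  obtain ⟨s, hs⟩ := h
  set N := {β | IsRoot cs β ∧ 0 ≤ β ∧ l β < 0} with hN
  have hsub : {β | IsRoot cs β ∧ 0 ≤ β ∧ (l ∘ₗ rep cs (cs.simple s)) β < 0} ⊆
      rep cs (cs.simple s) '' (N \ {sr s}) := by
    rintro β ⟨h1, h2, h3⟩
    simp only [LinearMap.comp_apply] at h3
    have hne : β ≠ sr s := by
      rintro rfl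
      rw [rep_simple_self, map_neg] at h3; linarith
    refine ⟨rep cs (cs.simple s) β, ⟨⟨h1.rep _, simple_nonneg h1 h2 s hne, h3⟩, ?_⟩, ?_⟩
    · intro he
      simp only [Set.mem_singleton_iff] at he
      have : β = - sr s := by
        apply rep_inj_apply cs (cs.simple s); rw [he, map_neg, rep_simple_self, neg_neg]
      have h4 := h2 s
      rw [this] at h4; simp [sr_self] at h4; linarith
    · rw [← rep_mul, cs.simple_mul_simple_self, rep_one]
  have hsN : sr s ∈ N := ⟨isRoot_sr s, sr_nonneg s, hs⟩
  have hfin' : (N \ {sr s}).Finite := hf.subset Set.sdiff_subset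
  have hlt : {β | IsRoot cs β ∧ 0 ≤ β ∧ (l ∘ₗ rep cs (cs.simple s)) β < 0}.ncard < n := by
    calc _ ≤ (rep cs (cs.simple s) '' (N \ {sr s})).ncard :=
          Set.ncard_le_ncard hsub (hfin'.image _)
      _ ≤ (N \ {sr s}).ncard := Set.ncard_image_le hfin'
      _ < N.ncard := Set.ncard_sdiff_singleton_lt_of_mem hsN hf
      _ = n := hn
  obtain ⟨w, hw⟩ := ih _ hlt (l ∘ₗ rep cs (cs.simple s)) ((hfin'.image _).subset hsub) rfl
  exact ⟨cs.simple s * w, fun t => by rw [rep_mul]; exact hw t⟩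

/-- Every finite subgroup is contained in a conjugate of a finite visual subgroup. -/
theorem finite_subgroup (H : Subgroup W) [Finite H] :
    ∃ (w : W) (I : Set B), Finite (par cs I) ∧ ∀ h ∈ H, w⁻¹ * h * w ∈ par cs I := by
  have := Fintype.ofFinite H
  let rho : (B → ℝ) →ₗ[ℝ] ℝ := ∑ t, LinearMap.proj t
  have rho_apply : ∀ v, rho v = ∑ t, v t := fun v => by simp [rho]
  have rho_nonneg : ∀ v, 0 ≤ v → 0 ≤ rho v := fun v hv => by
    rw [rho_apply]; exact Finset.sum_nonneg fun t _ => hv t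
  have rho_pos : ∀ v, 0 ≤ v → v ≠ 0 → 0 < rho v := fun v hv h0 => by
    refine lt_of_le_of_ne (rho_nonneg v hv) fun h => h0 ?_
    rw [rho_apply] at h
    ext t
    exact (Finset.sum_eq_zero_iff_of_nonneg (fun t _ => hv t)).mp h.symm t (Finset.mem_univ t)
  let p : (B → ℝ) →ₗ[ℝ] ℝ := ∑ h : H, rho ∘ₗ rep cs (h : W)
  have p_apply : ∀ v, p v = ∑ h : H, rho (rep cs (h : W) v) := fun v => by simp [p]
  have p_inv : ∀ h ∈ H, ∀ v, p (rep cs h v) = p v := by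
    intro h hh v
    rw [p_apply, p_apply]
    refine Fintype.sum_equiv (Equiv.mulRight ⟨h, hh⟩) _ _ fun g => ?_
    rw [← rep_mul]; rfl
  have hUfin : (⋃ h : H, Inv cs (h : W)).Finite := Set.finite_iUnion fun h => inv_finite _
  have key : ∀ β, IsRoot cs β → 0 ≤ β → p β ≤ 0 → β ∈ ⋃ h : H, Inv cs (h : W) := by
    intro β hβ h0 hp
    by_contra hne
    simp only [Set.mem_iUnion, not_exists] at hne
    have hpos : ∀ h : H, 0 < rho (rep cs (h : W) β) := by
      intro h
      have hr := hβ.rep (h : W)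
      refine rho_pos _ (hr.pos_or_neg.resolve_right fun h1 => hne h ⟨hβ, h0, h1⟩) hr.ne_zero
    have : 0 < p β := by
      rw [p_apply]; exact Finset.sum_pos (fun h _ => hpos h) ⟨1, Finset.mem_univ _⟩
    linarith
  obtain ⟨w, hw⟩ := exists_dominant cs p
    (hUfin.subset fun β ⟨h1, h2, h3⟩ => key β h1 h2 h3.le)
  let l := p ∘ₗ rep cs w
  refine ⟨w, {s | l (sr s) = 0}, ?_, ?_⟩
  · apply par_finite_of_pos
    have hU2 := (hUfin.union (hUfin.image (fun β => -β))).image (rep cs w⁻¹)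
    refine hU2.subset ?_
    rintro β ⟨h1, h2, h3⟩
    refine ⟨rep cs w β, ?_, rep_inv_apply cs w β⟩
    have hl : p (rep cs w β) = 0 := by
      change l β = 0
      rw [sum_sr β, map_sum]
      apply Finset.sum_eq_zero
      intro t _
      rw [map_smul]
      by_cases ht : l (sr t) = 0
      · rw [ht, smul_zero]
      · rw [h3 t ht, zero_smul]
    have hr := h1.rep w
    rcases hr.pos_or_neg with h4 | h4
    · exact Or.inl (key _ hr h4 hl.le)
    · exact Or.inr ⟨_, key _ hr.neg (neg_nonneg.mpr h4) (by rw [map_neg, hl, neg_zero]), by simp⟩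
  · intro h hh
    refine (stabilizer cs l _ hw fun s => ?_).1
    change 0 ≤ p (rep cs w (rep cs (w⁻¹ * h * w) (sr s)))
    rw [← rep_mul, show w * (w⁻¹ * h * w) = h * w by group, rep_mul, p_inv h hh]
    exact hw s

/-- A finite subgroup preserves a positive definite symmetric form. -/
lemma exists_form (H : Subgroup W) [Finite H] :
    ∃ P : (B → ℝ) →ₗ[ℝ] (B → ℝ) →ₗ[ℝ] ℝ, (∀ u v, P u v = P v u) ∧ (∀ u, u ≠ 0 → 0 < P u u) ∧
      ∀ h ∈ H, ∀ u v, P (rep cs h u) (rep cs h v) = P u v := by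
  have := Fintype.ofFinite H
  let P : (B → ℝ) →ₗ[ℝ] (B → ℝ) →ₗ[ℝ] ℝ := LinearMap.mk₂ ℝ
    (fun u v => ∑ h : H, ∑ t, rep cs (h : W) u t * rep cs (h : W) v t)
    (by intros; simp [add_mul, Finset.sum_add_distrib])
    (by intros; simp [Finset.mul_sum, mul_assoc])
    (by intros; simp [mul_add, Finset.sum_add_distrib])
    (by intros; simp [Finset.mul_sum, mul_left_comm])
  have hP : ∀ u v, P u v = ∑ h : H, ∑ t, rep cs (h : W) u t * rep cs (h : W) v t :=
    fun u v => rfl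
  refine ⟨P, ?_, ?_, ?_⟩
  · intro u v; simp only [hP, mul_comm]
  · intro u hu
    rw [hP]
    refine Finset.sum_pos' (fun h _ => Finset.sum_nonneg fun t _ => mul_self_nonneg _)
      ⟨1, Finset.mem_univ _, ?_⟩
    simp only [OneMemClass.coe_one, rep_one]
    obtain ⟨t, ht⟩ := Function.ne_iff.mp hu
    exact Finset.sum_pos' (fun t _ => mul_self_nonneg _)
      ⟨t, Finset.mem_univ _, mul_self_pos.mpr ht⟩
  · intro h hh u v
    rw [hP, hP]
    refine Fintype.sum_equiv (Equiv.mulRight ⟨h, hh⟩) _ _ fun g => ?_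
    refine Finset.sum_congr rfl fun t _ => ?_
    rw [← rep_mul, ← rep_mul]; rfl

/-- The standard form of a finite connected visual subgroup is positive definite. -/
theorem pos_def {J : Set B} (hJ : Conn M J) (hf : Finite (par cs J)) (v : B → ℝ)
    (hv : ∀ t ∉ J, v t = 0) (h0 : v ≠ 0) : 0 < gf M v v := by
  obtain ⟨P, hsym, hpos, hinv⟩ := exists_form cs (par cs J)
  have h1 : ∀ s ∈ J, ∀ u, 2 * P (sr s) u = kv M s u * P (sr s) (sr s) := by
    intro s hs u
    have := hinv _ (simple_mem_par cs hs) (sr s) u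
    rw [rep_simple_self, rep_simple_apply] at this
    simp only [map_neg, map_sub, map_smul, LinearMap.neg_apply, smul_eq_mul] at this
    linarith
  obtain ⟨s0, hs0⟩ := Function.ne_iff.mp h0
  have hs0J : s0 ∈ J := by
    by_contra h; exact hs0 (hv s0 h)
  have h2 : ∀ s ∈ J, P (sr s) (sr s) = P (sr s0) (sr s0) := by
    refine hJ.ind _ hs0J rfl ?_
    intro x hx y hy hxy hm ih
    rw [← ih]
    have a := h1 x hx (sr y)
    have b := h1 y hy (sr x)
    rw [kv_sr] at a b
    rw [M.symmetric y x, hsym] at b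
    have hk : kk (M.M x y) ≠ 0 := (kk_neg_of (M.off_diagonal x y hxy) hm).ne
    apply mul_left_cancel₀ hk
    linarith
  have h3 : 2 * P v v = P (sr s0) (sr s0) * gf M v v := by
    have e : P v v = ∑ s, P (v s • sr s) v := by
      conv_lhs => rw [show P v = ∑ s, P (v s • sr s) by rw [← map_sum, ← sum_sr v]]
      rw [LinearMap.sum_apply]
    rw [e, gf, Finset.mul_sum, Finset.mul_sum]
    refine Finset.sum_congr rfl fun s _ => ?_
    by_cases hs : s ∈ J
    · rw [map_smul, LinearMap.smul_apply, smul_eq_mul]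
      have := h1 s hs v
      rw [h2 s hs] at this
      linear_combination v s * this
    · rw [hv s hs]; simp
  have h4 := hpos v h0
  have h5 := hpos _ (sr_ne_zero s0)
  by_contra h
  push Not at h
  nlinarith

/-- The dominant functional vanishing exactly on `C`. -/
noncomputable def lam (C : Set B) : (B → ℝ) →ₗ[ℝ] ℝ := by
  classical exact ∑ t, (if t ∈ C then (0:ℝ) else 1) • LinearMap.proj t

lemma lam_sr (C : Set B) [DecidablePred (· ∈ C)] (s : B) :
    lam C (sr s) = if s ∈ C then 0 else 1 := by
  classical
  simp only [lam, sr, LinearMap.sum_apply, LinearMap.smul_apply, LinearMap.proj_apply,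
    Pi.single_apply, smul_eq_mul]
  simp

lemma lam_nonneg (C : Set B) (s : B) : 0 ≤ lam C (sr s) := by
  classical
  rw [lam_sr]; split_ifs <;> simp

lemma lam_zero (C : Set B) : {s | lam C (sr s) = 0} = C := by
  classical
  ext s; simp [lam_sr]

lemma lam_inv {C : Set B} {w : W} (hw : w ∈ par cs C) (v : B → ℝ) :
    lam C (rep cs w v) = lam C v := by
  refine par_ind cs (fun w => lam C (rep cs w v) = lam C v) (by simp) ?_ w hw
  intro s hs w _ ih
  rw [← lam_zero C] at hs
  rw [rep_mul, dual_simple, hs, ih]; ring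

/-- The stabilizer of `lam C`, which vanishes exactly on the simple roots in `C`, is the visual
subgroup of `C`. -/
lemma mem_par_of_lam {C : Set B} {w : W} (h : ∀ v, lam C (rep cs w v) = lam C v) :
    w ∈ par cs C := by
  have := (stabilizer cs (lam C) w (lam_nonneg C) (fun s => by rw [h]; exact lam_nonneg C s)).1
  rwa [lam_zero] at this

lemma simple_mem_par_iff {C : Set B} {s : B} : cs.simple s ∈ par cs C ↔ s ∈ C := by
  refine ⟨fun h => ?_, simple_mem_par cs⟩
  have := lam_inv cs h (sr s)
  rw [rep_simple_self, map_neg] at this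
  have h2 : lam C (sr s) = 0 := by linarith
  rw [← lam_zero C]; exact h2

/-- Every vertex of a connected set with at least two elements lies on an edge. -/
lemma exists_edge {J : Set B} (hJ : Conn M J) (h2 : J.Nontrivial) (i : B) (hi : i ∈ J) :
    ∃ j ∈ J, i ≠ j ∧ M.M i j ≠ 2 := by
  by_contra hc
  push Not at hc
  obtain ⟨j, hj, hne⟩ := h2.exists_ne i
  have := hJ.ind (fun x => x = i) hi rfl (fun x hx y hy hxy hm h => by
    subst h; exact absurd (hc y hy hxy) hm) j hj
  exact hne this

/-- If a conjugate of a visual subgroup contains the commutator subgroup of a finite nonabelian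
irreducible visual subgroup, then it contains the whole of it. -/
theorem par_le_of_commutator {J : Set B} (hJ : Conn M J) (h2 : J.Nontrivial)
    (hf : Finite (par cs J)) (v : W) (C : Set B)
    (h : ∀ x ∈ ⁅par cs J, par cs J⁆, v⁻¹ * x * v ∈ par cs C) :
    ∀ b ∈ J, lam C (rep cs v⁻¹ (sr b)) = 0 := by
  by_contra hc
  push Not at hc
  obtain ⟨b, hb, hμb⟩ := hc
  set μ : (B → ℝ) →ₗ[ℝ] ℝ := lam C ∘ₗ rep cs v⁻¹ with hμ
  set N := ⁅par cs J, par cs J⁆ with hN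
  have hNle : N ≤ par cs J := Subgroup.commutator_le.mpr fun a ha b hb =>
    mul_mem (mul_mem (mul_mem ha hb) (inv_mem ha)) (inv_mem hb)
  have hconj : ∀ x ∈ N, ∀ g ∈ par cs J, g * x * g⁻¹ ∈ N := by
    intro x hx g hg
    have h1 : ⁅g, x⁆ ∈ N := Subgroup.commutator_mem_commutator hg (hNle hx)
    have : g * x * g⁻¹ = ⁅g, x⁆ * x := by rw [commutatorElement_def]; group
    rw [this]; exact mul_mem h1 hx
  have hμN : ∀ x ∈ N, ∀ u, μ (rep cs x u) = μ u := by
    intro x hx u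
    have := lam_inv cs (h x hx) (rep cs v⁻¹ u)
    rw [← rep_mul, show v⁻¹ * x * v * v⁻¹ = v⁻¹ * x by group, rep_mul] at this
    exact this
  -- translates of `N`-fixed functionals by `⟨J⟩` are `N`-fixed
  have hfix : ∀ l : (B → ℝ) →ₗ[ℝ] ℝ, (∀ x ∈ N, ∀ u, l (rep cs x u) = l u) → ∀ s ∈ J,
      l (sr s) ≠ 0 → ∀ x ∈ N, ∀ u, kv M s (rep cs x u) = kv M s u := by
    intro l hl s hs hls x hx u
    have hx' := hconj x hx _ (simple_mem_par cs hs)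
    have e1 : l (rep cs (cs.simple s) (rep cs x u)) = l (rep cs (cs.simple s) u) := by
      have := hl _ hx' (rep cs (cs.simple s) u)
      rw [← rep_mul, show cs.simple s * x * (cs.simple s)⁻¹ * cs.simple s = cs.simple s * x by
        group, rep_mul] at this
      exact this
    rw [dual_simple, dual_simple, hl x hx] at e1
    apply mul_right_cancel₀ hls; linarith
  have hall : ∀ s ∈ J, ∀ x ∈ N, ∀ u, kv M s (rep cs x u) = kv M s u := by
    refine hJ.ind _ hb (hfix μ hμN b hb hμb) ?_
    intro x hx y hy hxy hm ih
    refine hfix (kv M x) ih y hy ?_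
    rw [kv_sr]; exact (kk_neg_of (M.off_diagonal x y hxy) hm).ne
  have hN1 : ∀ x ∈ N, x = 1 := by
    intro x hx
    apply eq_one_of_nonneg_par cs (hNle hx)
    intro s hs
    have : rep cs x (sr s) - sr s = 0 := by
      by_contra hne
      have hsupp : ∀ t ∉ J, (rep cs x (sr s) - sr s) t = 0 := by
        intro t ht
        rw [Pi.sub_apply, par_coord cs (hNle hx) ht, sub_self]
      have := pos_def cs hJ hf _ hsupp hne
      have h0 : gf M (rep cs x (sr s) - sr s) (rep cs x (sr s) - sr s) = 0 := by
        conv_lhs => rw [gf]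
        apply Finset.sum_eq_zero
        intro t _
        by_cases ht : t ∈ J
        · rw [map_sub, hall t ht x hx, sub_self, mul_zero]
        · rw [hsupp t ht, zero_mul]
      linarith
    rw [sub_eq_zero.mp this]; exact sr_nonneg s
  obtain ⟨j, hj, hbj, hmj⟩ := exists_edge hJ h2 b hb
  have hc := hN1 _ (Subgroup.commutator_mem_commutator (simple_mem_par cs hb)
    (simple_mem_par cs hj))
  rw [commutatorElement_eq_one_iff_mul_comm] at hc
  exact hmj (kk_zero_of_comm cs b j hbj hc)

/-- `J` is spherical and every spherical `J ∪ {s}` has `s` commuting with `J`. -/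
def Saturated (J : Set B) : Prop :=
  Finite (par cs J) ∧ ∀ s ∉ J, Finite (par cs (insert s J)) → ∀ b ∈ J, M.M s b = 2

/-- A saturated set whose roots vanish on a translate of the functional `lam C` lies in `C`. -/
theorem sat_subset {J : Set B} (hJ : Saturated cs J) (C : Set B) (d : W)
    (h : ∀ b ∈ J, lam C (rep cs d⁻¹ (sr b)) = 0) : J ⊆ C := by
  generalize hn : cs.length d = n
  induction n generalizing d with
  | zero =>
    have := cs.length_eq_zero_iff.mp hn
    subst this
    intro b hb
    have := h b hb
    rw [inv_one, rep_one] at this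
    rw [← lam_zero C]; exact this
  | succ n ih =>
    obtain ⟨s, hs⟩ := cs.exists_leftDescent_of_ne_one (w := d) (by rintro rfl; simp at hn)
    have h1 : rep cs d⁻¹ (sr s) ≤ 0 :=
      nonpos_of_descent cs _ s (cs.isRightDescent_inv_iff.mpr hs)
    have hlen := cs.isLeftDescent_iff.mp hs
    set μ : (B → ℝ) →ₗ[ℝ] ℝ := lam C ∘ₗ rep cs d⁻¹ with hμ
    have h2 : μ (sr s) ≤ 0 := by
      have := dual_nonneg (lam C) (lam_nonneg C) (neg_nonneg.mpr h1)
      rw [map_neg] at this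
      change lam C (rep cs d⁻¹ (sr s)) ≤ 0; linarith
    have hμ' : ∀ u, lam C (rep cs (cs.simple s * d)⁻¹ u) = μ u - kv M s u * μ (sr s) := by
      intro u
      rw [mul_inv_rev, cs.inv_simple, rep_mul]
      exact dual_simple cs μ s u
    refine ih (cs.simple s * d) ?_ (by omega)
    intro b hb
    rw [hμ', show μ (sr b) = 0 from h b hb]
    by_cases h3 : μ (sr s) = 0
    · rw [h3]; ring
    have hsJ : s ∉ J := fun hsJ => h3 (h s hsJ)
    have h4 : μ (sr s) < 0 := lt_of_le_of_ne h2 h3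
    have hfin : Finite (par cs (insert s J)) := by
      apply par_finite_of_pos
      refine ((roots_finite cs hJ.1).union (inv_finite (cs := cs) d⁻¹)).subset ?_
      rintro β ⟨r1, r2, r3⟩
      by_cases hβ : β s = 0
      · left
        refine ⟨r1, r2, fun t ht => ?_⟩
        by_cases hts : t = s
        · rw [hts, hβ]
        · exact r3 t (by simp [hts, ht])
      · right
        refine ⟨r1, r2, ?_⟩
        have hβ' : 0 < β s := lt_of_le_of_ne (r2 s) (Ne.symm hβ)
        have e : μ β = β s * μ (sr s) := by
          conv_lhs => rw [sum_sr β, map_sum]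
          rw [Finset.sum_eq_single s]
          · rw [map_smul, smul_eq_mul]
          · intro t _ hts
            rw [map_smul]
            by_cases ht : t ∈ J
            · rw [show μ (sr t) = 0 from h t ht, smul_zero]
            · rw [r3 t (by simp [hts, ht]), zero_smul]
          · simp
        have hneg : μ β < 0 := by rw [e]; exact mul_neg_of_pos_of_neg hβ' h4
        refine (r1.rep d⁻¹).pos_or_neg.resolve_left fun hp => ?_
        have := dual_nonneg (lam C) (lam_nonneg C) hp
        exact absurd this (not_le.mpr hneg)
    rw [kv_sr, hJ.2 s hsJ hfin b hb, kk_two]; ring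

/-- A saturated set whose visual subgroup has a conjugate in the visual subgroup of `C` is contained
in `C`. -/
lemma sat_of_par_le {J : Set B} (hJ : Saturated cs J) (C : Set B) (v : W)
    (h : ∀ x ∈ par cs J, v⁻¹ * x * v ∈ par cs C) : J ⊆ C := by
  refine sat_subset cs hJ C v fun b hb => ?_
  have := lam_inv cs (h _ (simple_mem_par cs hb)) (rep cs v⁻¹ (sr b))
  rw [← rep_mul, show v⁻¹ * cs.simple b * v * v⁻¹ = v⁻¹ * cs.simple b by group, rep_mul,
    rep_simple_self, map_neg, map_neg] at this
  linarith

end Parabolic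

end CoxRep

/-! ### Matching of bases -/

namespace CoxRep

open scoped commutatorElement

set_option linter.unusedSectionVars false

section Matching

variable {W : Type*} [Group W]

/-- Two subgroups that agree up to elements centralizing both of them. -/
structure Link (H H' : Subgroup W) : Prop where
  fwd : ∀ h ∈ H, ∃ h' ∈ H', ∃ z, (∀ x ∈ H, z * x = x * z) ∧ (∀ x ∈ H', z * x = x * z) ∧ h = h' * z
  bwd : ∀ h ∈ H', ∃ h' ∈ H, ∃ z, (∀ x ∈ H, z * x = x * z) ∧ (∀ x ∈ H', z * x = x * z) ∧ h = h' * z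

lemma Link.symm {H H' : Subgroup W} (h : Link H H') : Link H' H where
  fwd := fun x hx => by
    obtain ⟨a, ha, z, h1, h2, h3⟩ := h.bwd x hx; exact ⟨a, ha, z, h2, h1, h3⟩
  bwd := fun x hx => by
    obtain ⟨a, ha, z, h1, h2, h3⟩ := h.fwd x hx; exact ⟨a, ha, z, h2, h1, h3⟩

lemma Link.comm_le {H H' : Subgroup W} (h : Link H H') : ⁅H, H⁆ ≤ ⁅H', H'⁆ := by
  rw [Subgroup.commutator_le]
  intro a ha b hb
  obtain ⟨a', ha', z, h1, h2, rfl⟩ := h.fwd a ha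
  obtain ⟨b', hb', y, h3, h4, rfl⟩ := h.fwd b hb
  have e1 : z * (b' * y) = b' * y * z := h1 _ hb
  have e2 : z * b' = b' * z := h2 _ hb'
  have e3 : y * a' = a' * y := h4 _ ha'
  have e4 : z * y = y * z := by
    have : b' * (z * y) = b' * (y * z) := by rw [← mul_assoc, ← e2, mul_assoc, e1, mul_assoc]
    exact mul_left_cancel this
  have : ⁅a' * z, b' * y⁆ = ⁅a', b'⁆ := by
    rw [commutatorElement_def, commutatorElement_def]
    have e5 : a' * z * (b' * y) = a' * b' * (z * y) := by
      rw [mul_assoc, ← mul_assoc z, e2]; group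
    have e6 : (b' * y) * (a' * z) = b' * a' * (z * y) := by
      rw [mul_assoc, ← mul_assoc y, e3, e4]; group
    calc _ = (a' * z * (b' * y)) * ((b' * y) * (a' * z))⁻¹ := by group
      _ = _ := by rw [e5, e6]; group
  rw [this]
  exact Subgroup.commutator_mem_commutator ha' hb'

/-- Linked subgroups have equal commutator subgroups, as central factors disappear in commutators. -/
lemma Link.comm_eq {H H' : Subgroup W} (h : Link H H') : ⁅H, H⁆ = ⁅H', H'⁆ :=
  le_antisymm h.comm_le h.symm.comm_le

variable {B : Type*} [Fintype B] [DecidableEq B]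
variable {M : CoxeterMatrix B} (cs : CoxeterSystem M W)

/-- An element commuting with a simple reflection preserves its root up to sign. -/
lemma map_rep_neg_of_comm (x : W) (b : B) (h : x * cs.simple b = cs.simple b * x) :
    ∃ ε : ℝ, ε * ε = 1 ∧ rep cs x (sr b) = ε • sr b := by
  have h1 : rep cs (cs.simple b) (rep cs x (sr b)) = - rep cs x (sr b) := by
    rw [← rep_mul, ← h, rep_mul, rep_simple_self, map_neg]
  rw [rep_simple_apply] at h1
  have h2 : rep cs x (sr b) = (kv M b (rep cs x (sr b)) / 2) • sr b := by
    have : (2:ℝ) • rep cs x (sr b) = kv M b (rep cs x (sr b)) • sr b := by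
      ext t
      have := congrFun h1 t
      simp only [Pi.sub_apply, Pi.smul_apply, Pi.neg_apply, smul_eq_mul] at this ⊢
      linarith
    rw [div_eq_inv_mul, mul_smul, ← this, smul_smul]; norm_num
  refine ⟨_, ?_, h2⟩
  have hn := ((isRoot_sr (cs := cs) b).rep x).norm
  rw [h2, gf_smul_left, gf_smul_right, gf_sr, kv_self] at hn
  linarith

/-- If a simple reflection factors through two commuting subgroups of a finite visual subgroup, then
one of the two centralizes it. -/
lemma split_one (A : Set B) (hf : Finite (par cs A)) (H1 H2 : Subgroup W)
    (h1 : H1 ≤ par cs A) (h2 : H2 ≤ par cs A) (hc : ∀ x ∈ H1, ∀ y ∈ H2, x * y = y * x)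
    (b : B) (hb : b ∈ A) (h k : W) (hh : h ∈ H1) (hk : k ∈ H2) (hbk : cs.simple b = h * k) :
    (∀ x ∈ H1, x * cs.simple b = cs.simple b * x) ∨
      (∀ x ∈ H2, x * cs.simple b = cs.simple b * x) := by
  obtain ⟨P, hsym, hpos, hinv⟩ := exists_form cs (par cs A)
  have hhb : h * cs.simple b = cs.simple b * h := by
    rw [hbk, mul_assoc, ← hc h hh k hk]
  have hkb : k * cs.simple b = cs.simple b * k := by
    rw [hbk, ← mul_assoc, ← hc h hh k hk]
  obtain ⟨ε, hε, hεh⟩ := map_rep_neg_of_comm cs h b hhb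
  obtain ⟨δ, hδ, hδk⟩ := map_rep_neg_of_comm cs k b hkb
  have hεδ : ε * δ = -1 := by
    have := congrArg (fun x => rep cs x (sr b) b) hbk
    simp only [rep_mul, hδk, map_smul, hεh, rep_simple_self, Pi.neg_apply, Pi.smul_apply,
      sr_self, smul_eq_mul] at this
    linarith
  have hδ' : δ = -ε := by linear_combination ε * hεδ - δ * hε
  have bapp : ∀ u, rep cs (cs.simple b) u = rep cs h (rep cs k u) := fun u => by
    rw [hbk, rep_mul]
  have bapp' : ∀ u, rep cs (cs.simple b) u = rep cs k (rep cs h u) := fun u => by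
    rw [hbk, hc h hh k hk, rep_mul]
  have εcancel : ∀ u v : B → ℝ, ε • u = v → u = ε • v := by
    intro u v h; rw [← h, smul_smul, hε, one_smul]
  -- decompositions
  have dec : ∀ x : W, ∃ (c : ℝ) (u : B → ℝ), rep cs x (sr b) = c • sr b + u ∧
      rep cs (cs.simple b) u = u := by
    intro x
    refine ⟨kv M b (rep cs x (sr b)) / 2, rep cs x (sr b) - (kv M b (rep cs x (sr b)) / 2) • sr b,
      by abel, ?_⟩
    rw [rep_simple_apply]
    simp only [map_sub, map_smul, kv_self, smul_eq_mul]
    have : kv M b (rep cs x (sr b)) - kv M b (rep cs x (sr b)) / 2 * 2 = 0 := by ring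
    rw [this]; simp
  have orth : ∀ u, rep cs (cs.simple b) u = u → P (sr b) u = 0 := by
    intro u hu
    have := hinv _ (simple_mem_par cs hb) (sr b) u
    rw [hu, rep_simple_self, map_neg, LinearMap.neg_apply] at this
    linarith
  have norm : ∀ x ∈ par cs A, ∀ (c : ℝ) (u : B → ℝ), rep cs x (sr b) = c • sr b + u →
      rep cs (cs.simple b) u = u → P (sr b) (sr b) = c * c * P (sr b) (sr b) + P u u := by
    intro x hx c u e hu
    have := hinv x hx (sr b) (sr b)
    rw [e] at this
    simp only [map_add, map_smul, LinearMap.add_apply, LinearMap.smul_apply, smul_eq_mul,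
      orth u hu, hsym u (sr b)] at this
    linarith
  have hpb := hpos _ (sr_ne_zero b)
  have fin : ∀ x ∈ par cs A, ∀ (c : ℝ), rep cs x (sr b) = c • sr b →
      x * cs.simple b = cs.simple b * x := by
    intro x hx c e
    have := norm x hx c 0 (by rw [e, add_zero]) (map_zero _)
    simp only [map_zero, add_zero] at this
    have hc1 : c * c = 1 := by
      apply mul_right_cancel₀ hpb.ne'; linarith
    apply comm_of_fix
    rcases mul_self_eq_one_iff.mp hc1 with h | h
    · left; rw [e, h, one_smul]
    · right; rw [e, h, neg_smul, one_smul]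
  by_cases hall : ∀ x ∈ H1, ∃ c : ℝ, rep cs x (sr b) = c • sr b
  · left
    intro x hx
    obtain ⟨c, hcx⟩ := hall x hx
    exact fin x (h1 hx) c hcx
  right
  push Not at hall
  obtain ⟨x, hx, hxne⟩ := hall
  obtain ⟨c, u, e1, hu⟩ := dec x
  have hu0 : u ≠ 0 := by rintro rfl; exact hxne c (by rw [e1, add_zero])
  intro y hy
  obtain ⟨c', v, e2, hv⟩ := dec y
  have hku : rep cs k u = -ε • u := by
    have a1 : rep cs k (rep cs x (sr b)) = (-ε) • rep cs x (sr b) := by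
      rw [← rep_mul, ← hc x hx k hk, rep_mul, hδk, hδ', map_smul]
    rw [e1, map_add, map_smul, hδk, hδ', smul_add, smul_smul, smul_smul, mul_comm c] at a1
    exact add_left_cancel a1
  have hhv : rep cs h v = ε • v := by
    have a1 : rep cs h (rep cs y (sr b)) = ε • rep cs y (sr b) := by
      rw [← rep_mul, hc h hh y hy, rep_mul, hεh, map_smul]
    rw [e2, map_add, map_smul, hεh, smul_add, smul_smul, smul_smul, mul_comm c'] at a1
    exact add_left_cancel a1
  have hhu : rep cs h u = -ε • u := by
    rw [bapp, hku, map_smul] at hu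
    have : ε • rep cs h u = -u := by
      rw [← neg_eq_iff_eq_neg, ← neg_smul]; exact hu
    rw [εcancel _ _ this, smul_neg, neg_smul]
  have hkv : rep cs k v = ε • v := by
    rw [bapp', hhv, map_smul] at hv
    exact εcancel _ _ hv
  have hZ : c' • u - rep cs y u = c • v - rep cs x v := by
    have a1 : rep cs x (rep cs y (sr b)) = rep cs y (rep cs x (sr b)) := by
      rw [← rep_mul, ← rep_mul, hc x hx y hy]
    rw [e1, e2, map_add, map_add, map_smul, map_smul, e1, e2, smul_add, smul_add, smul_smul,
      smul_smul, mul_comm c c'] at a1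
    ext t
    have := congrFun a1 t
    simp only [Pi.add_apply, Pi.sub_apply, Pi.smul_apply, smul_eq_mul] at this ⊢
    linarith
  have hhZ : rep cs h (c' • u - rep cs y u) = -ε • (c' • u - rep cs y u) := by
    rw [map_sub, map_smul, hhu, ← rep_mul, hc h hh y hy, rep_mul, hhu, map_smul]
    module
  have hkZ : rep cs k (c • v - rep cs x v) = ε • (c • v - rep cs x v) := by
    rw [map_sub, map_smul, hkv, ← rep_mul, ← hc x hx k hk, rep_mul, hkv, map_smul]
    module
  have hZ0 : c' • u - rep cs y u = 0 := by
    set Z := c' • u - rep cs y u with hZdef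
    rw [← hZ] at hkZ
    have b1 : rep cs (cs.simple b) Z = -Z := by
      rw [bapp, hkZ, map_smul, hhZ, smul_smul]
      rw [show ε * -ε = -1 by linear_combination -hε, neg_smul, one_smul]
    rw [rep_simple_apply] at b1
    have b2 : (2:ℝ) • Z = kv M b Z • sr b := by
      ext t
      have := congrFun b1 t
      simp only [Pi.sub_apply, Pi.smul_apply, Pi.neg_apply, smul_eq_mul] at this ⊢
      linarith
    have b3 : rep cs h ((2:ℝ) • Z) = ε • ((2:ℝ) • Z) := by
      rw [b2, map_smul, hεh, smul_comm]
    rw [map_smul, hhZ] at b3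
    have b4 : (4 * ε) • Z = 0 := by
      ext t
      have := congrFun b3 t
      simp only [Pi.smul_apply, smul_eq_mul, Pi.zero_apply] at this ⊢
      linarith
    rcases smul_eq_zero.mp b4 with h | h
    · exfalso
      have : ε = 0 := by linarith
      rw [this] at hε; norm_num at hε
    · exact h
  have hyu : rep cs y u = c' • u := (sub_eq_zero.mp hZ0).symm
  have hc1 : c' * c' = 1 := by
    have := hinv y (h2 hy) u u
    rw [hyu] at this
    simp only [map_smul, LinearMap.smul_apply, smul_eq_mul] at this
    apply mul_right_cancel₀ (hpos u hu0).ne'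
    linarith
  have hv0 : v = 0 := by
    by_contra hv0
    have := norm y (h2 hy) c' v e2 hv
    rw [hc1] at this
    have := hpos v hv0
    linarith
  exact fin y (h2 hy) c' (by rw [e2, hv0, add_zero])

/-- A connected set of simple reflections which factor through two commuting subgroups of a finite
visual subgroup is centralized by one of them. -/
lemma split_conn (A J : Set B) (hJA : J ⊆ A) (hJ : Conn M J) (hf : Finite (par cs A))
    (H1 H2 : Subgroup W)
    (h1 : H1 ≤ par cs A) (h2 : H2 ≤ par cs A) (hc : ∀ x ∈ H1, ∀ y ∈ H2, x * y = y * x)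
    (hprod : ∀ b ∈ J, ∃ h ∈ H1, ∃ k ∈ H2, cs.simple b = h * k) :
    (∀ b ∈ J, ∀ x ∈ H1, x * cs.simple b = cs.simple b * x) ∨
      (∀ b ∈ J, ∀ x ∈ H2, x * cs.simple b = cs.simple b * x) := by
  have hone : ∀ b ∈ J, (∀ x ∈ H1, x * cs.simple b = cs.simple b * x) ∨
      (∀ x ∈ H2, x * cs.simple b = cs.simple b * x) := by
    intro b hb
    obtain ⟨h, hh, k, hk, e⟩ := hprod b hb
    exact split_one cs A hf H1 H2 h1 h2 hc b (hJA hb) h k hh hk e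
  by_cases hex : ∃ b ∈ J, ∀ x ∈ H1, x * cs.simple b = cs.simple b * x
  · left
    obtain ⟨b, hb, hbx⟩ := hex
    refine hJ.ind _ hb hbx ?_
    intro x hx y hy hxy hm hx1
    by_contra hy1
    have hy2 := (hone y hy).resolve_left hy1
    apply hm
    apply kk_zero_of_comm cs x y hxy
    obtain ⟨h, hh, k, hk, e⟩ := hprod x hx
    obtain ⟨h', hh', k', hk', e'⟩ := hprod y hy
    have c1 : k' * cs.simple x = cs.simple x * k' := by
      have a1 : k' * h = h * k' := (hc h hh k' hk').symm
      have a2 : k' * k = k * k' := by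
        have := hy2 k hk
        rw [e', ← mul_assoc, ← hc h' hh' k hk, mul_assoc, mul_assoc] at this
        exact (mul_left_cancel this).symm
      rw [e, ← mul_assoc, a1, mul_assoc, a2, mul_assoc]
    have c2 := hx1 h' hh'
    rw [e', ← mul_assoc, ← c2, mul_assoc, ← c1, mul_assoc]
  · right
    push Not at hex
    intro b hb
    refine (hone b hb).resolve_left fun h => ?_
    obtain ⟨x, hx, hne⟩ := hex b hb
    exact hne (h x hx)

/-- The connected component of `b` in `A`. -/
def comp (M : CoxeterMatrix B) (A : Set B) (b : B) : Set B :=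
  {x | x ∈ A ∧ Relation.ReflTransGen (fun x y => x ∈ A ∧ y ∈ A ∧ x ≠ y ∧ M.M x y ≠ 2) b x}

lemma comp_subset (A : Set B) (b : B) : comp M A b ⊆ A := fun _ h => h.1

lemma mem_comp {A : Set B} {b : B} (h : b ∈ A) : b ∈ comp M A b := ⟨h, .refl⟩

lemma conn_rev {A : Set B} {a b : B}
    (h : Relation.ReflTransGen (fun x y => x ∈ A ∧ y ∈ A ∧ x ≠ y ∧ M.M x y ≠ 2) a b) :
    Relation.ReflTransGen (fun x y => x ∈ A ∧ y ∈ A ∧ x ≠ y ∧ M.M x y ≠ 2) b a := by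
  induction h with
  | refl => exact .refl
  | tail _ h2 ih =>
    exact .head ⟨h2.2.1, h2.1, h2.2.2.1.symm, by rw [M.symmetric]; exact h2.2.2.2⟩ ih

lemma comp_conn {A : Set B} {b : B} : Conn M (comp M A b) := by
  have key : ∀ x, x ∈ comp M A b → Relation.ReflTransGen
      (fun x y => x ∈ comp M A b ∧ y ∈ comp M A b ∧ x ≠ y ∧ M.M x y ≠ 2) b x := by
    rintro x ⟨hx, h⟩
    induction h with
    | refl => exact .refl
    | tail h1 h2 ih =>
      exact (ih h2.1).tail ⟨⟨h2.1, h1⟩, ⟨h2.2.1, h1.tail h2⟩, h2.2.2⟩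
  intro i hi j hj
  exact (conn_rev (key i hi)).trans (key j hj)

lemma comp_comm {A : Set B} {b x y : B} (hx : x ∈ comp M A b) (hy : y ∈ A \ comp M A b) :
    M.M x y = 2 := by
  by_contra h
  apply hy.2
  refine ⟨hy.1, hx.2.tail ⟨hx.1, hy.1, ?_, h⟩⟩
  rintro rfl; exact hy.2 hx

lemma par_comm {J J' : Set B} (h : ∀ x ∈ J, ∀ y ∈ J', M.M x y = 2) :
    ∀ x ∈ par cs J, ∀ y ∈ par cs J', x * y = y * x := by
  have h1 : ∀ x ∈ par cs J, ∀ y ∈ J', x * cs.simple y = cs.simple y * x := by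
    intro x hx y hy
    refine par_ind cs (fun x => x * cs.simple y = cs.simple y * x) (by simp) ?_ x hx
    intro s hs w _ ih
    rw [mul_assoc, ih, ← mul_assoc, simple_comm cs (h s hs y hy), mul_assoc]
  intro x hx y hy
  refine par_ind cs (fun y => x * y = y * x) (by simp) ?_ y hy
  intro s hs w _ ih
  rw [← mul_assoc, h1 x hx s hs, mul_assoc, ih, mul_assoc]

lemma par_comm_of_simple {J : Set B} {y : W} (h : ∀ b ∈ J, y * cs.simple b = cs.simple b * y) :
    ∀ x ∈ par cs J, y * x = x * y := by
  refine par_ind cs (fun x => y * x = x * y) (by simp) ?_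
  intro s hs w _ ih
  rw [← mul_assoc, h s hs, mul_assoc, ih, mul_assoc]

lemma par_prod {A J : Set B} (h : ∀ x ∈ J, ∀ y ∈ A \ J, M.M x y = 2) :
    ∀ x ∈ par cs A, ∃ h ∈ par cs J, ∃ k ∈ par cs (A \ J), x = h * k := by
  refine par_ind cs _ ⟨1, one_mem _, 1, one_mem _, by simp⟩ ?_
  rintro s hs w _ ⟨a, ha, k, hk, rfl⟩
  by_cases hsJ : s ∈ J
  · exact ⟨_, mul_mem (simple_mem_par cs hsJ) ha, k, hk, by rw [mul_assoc]⟩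
  · have hs' := simple_mem_par cs (show s ∈ A \ J from ⟨hs, hsJ⟩)
    refine ⟨a, ha, _, mul_mem hs' hk, ?_⟩
    rw [← mul_assoc, ← mul_assoc, ← par_comm cs h a ha _ hs']

/-- `J` is a base of the system: it is connected, has at least two elements, generates a finite
subgroup, and is maximal among the connected sets generating a finite subgroup. -/
structure IsB (J : Set B) : Prop where
  conn : Conn M J
  nontriv : J.Nontrivial
  fin : Finite (par cs J)
  max : ∀ J', J ⊆ J' → Conn M J' → Finite (par cs J') → J' = J

lemma finite_mono {J J' : Set B} (h : J ⊆ J') (hf : Finite (par cs J')) : Finite (par cs J) :=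
  Finite.of_injective _ (Subgroup.inclusion_injective (par_mono cs h))

lemma conn_insert {J : Set B} {s b : B} (hJ : Conn M J) (hb : b ∈ J) (hs : s ∉ J)
    (hm : M.M s b ≠ 2) : Conn M (insert s J) := by
  have hne : s ≠ b := by rintro rfl; exact hs hb
  have lift : ∀ i ∈ J, ∀ j ∈ J, Relation.ReflTransGen
      (fun x y => x ∈ insert s J ∧ y ∈ insert s J ∧ x ≠ y ∧ M.M x y ≠ 2) i j := by
    intro i hi j hj
    have h := hJ i hi j hj
    clear hj
    induction h with
    | refl => exact .refl
    | tail _ h ih => exact ih.tail ⟨Or.inr h.1, Or.inr h.2.1, h.2.2⟩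
  have h1 : Relation.ReflTransGen
      (fun x y => x ∈ insert s J ∧ y ∈ insert s J ∧ x ≠ y ∧ M.M x y ≠ 2) s b :=
    .single ⟨Or.inl rfl, Or.inr hb, hne, hm⟩
  have h2 : Relation.ReflTransGen
      (fun x y => x ∈ insert s J ∧ y ∈ insert s J ∧ x ≠ y ∧ M.M x y ≠ 2) b s :=
    .single ⟨Or.inr hb, Or.inl rfl, hne.symm, by rw [M.symmetric]; exact hm⟩
  rintro i (rfl | hi) j (rfl | hj)
  · exact .refl
  · exact h1.trans (lift b hb j hj)
  · exact (lift i hi b hb).trans h2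
  · exact lift i hi j hj

lemma IsB.saturated {J : Set B} (h : IsB cs J) : Saturated cs J := by
  refine ⟨h.fin, fun s hs hf b hb => ?_⟩
  by_contra hm
  have := h.max _ (Set.subset_insert s J) (conn_insert h.conn hb hs hm) hf
  exact hs (this ▸ Set.mem_insert s J)

lemma exists_max (P : Set B → Prop) {J : Set B} (hJ : P J) :
    ∃ J', J ⊆ J' ∧ P J' ∧ ∀ J'', J' ⊆ J'' → P J'' → J'' = J' := by
  obtain ⟨J', h1, h2⟩ := (Set.toFinite {J | P J}).exists_le_maximal hJ
  refine ⟨J', h1, h2.prop, fun J'' h3 h4 => ?_⟩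
  exact (h2.eq_of_le h4 h3).symm

lemma exists_base {J : Set B} (hJ : Conn M J) (h2 : J.Nontrivial) (hf : Finite (par cs J)) :
    ∃ J', J ⊆ J' ∧ IsB cs J' := by
  obtain ⟨J', h1, h3, h4⟩ := exists_max (fun J => Conn M J ∧ Finite (par cs J)) ⟨hJ, hf⟩
  exact ⟨J', h1, h3.1, h2.mono h1, h3.2, fun J'' a b c => h4 J'' a ⟨b, c⟩⟩

/-- A base whose commutator subgroup has a conjugate in the visual subgroup of `C` is contained in
`C`. -/
lemma IsB.subset_of_comm {cs : CoxeterSystem M W} {J : Set B} (h : IsB cs J) (v : W) (C : Set B)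
    (hc : ∀ x ∈ ⁅par cs J, par cs J⁆, v⁻¹ * x * v ∈ par cs C) : J ⊆ C :=
  sat_subset cs h.saturated C v (par_le_of_commutator cs h.conn h.nontriv h.fin v C hc)

lemma par_map (e : W ≃* W) (J : Set B) : par (cs.map e) J = (par cs J).map e.toMonoidHom := by
  rw [par, par, MonoidHom.map_closure, ← Set.image_comp]; rfl

lemma par_conj (w : W) (J : Set B) (x : W) :
    x ∈ par (cs.map (MulAut.conj w)) J ↔ w⁻¹ * x * w ∈ par cs J := by
  rw [par_map]
  constructor
  · rintro ⟨y, hy, rfl⟩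
    simpa [MulAut.conj_apply, mul_assoc] using hy
  · intro h
    exact ⟨_, h, by simp [MulAut.conj_apply, mul_assoc]⟩

lemma map_finite (e : W ≃* W) {J : Set B} : Finite (par (cs.map e) J) ↔ Finite (par cs J) := by
  rw [par_map]
  exact ((par cs J).equivMapOfInjective _ e.injective).toEquiv.finite_iff.symm

variable {B' : Type*} [Fintype B'] [DecidableEq B'] {M' : CoxeterMatrix B'}
  (cs' : CoxeterSystem M' W)


/-- A maximal finite visual subgroup of one system is a conjugate of a visual subgroup of any other
system. -/
lemma max_spherical_match (A : Set B) (hf : Finite (par cs A))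
    (hmax : ∀ A₁, A ⊆ A₁ → Finite (par cs A₁) → A₁ = A) :
    ∃ (w : W) (A' : Set B'), par (cs'.map (MulAut.conj w)) A' = par cs A := by
  obtain ⟨w, A₁, hf1, h1⟩ := finite_subgroup cs' (par cs A)
  obtain ⟨A', hA1, hfA', -⟩ := exists_max (fun A => Finite (par cs' A)) hf1
  obtain ⟨v, C, hfC, h2⟩ := finite_subgroup cs (par cs' A')
  have hsat : Saturated cs A := by
    refine ⟨hf, fun s hs hfs => absurd (hmax _ (Set.subset_insert s A) hfs) fun h => ?_⟩
    exact hs (h ▸ Set.mem_insert s A)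
  have hAC : A ⊆ C := by
    refine sat_of_par_le cs hsat C (w * v) fun x hx => ?_
    have := h2 _ (par_mono cs' hA1 (h1 x hx))
    rwa [show (w * v)⁻¹ * x * (w * v) = v⁻¹ * (w⁻¹ * x * w) * v by group]
  have hCA : C = A := hmax C hAC hfC
  subst hCA
  refine ⟨w, A', ?_⟩
  have hfw := (map_finite cs' (MulAut.conj w) (J := A')).mpr hfA'
  have hle : par cs C ≤ par (cs'.map (MulAut.conj w)) A' := by
    intro x hx
    rw [par_conj]
    exact par_mono cs' hA1 (h1 x hx)
  symm
  refine Subgroup.eq_of_le_of_card_ge hle ?_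
  refine Nat.card_le_card_of_injective
    (fun x => (⟨v⁻¹ * (w⁻¹ * x.1 * w) * v, h2 _ ((par_conj cs' w A' x.1).mp x.2)⟩ : par cs C)) ?_
  intro x y h
  have := congrArg Subtype.val h
  simpa using this

lemma exists_noncomm {J : Set B} (hJ : Conn M J) (h2 : J.Nontrivial) :
    ∃ i ∈ J, ∃ j ∈ J, cs.simple i * cs.simple j ≠ cs.simple j * cs.simple i := by
  obtain ⟨i, hi⟩ := h2.nonempty
  obtain ⟨j, hj, hne, hm⟩ := exists_edge hJ h2 i hi
  exact ⟨i, hi, j, hj, fun h => hm (kk_zero_of_comm cs i j hne h)⟩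

/-- An irreducible factor, of rank at least two, of a finite group which is visual for two systems is
linked to a connected visual subgroup of the second system. -/
lemma prematch_aux (A : Set B) (A' : Set B') (hA : par cs' A' = par cs A)
    (hf : Finite (par cs A)) (J : Set B) (hJA : J ⊆ A) (hJ : Conn M J) (h2 : J.Nontrivial)
    (hcomp : ∀ x ∈ J, ∀ y ∈ A \ J, M.M x y = 2) :
    ∃ J' ⊆ A', Conn M' J' ∧ J'.Nontrivial ∧ Link (par cs J) (par cs' J') := by
  obtain ⟨i, hi, j, hj, hij⟩ := exists_noncomm cs hJ h2
  obtain ⟨b', hb', b, hb, hbb⟩ : ∃ b' ∈ A', ∃ b ∈ J,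
      cs.simple b * cs'.simple b' ≠ cs'.simple b' * cs.simple b := by
    by_contra hc
    push Not at hc
    have hmem : cs.simple j ∈ par cs' A' := by rw [hA]; exact simple_mem_par cs (hJA hj)
    exact hij (par_comm_of_simple cs' (fun b' hb' => hc b' hb' i hi) _ hmem)
  set J' := comp M' A' b' with hJ'
  have hJA' : J' ⊆ A' := comp_subset A' b'
  have hcomp' : ∀ x ∈ J', ∀ y ∈ A' \ J', M'.M x y = 2 := fun x hx y hy => comp_comm hx hy
  have hbJ' : b' ∈ J' := mem_comp hb'
  have hf' : Finite (par cs' A') := hA ▸ hf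
  have z1 : ∀ b ∈ J, ∀ x ∈ par cs' (A' \ J'), x * cs.simple b = cs.simple b * x := by
    refine (split_conn cs A J hJA hJ hf (par cs' J') (par cs' (A' \ J'))
      (hA ▸ par_mono cs' hJA') (hA ▸ par_mono cs' Set.sdiff_subset) (par_comm cs' hcomp')
      fun b hb => par_prod cs' hcomp' _ (hA ▸ simple_mem_par cs (hJA hb))).resolve_left ?_
    intro h
    exact hbb (h b hb _ (simple_mem_par cs' hbJ')).symm
  have z2 : ∀ b ∈ J', ∀ x ∈ par cs (A \ J), x * cs'.simple b = cs'.simple b * x := by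
    refine (split_conn cs' A' J' hJA' comp_conn hf' (par cs J) (par cs (A \ J))
      (hA ▸ par_mono cs hJA) (hA ▸ par_mono cs Set.sdiff_subset) (par_comm cs hcomp)
      fun b hb => par_prod cs hcomp _ (hA ▸ simple_mem_par cs' (hJA' hb))).resolve_left ?_
    intro h
    exact hbb (h b' hbJ' _ (simple_mem_par cs hb))
  have hlink : Link (par cs J) (par cs' J') := by
    constructor
    · intro h hh
      obtain ⟨h', hh', k, hk, e⟩ := par_prod cs' hcomp' h (hA ▸ par_mono cs hJA hh)
      exact ⟨h', hh', k, par_comm_of_simple cs fun b hb => z1 b hb k hk,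
        fun x hx => (par_comm cs' hcomp' x hx k hk).symm, e⟩
    · intro h hh
      obtain ⟨h', hh', k, hk, e⟩ := par_prod cs hcomp h (hA ▸ par_mono cs' hJA' hh)
      exact ⟨h', hh', k, fun x hx => (par_comm cs hcomp x hx k hk).symm,
        par_comm_of_simple cs' fun b hb => z2 b hb k hk, e⟩
  refine ⟨J', hJA', comp_conn, ?_, hlink⟩
  by_contra hsub
  rw [Set.not_nontrivial_iff] at hsub
  have hab : ∀ x ∈ par cs' J', ∀ y ∈ par cs' J', x * y = y * x := by
    intro x hx
    refine par_comm_of_simple cs' fun c hc => ?_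
    have := par_comm_of_simple cs' (J := J') (y := cs'.simple c) (fun d hd => by
      rw [hsub hc hd]) x hx
    exact this.symm
  apply hij
  obtain ⟨p, hp, z, hz1, hz2, e⟩ := hlink.fwd _ (simple_mem_par cs hi)
  obtain ⟨q, hq, y, hy1, hy2, e'⟩ := hlink.fwd _ (simple_mem_par cs hj)
  have a1 := hz1 _ (simple_mem_par cs hj)
  have a2 : p * cs.simple j = cs.simple j * p := by
    rw [e', ← mul_assoc, hab p hp q hq, mul_assoc, mul_assoc, hy2 p hp]
  rw [e, mul_assoc, a1, ← mul_assoc, a2, mul_assoc]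

/-- A base is linked to a connected finite visual subgroup of a conjugate of any other system; the
maximality of that subgroup is not claimed here. -/
lemma prematch {J : Set B} (hJ : IsB cs J) :
    ∃ (w : W) (J' : Set B'), Conn M' J' ∧ J'.Nontrivial ∧
      Finite (par (cs'.map (MulAut.conj w)) J') ∧
      Link (par cs J) (par (cs'.map (MulAut.conj w)) J') := by
  obtain ⟨A, hJA, hf, hmax⟩ := exists_max (fun A => Finite (par cs A)) hJ.fin
  obtain ⟨w, A', hA⟩ := max_spherical_match cs cs' A hf hmax
  obtain ⟨J', h1, h2, h3, h4⟩ := prematch_aux cs (cs'.map (MulAut.conj w)) A A' hA hf J hJA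
    hJ.conn hJ.nontriv (fun x hx y hy => by
      by_contra h
      have := hJ.max _ (Set.subset_insert y J)
        (conn_insert hJ.conn hx hy.2 (by rwa [M.symmetric]))
        (finite_mono cs (Set.insert_subset hy.1 hJA) hf)
      exact hy.2 (this ▸ Set.mem_insert y J))
  exact ⟨w, J', h2, h3, finite_mono _ h1 (hA ▸ hf), h4⟩

lemma IsB.map {cs : CoxeterSystem M W} {J : Set B} (e : W ≃* W) (h : IsB cs J) :
    IsB (cs.map e) J :=
  ⟨h.conn, h.nontriv, (map_finite cs e).mpr h.fin,
    fun J' h1 h2 h3 => h.max J' h1 h2 ((map_finite cs e).mp h3)⟩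

lemma comm_le_self (H : Subgroup W) : ⁅H, H⁆ ≤ H := by
  rw [Subgroup.commutator_le]
  intro a ha b hb
  rw [commutatorElement_def]
  exact mul_mem (mul_mem (mul_mem ha hb) (inv_mem ha)) (inv_mem hb)

/-- Conjugation of commutators in elementwise form. -/
lemma comm_conj (w : W) (J : Set B) (x : W)
    (hx : x ∈ ⁅par (cs.map (MulAut.conj w)) J, par (cs.map (MulAut.conj w)) J⁆) :
    w⁻¹ * x * w ∈ ⁅par cs J, par cs J⁆ := by
  rw [par_map, ← Subgroup.map_commutator] at hx
  obtain ⟨y, hy, rfl⟩ := hx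
  simpa [MulAut.conj_apply, mul_assoc] using hy

/-- **Basic matching**: a base of one Coxeter system is linked to a base of a conjugate of any
other system. -/
theorem matching {J : Set B} (hJ : IsB cs J) :
    ∃ (w : W) (J' : Set B'), IsB (cs'.map (MulAut.conj w)) J' ∧
      Link (par cs J) (par (cs'.map (MulAut.conj w)) J') := by
  obtain ⟨w, J', h1, h2, h3, h4⟩ := prematch cs cs' hJ
  set cs₁ := cs'.map (MulAut.conj w) with hcs₁
  obtain ⟨C', hC', hC⟩ := exists_base cs₁ h1 h2 h3
  obtain ⟨v, D, g1, g2, g3, g4⟩ := prematch cs₁ cs hC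
  set cs₂ := cs.map (MulAut.conj v) with hcs₂
  obtain ⟨D', hD', hD⟩ := exists_base cs₂ g1 g2 g3
  have le1 : ⁅par cs₁ J', par cs₁ J'⁆ ≤ ⁅par cs₁ C', par cs₁ C'⁆ :=
    Subgroup.commutator_mono (par_mono _ hC') (par_mono _ hC')
  have le2 : ⁅par cs₁ C', par cs₁ C'⁆ ≤ ⁅par cs₂ D', par cs₂ D'⁆ := by
    rw [g4.comm_eq]
    exact Subgroup.commutator_mono (par_mono _ hD') (par_mono _ hD')
  have hJD : J ⊆ D' := by
    refine hJ.subset_of_comm v D' fun x hx => ?_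
    rw [h4.comm_eq] at hx
    exact (comm_le_self _) (comm_conj cs v D' x (le2 (le1 hx)))
  have hDJ : D' = J := hJ.max D' hJD hD.conn ((map_finite cs _).mp hD.fin)
  subst hDJ
  have hcard : Nat.card ↥⁅par cs₂ D', par cs₂ D'⁆ = Nat.card ↥⁅par cs₁ J', par cs₁ J'⁆ := by
    rw [← h4.comm_eq, hcs₂, par_map, ← Subgroup.map_commutator]
    exact Nat.card_congr
      (Subgroup.equivMapOfInjective _ _ (MulAut.conj v).injective).toEquiv.symm
  have fin2 : Finite ↥⁅par cs₂ D', par cs₂ D'⁆ :=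
    have := hD.fin
    Finite.of_injective _ (Subgroup.inclusion_injective (comm_le_self _))
  have fin1 : Finite ↥⁅par cs₁ C', par cs₁ C'⁆ :=
    Finite.of_injective _ (Subgroup.inclusion_injective le2)
  have heq := Subgroup.eq_of_le_of_card_ge le1 (by
    rw [← hcard]
    exact Nat.card_le_card_of_injective _ (Subgroup.inclusion_injective le2))
  have hCJ : C' ⊆ J' := by
    refine hC.subset_of_comm 1 J' fun x hx => ?_
    rw [← heq] at hx
    simpa using (comm_le_self _) hx
  obtain rfl := Set.Subset.antisymm hC' hCJ
  exact ⟨w, J', hC, h4⟩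

/-- Two bases with conjugate commutator subgroups coincide. -/
theorem IsB.unique {cs : CoxeterSystem M W} {J₁ J₂ : Set B} (h1 : IsB cs J₁) (h2 : IsB cs J₂)
    (w : W) (h : ∀ x ∈ ⁅par cs J₁, par cs J₁⁆, w⁻¹ * x * w ∈ ⁅par cs J₂, par cs J₂⁆) :
    J₁ = J₂ := by
  refine (h1.max _ (h1.subset_of_comm w J₂ fun x hx => ?_) h2.conn h2.fin).symm
  exact (comm_le_self _) (h x hx)

end Matching

end CoxRep

/-! ### Embedded diagrams and orbit counting -/

namespace CoxRep

set_option linter.unusedSectionVars false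

section Sub

variable {B : Type*} [Fintype B] [DecidableEq B] {M : CoxeterMatrix B}
variable {W : Type*} [Group W] (cs : CoxeterSystem M W)
variable {X : Type*} [Fintype X] [DecidableEq X] (c : CoxeterMatrix X)

/-- The linear map of root spaces induced by a map of simple generators. -/
noncomputable def extl (f : X → B) : (X → ℝ) →ₗ[ℝ] (B → ℝ) :=
  ∑ x, (LinearMap.proj x : (X → ℝ) →ₗ[ℝ] ℝ).smulRight (sr (f x))

lemma extl_apply (f : X → B) (v : X → ℝ) : extl f v = ∑ x, v x • sr (f x) := by
  simp [extl]

lemma extl_sr (f : X → B) (x : X) : extl f (sr x) = sr (f x) := by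
  simp [extl_apply, sr, Pi.single_apply]

lemma extl_coord {f : X → B} (hf : Function.Injective f) (v : X → ℝ) (x : X) :
    extl f v (f x) = v x := by
  simp [extl_apply, sr, Pi.single_apply, hf.eq_iff]

lemma extl_coord_out {f : X → B} (v : X → ℝ) (b : B) (hb : b ∉ Set.range f) :
    extl f v b = 0 := by
  simp only [extl_apply, Finset.sum_apply, Pi.smul_apply, smul_eq_mul]
  refine Finset.sum_eq_zero fun x _ => ?_
  rw [sr_ne (by rintro rfl; exact hb ⟨x, rfl⟩), mul_zero]

lemma kv_extl {f : X → B} (h : ∀ x y, M.M (f x) (f y) = c.M x y) (x : X) (v : X → ℝ) :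
    kv M (f x) (extl f v) = kv c x v := by
  rw [extl_apply, map_sum, kv_apply]
  refine Finset.sum_congr rfl fun y _ => ?_
  rw [map_smul, kv_sr, h, smul_eq_mul, mul_comm]

/-- A Coxeter matrix embedded in another one has as Coxeter group a parabolic subgroup. -/
lemma iso_emb {f : X → B} (hf : Function.Injective f)
    (h : ∀ x y, M.M (f x) (f y) = c.M x y) :
    Nonempty (c.Group ≃* par cs (Set.range f)) := by
  set cx := c.toCoxeterSystem
  let φ : c.Group →* W := cx.lift ⟨cs.simple ∘ f, fun x y => by
    simp only [Function.comp]; rw [← h]; exact cs.simple_mul_simple_pow _ _⟩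
  have hφ : ∀ x, φ (cx.simple x) = cs.simple (f x) := fun x => cx.lift_apply_simple _ x
  have hrep : ∀ g, ∀ v, rep cs (φ g) (extl f v) = extl f (rep cx g v) := by
    intro g
    induction g using cx.simple_induction_left with
    | one => simp
    | mul_simple_left w s ih =>
      intro v
      rw [map_mul, rep_mul, rep_mul, ih, hφ, rep_simple_apply, rep_simple_apply,
        kv_extl c h, map_sub, map_smul, extl_sr]
  have hinj : Function.Injective φ := by
    rw [injective_iff_map_eq_one]
    intro g hg
    apply rep_injective cx
    rw [map_one]
    refine LinearMap.ext fun v => ?_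
    have := hrep g v
    rw [hg, rep_one] at this
    ext x
    have h2 := congrFun this (f x)
    rw [extl_coord hf, extl_coord hf] at h2
    simp [h2]
  have hr : φ.range = par cs (Set.range f) := by
    rw [MonoidHom.range_eq_map, ← cx.subgroup_closure_range_simple, MonoidHom.map_closure, par,
      ← Set.range_comp, ← Set.range_comp]
    congr 2
    funext x; exact hφ x
  rw [← hr]
  exact ⟨MonoidHom.ofInjective hinj⟩

/-- A visual subgroup has the order of the Coxeter group given by the diagram of its generators. -/
lemma card_emb {f : X → B} (hf : Function.Injective f)
    (h : ∀ x y, M.M (f x) (f y) = c.M x y) :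
    Nat.card (par cs (Set.range f)) = Nat.card c.Group :=
  (Nat.card_congr (iso_emb cs c hf h).some.toEquiv).symm

/-- An embedding of diagrams preserves the invariant form. -/
lemma gf_extl {f : X → B} (hf : Function.Injective f)
    (h : ∀ x y, M.M (f x) (f y) = c.M x y) (v : X → ℝ) :
    gf M (extl f v) (extl f v) = gf c v v := by
  classical
  unfold gf
  have h1 : ∀ b ∉ (Finset.univ.image f), extl f v b * kv M b (extl f v) = 0 := by
    intro b hb
    rw [extl_coord_out, zero_mul]
    simpa using hb
  rw [← Finset.sum_subset (Finset.subset_univ (Finset.univ.image f)) (fun b _ hb => h1 b hb),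
    Finset.sum_image (fun a _ b _ hab => hf hab)]
  refine Finset.sum_congr rfl fun x _ => ?_
  rw [extl_coord hf, kv_extl c h]

end Sub

section Order

variable {X : Type*} [Fintype X] [DecidableEq X] (c : CoxeterMatrix X)
variable {Y : Type*} [Fintype Y] [DecidableEq Y] (c' : CoxeterMatrix Y)

lemma card_iso {f : Y → X} (hf : Function.Bijective f)
    (h : ∀ x y, c.M (f x) (f y) = c'.M x y) : Nat.card c.Group = Nat.card c'.Group := by
  rw [← card_emb c.toCoxeterSystem c' hf.injective h, hf.surjective.range_eq, par,
    Set.image_univ, c.toCoxeterSystem.subgroup_closure_range_simple]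
  exact (Nat.card_congr Subgroup.topEquiv.toEquiv).symm

lemma finite_emb [hc : Finite c.Group] {f : Y → X} (hf : Function.Injective f)
    (h : ∀ x y, c.M (f x) (f y) = c'.M x y) : Finite c'.Group := by
  apply Nat.finite_of_card_ne_zero
  rw [← card_emb c.toCoxeterSystem c' hf h]
  exact Nat.card_pos.ne'

/-- Orbit counting: the Coxeter group acts on linear functionals, and the stabilizer of a fundamental
weight is the maximal visual subgroup obtained by deleting the generator `s0`. Here `C` is the Cartan
matrix with the roots rescaled by `d`, so that its entries may be taken in a small ring; the family
`x` lists the orbit in weight coordinates, and it is the whole orbit of `x i0` because it is closed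
under simple reflections and has only one dominant member. -/
theorem card_orbit [Finite c.Group] (s0 : X) {f : Y → X} (hf : Function.Injective f)
    (h : ∀ x y, c.M (f x) (f y) = c'.M x y) (hr : ∀ s, s ≠ s0 ↔ s ∈ Set.range f)
    {ι : Type*} [Fintype ι] (C : X → X → ℝ) (d : X → ℝ) (hd : ∀ s, 0 < d s)
    (hC : ∀ s t, kk (c.M s t) * d s = C s t * d t)
    (x : ι → X → ℝ) (hx : Function.Injective x)
    (hcl : ∀ i s, ∃ j, ∀ t, x j t = x i t - C s t * x i s)
    (i0 : ι) (hdom : ∀ i, (∀ t, 0 ≤ x i t) → i = i0)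
    (h0 : 0 < x i0 s0) (h1 : ∀ t ≠ s0, x i0 t = 0) :
    Nat.card c.Group = Fintype.card ι * Nat.card c'.Group := by
  set cx := c.toCoxeterSystem
  let l : ι → ((X → ℝ) →ₗ[ℝ] ℝ) := fun i => ∑ t, (x i t * d t) • LinearMap.proj t
  have hl : ∀ i t, l i (sr t) = x i t * d t := by
    intro i t; simp [l, sr, Pi.single_apply]
  have linj : ∀ i j, l i = l j → i = j := by
    intro i j hij
    apply hx
    funext t
    have := hl i t
    rw [hij, hl j t] at this
    exact (mul_right_cancel₀ (hd t).ne' this).symm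
  have hcl1 : ∀ i s, ∃ j, ∀ v, l j v = l i (rep cx (cx.simple s) v) := by
    intro i s
    obtain ⟨j, hj⟩ := hcl i s
    refine ⟨j, fun v => ?_⟩
    have : l j = l i ∘ₗ rep cx (cx.simple s) := by
      apply dual_ext
      intro t
      rw [LinearMap.comp_apply, dual_simple, hl, hl, hl, hj, kv_sr]
      linear_combination (x i s) * hC s t
    rw [this]; rfl
  have hcl2 : ∀ w, ∀ i, ∃ j, ∀ v, l j v = l i (rep cx w v) := by
    intro w
    induction w using cx.simple_induction_left with
    | one => intro i; exact ⟨i, fun v => by simp⟩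
    | mul_simple_left w s ih =>
      intro i
      obtain ⟨j, hj⟩ := hcl1 i s
      obtain ⟨k, hk⟩ := ih j
      exact ⟨k, fun v => by rw [hk, hj, rep_mul]⟩
  have dom0 : ∀ s, 0 ≤ l i0 (sr s) := by
    intro s
    rw [hl]
    refine mul_nonneg ?_ (hd s).le
    by_cases hs : s = s0
    · rw [hs]; exact h0.le
    · rw [h1 s hs]
  have hz : {s | l i0 (sr s) = 0} = Set.range f := by
    ext s
    rw [← hr, Set.mem_ofPred_eq, hl, mul_eq_zero, or_iff_left (hd s).ne']
    constructor
    · rintro hs rfl; exact h0.ne' hs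
    · exact h1 s
  have hstab : ∀ w, w ∈ par cx (Set.range f) ↔ ∀ v, l i0 (rep cx w v) = l i0 v := by
    intro w
    constructor
    · refine par_ind cx (fun w => ∀ v, l i0 (rep cx w v) = l i0 v) (by simp) ?_ w
      intro s hs w _ ih v
      rw [rep_mul, dual_simple]
      rw [← hz] at hs
      rw [Set.mem_ofPred_eq.mp hs, mul_zero, sub_zero, ih]
    · intro hw
      rw [← hz]
      refine (stabilizer cx (l i0) w dom0 fun s => ?_).1
      rw [hw]; exact dom0 s
  have hfin : ∀ i, {β | IsRoot cx β ∧ 0 ≤ β ∧ l i β < 0}.Finite := by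
    intro i
    have : {β | IsRoot cx β}.Finite := by
      refine (Set.finite_range (fun p : c.Group × X => rep cx p.1 (sr p.2))).subset ?_
      rintro β ⟨w, s, rfl⟩
      exact ⟨(w, s), rfl⟩
    exact this.subset fun β hβ => hβ.1
  have hsurj : ∀ i, ∃ w, ∀ v, l i v = l i0 (rep cx w⁻¹ v) := by
    intro i
    obtain ⟨w, hw⟩ := exists_dominant cx (l i) (hfin i)
    obtain ⟨j, hj⟩ := hcl2 w i
    have hj0 : j = i0 := by
      apply hdom
      intro t
      have := hw t
      rw [← hj, hl] at this
      exact nonneg_of_mul_nonneg_left this (hd t)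
    subst hj0
    exact ⟨w, fun v => by rw [hj, rep_apply_inv]⟩
  choose g hg using fun w : c.Group => hcl2 w⁻¹ i0
  have hgeq : ∀ a b, g a = g b ↔ a⁻¹ * b ∈ par cx (Set.range f) := by
    intro a b
    rw [hstab]
    constructor
    · intro hab v
      rw [rep_mul, ← hg a, hab, hg b, rep_inv_apply]
    · intro hab
      apply linj
      refine LinearMap.ext fun v => ?_
      rw [hg, hg, ← hab (rep cx b⁻¹ v), rep_mul, rep_apply_inv]
  let G : c.Group ⧸ par cx (Set.range f) → ι := Quotient.lift g fun a b hab =>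
    (hgeq a b).mpr (QuotientGroup.leftRel_apply.mp hab)
  have hG : Function.Bijective G := by
    constructor
    · intro a b
      induction a using QuotientGroup.induction_on
      induction b using QuotientGroup.induction_on
      intro hab
      exact QuotientGroup.eq.mpr ((hgeq _ _).mp hab)
    · intro i
      obtain ⟨w, hw⟩ := hsurj i
      refine ⟨QuotientGroup.mk w, linj _ _ (LinearMap.ext fun v => ?_)⟩
      rw [hw]; exact hg w v
  rw [Subgroup.card_eq_card_quotient_mul_card_subgroup (par cx (Set.range f)),
    Nat.card_congr (Equiv.ofBijective G hG), Nat.card_eq_fintype_card,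
    card_emb cx c' hf h]

end Order

end CoxRep

/-! ### Attaching and removing a leaf -/

namespace CoxRep

set_option linter.unusedSectionVars false

section Diagrams

variable {X : Type*} {Y : Type*} {Z : Type*}

/-- Isomorphism of Coxeter matrices. -/
def CIso (c : CoxeterMatrix X) (c' : CoxeterMatrix Y) : Prop :=
  ∃ e : X ≃ Y, ∀ x y, c'.M (e x) (e y) = c.M x y

lemma CIso.rfl' (c : CoxeterMatrix X) : CIso c c := ⟨Equiv.refl _, fun _ _ => rfl⟩

lemma CIso.symm {c : CoxeterMatrix X} {c' : CoxeterMatrix Y} (h : CIso c c') : CIso c' c := by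
  obtain ⟨e, he⟩ := h
  exact ⟨e.symm, fun x y => by rw [← he]; simp⟩

lemma CIso.trans {c : CoxeterMatrix X} {c' : CoxeterMatrix Y} {c'' : CoxeterMatrix Z}
    (h : CIso c c') (h' : CIso c' c'') : CIso c c'' := by
  obtain ⟨e, he⟩ := h
  obtain ⟨e', he'⟩ := h'
  exact ⟨e.trans e', fun x y => by rw [← he, ← he']; rfl⟩

/-- The Coxeter matrix obtained by attaching a new vertex to the vertex `i` by an edge with
label `k`. Labels below `2` are replaced by `2` so that the definition needs no side condition. -/
def att [DecidableEq X] (c : CoxeterMatrix X) (i : X) (k : ℕ) : CoxeterMatrix (Option X) where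
  M := Matrix.of fun a b =>
    match a, b with
    | some x, some y => c.M x y
    | some x, none => if x = i then max k 2 else 2
    | none, some x => if x = i then max k 2 else 2
    | none, none => 1
  isSymm := by
    ext a b
    cases a <;> cases b <;> simp [c.symmetric]
  diagonal := by rintro (_ | x) <;> simp
  off_diagonal := by
    rintro (_ | x) (_ | y) h
    · exact absurd rfl h
    · simp only [Matrix.of_apply]; split_ifs <;> omega
    · simp only [Matrix.of_apply]; split_ifs <;> omega
    · exact c.off_diagonal x y fun e => h (by rw [e])

section
variable [DecidableEq X] (c : CoxeterMatrix X) (i : X) (k : ℕ)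
lemma att_ss (x y : X) : (att c i k).M (some x) (some y) = c.M x y := rfl
lemma att_sn (x : X) : (att c i k).M (some x) none = if x = i then max k 2 else 2 := rfl
lemma att_ns (x : X) : (att c i k).M none (some x) = if x = i then max k 2 else 2 := rfl
lemma att_nn : (att c i k).M none none = 1 := rfl
end

lemma att_congr [DecidableEq X] [DecidableEq Y] {c : CoxeterMatrix X} {c' : CoxeterMatrix Y}
    (e : X ≃ Y) (he : ∀ x y, c'.M (e x) (e y) = c.M x y) (i : X) (k : ℕ) :
    CIso (att c i k) (att c' (e i) k) := by
  refine ⟨e.optionCongr, ?_⟩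
  rintro (_ | x) (_ | y)
  · rfl
  · simp [att_ns]
  · simp [att_sn]
  · exact he x y

variable [Fintype X] [DecidableEq X] [Fintype Y] [DecidableEq Y]

/-- Positive definiteness of the cosine form. -/
def PD (c : CoxeterMatrix X) : Prop := ∀ v : X → ℝ, v ≠ 0 → 0 < gf c v v

/-- Positive definiteness passes to full subdiagrams. -/
lemma PD.emb {c : CoxeterMatrix X} {c' : CoxeterMatrix Y} (h : PD c) {f : Y → X}
    (hf : Function.Injective f) (hM : ∀ x y, c.M (f x) (f y) = c'.M x y) : PD c' := by
  intro v hv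
  rw [← gf_extl c' hf hM]
  apply h
  intro h0
  apply hv
  funext y
  rw [← extl_coord hf v y, h0]; rfl

lemma PD.iso {c : CoxeterMatrix X} {c' : CoxeterMatrix Y} (h : PD c) (hi : CIso c c') : PD c' := by
  obtain ⟨e, he⟩ := hi.symm
  exact h.emb e.injective he

lemma kv_att_some (c : CoxeterMatrix X) (i : X) (k : ℕ) (v : Option X → ℝ) (x : X) :
    kv (att c i k) (some x) v =
      kv c x (v ∘ some) + (if x = i then kk (max k 2) else 0) * v none := by
  rw [kv_apply, Fintype.sum_option, kv_apply, add_comm]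
  congr 1
  rw [att_sn]
  split_ifs <;> simp [kk_two]

lemma kv_att_none (c : CoxeterMatrix X) (i : X) (k : ℕ) (v : Option X → ℝ) :
    kv (att c i k) none v = kk (max k 2) * v (some i) + 2 * v none := by
  rw [kv_apply, Fintype.sum_option, att_nn, kk_one, add_comm]
  congr 1
  rw [Finset.sum_eq_single i]
  · rw [att_ns, if_pos rfl]
  · intro b _ hb
    rw [att_ns, if_neg hb, kk_two, zero_mul]
  · simp

lemma gf_att (c : CoxeterMatrix X) (i : X) (k : ℕ) (v : Option X → ℝ) :
    gf (att c i k) v v = gf c (v ∘ some) (v ∘ some) + 2 * kk (max k 2) * v (some i) * v none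
      + 2 * v none ^ 2 := by
  simp only [gf]
  rw [Fintype.sum_option, kv_att_none]
  have : ∀ x, v (some x) * kv (att c i k) (some x) v =
      (v ∘ some) x * kv c x (v ∘ some) + (if x = i then v (some i) * kk (max k 2) * v none else 0) := by
    intro x
    rw [kv_att_some]
    split_ifs with h
    · subst h; simp; ring
    · simp
  simp_rw [this]
  rw [Finset.sum_add_distrib, Finset.sum_ite_eq' ]
  simp
  ring

lemma kk_le_neg_one {m : ℕ} (h1 : m ≠ 1) (h2 : m ≠ 2) : kk m ≤ -1 := by
  unfold kk
  have hp := Real.pi_pos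
  have : Real.cos (Real.pi / 3) ≤ Real.cos (Real.pi / m) := by
    rcases Nat.eq_zero_or_pos m with h | h
    · subst h; simp; norm_num
    · have h3 : (3:ℝ) ≤ m := by exact_mod_cast (show 3 ≤ m by omega)
      apply Real.cos_le_cos_of_nonneg_of_le_pi
      · positivity
      · linarith
      · gcongr
  rw [Real.cos_pi_div_three] at this
  linarith

/-- A positive definite connected diagram with at least two vertices has an end vertex. -/
lemma exists_leaf {c : CoxeterMatrix X} (h : PD c) (hc : Conn c Set.univ) [Nontrivial X] :
    ∃ s t, s ≠ t ∧ 3 ≤ c.M s t ∧ ∀ u, u ≠ s → u ≠ t → c.M s u = 2 := by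
  have h1 := h (fun _ => 1) (fun h0 => by
    have := congrFun h0 (Classical.arbitrary X); simp at this)
  have h2 : ∃ s, 0 < kv c s (fun _ => 1) := by
    by_contra hcon
    push Not at hcon
    have : gf c (fun _ => 1) (fun _ => 1) ≤ 0 := by
      unfold gf
      exact Finset.sum_nonpos fun s _ => by simpa using hcon s
    linarith
  obtain ⟨s, hs⟩ := h2
  obtain ⟨t, -, hst, hm⟩ := exists_edge hc Set.nontrivial_univ s trivial
  have h1' : c.M s t ≠ 1 := c.off_diagonal s t hst
  rw [kv_apply, ← Finset.add_sum_erase _ _ (Finset.mem_univ s), c.diagonal, kk_one,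
    ← Finset.add_sum_erase _ _ (show t ∈ Finset.univ.erase s by simp [hst.symm])] at hs
  have hneg : ∀ u ∈ (Finset.univ.erase s).erase t, kk (c.M s u) * 1 ≤ 0 := by
    intro u hu
    simp at hu
    rw [mul_one]
    exact kk_nonpos_of (c.off_diagonal s u (Ne.symm hu.2))
  refine ⟨s, t, hst, ?_, ?_⟩
  · by_contra h3
    have : c.M s t = 0 := by omega
    have h4 := Finset.sum_nonpos hneg
    rw [this, kk_zero] at hs
    linarith
  · intro u hus hut
    by_contra h3
    have h4 := Finset.sum_nonpos hneg
    have hu : u ∈ (Finset.univ.erase s).erase t := by simp [hus, hut]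
    rw [← Finset.add_sum_erase _ _ hu] at hs
    have h5 : ∑ x ∈ ((Finset.univ.erase s).erase t).erase u, kk (c.M s x) * 1 ≤ 0 :=
      Finset.sum_nonpos fun x hx => hneg x (Finset.mem_of_mem_erase hx)
    have h6 := kk_le_neg_one (c.off_diagonal s u (Ne.symm hus)) h3
    have h7 := kk_le_neg_one h1' hm
    linarith

/-- The restriction of a Coxeter matrix to a set of vertices. -/
def restr (c : CoxeterMatrix X) (J : Set X) : CoxeterMatrix J where
  M := Matrix.of fun a b => c.M a b
  isSymm := by
    ext a b; exact c.symmetric _ _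
  diagonal := fun a => c.diagonal a
  off_diagonal := fun a b h => c.off_diagonal a b fun e => h (Subtype.ext e)

lemma Conn.restr {c : CoxeterMatrix X} {J : Set X} (h : Conn c J) :
    Conn (restr c J) Set.univ := by
  rintro ⟨i, hi⟩ - ⟨j, hj⟩ -
  have := h i hi j hj
  induction this with
  | refl => exact Relation.ReflTransGen.refl
  | tail _ h2 ih =>
    refine Relation.ReflTransGen.tail (ih h2.1) ⟨trivial, trivial, ?_, h2.2.2.2⟩
    intro e; exact h2.2.2.1 (congrArg Subtype.val e)

/-- Removing an end vertex `s`, whose only possible neighbour is `t`, keeps the diagram connected. -/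
lemma conn_remove {c : CoxeterMatrix X} (hc : Conn c Set.univ) {s t : X} (hst : s ≠ t)
    (hu : ∀ u, u ≠ s → u ≠ t → c.M s u = 2) : Conn c {u | u ≠ s} := by
  intro i hi j hj
  have key : ∀ j, Relation.ReflTransGen
      (fun x y => x ∈ {u | u ≠ s} ∧ y ∈ {u | u ≠ s} ∧ x ≠ y ∧ c.M x y ≠ 2) i
        (if j = s then t else j) := by
    intro j
    induction hc i trivial j trivial with
    | refl => rw [if_neg hi]
    | tail _ h2 ih =>
      rename_i a b _
      by_cases ha : a = s
      · subst ha
        have : b = t := by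
          by_contra hb
          exact h2.2.2.2 (hu b (Ne.symm h2.2.2.1) hb)
        subst this
        rw [if_pos rfl] at ih
        rwa [if_neg (Ne.symm hst)]
      · rw [if_neg ha] at ih
        by_cases hb : b = s
        · subst hb
          rw [if_pos rfl]
          have : a = t := by
            by_contra hb
            exact h2.2.2.2 (by rw [c.symmetric]; exact hu a h2.2.2.1 hb)
          rwa [← this]
        · rw [if_neg hb]
          exact ih.tail ⟨ha, hb, h2.2.2⟩
  have := key j
  rwa [if_neg hj] at this

/-- A diagram is obtained from the complement of an end vertex by attaching that vertex again. -/
lemma iso_att {c : CoxeterMatrix X} {s t : X} (hst : s ≠ t) (h3 : 3 ≤ c.M s t)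
    (hu : ∀ u, u ≠ s → u ≠ t → c.M s u = 2) :
    CIso (att (restr c {u | u ≠ s}) ⟨t, Ne.symm hst⟩ (c.M s t)) c := by
  refine ⟨Equiv.optionSubtypeNe s, ?_⟩
  have key : ∀ x : {u | u ≠ s}, c.M s x = if x = ⟨t, Ne.symm hst⟩ then max (c.M s t) 2 else 2 := by
    intro x
    split_ifs with h
    · rw [h]; simp; omega
    · exact hu x x.2 fun e => h (Subtype.ext e)
  rintro (_ | x) (_ | y)
  · rw [c.diagonal]; rfl
  · exact key y
  · rw [c.symmetric]; exact key x
  · rfl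

universe u in
/-- Induction on diagrams: every positive definite connected diagram arises from a one-vertex
diagram by successively attaching end vertices. -/
theorem diagram_induction (P : ∀ (Y : Type u) [Fintype Y] [DecidableEq Y], CoxeterMatrix Y → Prop)
    (h1 : ∀ (Y : Type u) [Fintype Y] [DecidableEq Y] [Unique Y] (c : CoxeterMatrix Y), P Y c)
    (hs : ∀ (Y : Type u) [Fintype Y] [DecidableEq Y] (c : CoxeterMatrix Y) (i : Y) (k : ℕ),
      P Y c → 3 ≤ k → PD (att c i k) → P (Option Y) (att c i k))
    (hiso : ∀ (Y Z : Type u) [Fintype Y] [DecidableEq Y] [Fintype Z] [DecidableEq Z]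
      (c : CoxeterMatrix Y) (c' : CoxeterMatrix Z), CIso c c' → P Y c → P Z c') :
    ∀ (Y : Type u) [Fintype Y] [DecidableEq Y] [Nonempty Y] (c : CoxeterMatrix Y),
      PD c → Conn c Set.univ → P Y c := by
  intro Y _ _ _ c
  generalize hn : Fintype.card Y = n
  induction n using Nat.strong_induction_on generalizing Y with
  | _ n ih =>
  intro hpd hconn
  rcases subsingleton_or_nontrivial Y with hY | hY
  · have : Unique Y := uniqueOfSubsingleton (Classical.arbitrary Y)
    exact h1 Y c
  · obtain ⟨s, t, hst, h3, hu⟩ := exists_leaf hpd hconn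
    have hiso' := iso_att hst h3 hu
    classical
    have : Nonempty {u | u ≠ s} := ⟨⟨t, Ne.symm hst⟩⟩
    refine hiso _ _ _ _ hiso' (hs _ _ _ _ (ih _ ?_ _ _ rfl ?_ ?_) h3 (hpd.iso hiso'.symm))
    · rw [← hn]
      exact Fintype.card_subtype_lt (x := s) (by simp)
    · exact hpd.emb (f := Subtype.val) Subtype.val_injective fun _ _ => rfl
    · exact (conn_remove hconn hst hu).restr

end Diagrams

end CoxRep

/-! ### Indefinite and semidefinite diagrams -/

namespace CoxRep

set_option linter.unusedSectionVars false
set_option linter.unusedSimpArgs false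

/-- The path with `n` vertices, all edges having label `3` (type `A_n`). -/
def pathM (n : ℕ) : CoxeterMatrix (Fin n) where
  M := Matrix.of fun i j => if i = j then 1 else if i.val + 1 = j.val ∨ j.val + 1 = i.val then 3 else 2
  isSymm := by
    ext i j
    simp only [Matrix.transpose_apply, Matrix.of_apply, eq_comm (a := j), or_comm]
  diagonal := by simp
  off_diagonal := by
    intro i j h
    simp only [Matrix.of_apply, if_neg h]
    split_ifs <;> omega

lemma pathM_apply {n : ℕ} (i j : Fin n) : (pathM n).M i j =
    if i = j then 1 else if i.val + 1 = j.val ∨ j.val + 1 = i.val then 3 else 2 := rfl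

/-- The path with `n` vertices with a further vertex attached to the vertex `i` by an edge with
label `k`. -/
def hook (n : ℕ) (i : Fin n) (k : ℕ) : CoxeterMatrix (Option (Fin n)) := att (pathM n) i k

lemma kk_three : kk 3 = -1 := by
  unfold kk; push_cast; rw [Real.cos_pi_div_three]; norm_num
lemma kk_four : kk 4 = -√2 := by
  unfold kk; push_cast; rw [Real.cos_pi_div_four]; ring
lemma kk_five : kk 5 = -Real.goldenRatio := by
  unfold kk; push_cast; rw [Real.cos_pi_div_five]; unfold Real.goldenRatio; ring
lemma kk_six : kk 6 = -√3 := by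
  unfold kk; push_cast; rw [Real.cos_pi_div_six]; ring

lemma kk_anti {m m' : ℕ} (h3 : 2 ≤ m) (h : m ≤ m') : kk m' ≤ kk m := by
  unfold kk
  have hp := Real.pi_pos
  have h3' : (2:ℝ) ≤ m := by exact_mod_cast h3
  have : Real.cos (Real.pi / m) ≤ Real.cos (Real.pi / m') := by
    apply Real.cos_le_cos_of_nonneg_of_le_pi
    · positivity
    · rw [div_le_iff₀ (by positivity)]; nlinarith
    · gcongr
  linarith

lemma kk_sq_three {k : ℕ} (h : 3 ≤ k) : 1 ≤ kk k ^ 2 := by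
  have := kk_anti (by norm_num) h
  rw [kk_three] at this; nlinarith
lemma kk_sq_four {k : ℕ} (h : 4 ≤ k) : 2 ≤ kk k ^ 2 := by
  have := kk_anti (by norm_num) h
  rw [kk_four] at this
  have h2 : √2 ^ 2 = 2 := Real.sq_sqrt (by norm_num)
  have := Real.sqrt_nonneg 2
  nlinarith
lemma kk_sq_five {k : ℕ} (h : 5 ≤ k) : 2.6 ≤ kk k ^ 2 := by
  have := kk_anti (by norm_num) h
  rw [kk_five] at this
  have h1 := Real.one_lt_goldenRatio
  have h2 := Real.goldenRatio_sq
  have h3 : 1.6 ≤ Real.goldenRatio := by nlinarith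
  nlinarith
lemma kk_sq_six {k : ℕ} (h : 6 ≤ k) : 3 ≤ kk k ^ 2 := by
  have := kk_anti (by norm_num) h
  rw [kk_six] at this
  have h2 : √3 ^ 2 = 3 := Real.sq_sqrt (by norm_num)
  have := Real.sqrt_nonneg 3
  nlinarith

/-- The Cartan matrix of a path is the discrete second difference with zero boundary values. -/
lemma kv_path {n : ℕ} (t : Fin n) (g : ℕ → ℝ) (h0 : g 0 = 0) (hn : g (n + 1) = 0) :
    kv (pathM n) t (fun s => g (s.val + 1)) = 2 * g (t.val + 1) - g t.val - g (t.val + 2) := by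
  rw [kv_apply]
  have : ∀ s : Fin n, kk ((pathM n).M t s) * g (s.val + 1) =
      (fun j : ℕ => (if j = t.val then 2 * g (j + 1) else 0) - (if j = t.val + 1 then g (j + 1) else 0)
        - (if j + 1 = t.val then g (j + 1) else 0)) s.val := by
    intro s
    simp only [pathM_apply, Fin.ext_iff]
    by_cases h1 : t.val = s.val
    · rw [if_pos h1, if_pos h1.symm, if_neg (by omega), if_neg (by omega), kk_one]; ring
    · rw [if_neg h1, if_neg (Ne.symm h1)]
      by_cases h2 : t.val + 1 = s.val
      · rw [if_pos (Or.inl h2), if_pos h2.symm, if_neg (by omega), kk_three]; ring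
      · rw [if_neg (Ne.symm h2)]
        by_cases h3 : s.val + 1 = t.val
        · rw [if_pos (Or.inr h3), if_pos h3, kk_three]; ring
        · rw [if_neg (by tauto), if_neg h3, kk_two]; ring
  rw [Finset.sum_congr rfl fun s _ => this s]
  rw [Fin.sum_univ_eq_sum_range (fun j : ℕ => (if j = t.val then 2 * g (j + 1) else 0) -
    (if j = t.val + 1 then g (j + 1) else 0) - (if j + 1 = t.val then g (j + 1) else 0)) n]
  have ht := t.2
  rw [Finset.sum_sub_distrib, Finset.sum_sub_distrib, Finset.sum_ite_eq', Finset.sum_ite_eq',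
    if_pos (Finset.mem_range.mpr ht)]
  have e2 : (if t.val + 1 ∈ Finset.range n then g (t.val + 1 + 1) else 0) = g (t.val + 2) := by
    split_ifs with h
    · rfl
    · have : t.val + 2 = n + 1 := by rw [Finset.mem_range] at h; omega
      rw [this, hn]
  have e3 : ∑ x ∈ Finset.range n, (if x + 1 = t.val then g (x + 1) else 0) = g t.val := by
    rcases Nat.eq_zero_or_pos t.val with h | h
    · rw [h, h0]
      exact Finset.sum_eq_zero fun x _ => if_neg (by omega)
    · rw [Finset.sum_eq_single (t.val - 1)]
      · rw [if_pos (by omega)]; congr 1; omega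
      · intro b _ hb; exact if_neg (by omega)
      · intro hb; exact absurd (Finset.mem_range.mpr (by omega)) hb
  rw [e2, e3]; ring

/-- `(n + 1)` times the inverse Cartan matrix of the path, with indices starting at `1`. -/
noncomputable def FF (n i t : ℕ) : ℝ :=
  if t ≤ i then (t:ℝ) * (n + 1 - i) else (i:ℝ) * (n + 1 - t)

lemma FF_comm (n i t : ℕ) : FF n i t = FF n t i := by
  unfold FF
  split_ifs with h1 h2 h2
  · have : t = i := by omega
    subst this; ring
  · ring
  · ring
  · omega

/-- `FF` inverts the Cartan matrix of the path up to the factor `n + 1`. -/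
lemma kv_FF {n : ℕ} (t i : Fin n) :
    kv (pathM n) t (fun s => FF n (i.val + 1) (s.val + 1)) = if t = i then (n + 1 : ℝ) else 0 := by
  have hi := i.2
  rw [kv_path t (fun x => FF n (i.val + 1) x) (by simp [FF])
    (by simp only [FF]; rw [if_neg (by omega)]; push_cast; ring)]
  simp only [FF, Fin.ext_iff]
  rcases lt_trichotomy t.val i.val with h | h | h
  · rw [if_pos (by omega), if_pos (by omega), if_pos (by omega), if_neg (by omega)]; push_cast; ring
  · rw [if_pos (by omega), if_pos (by omega), if_neg (by omega), if_pos h, h]; push_cast; ring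
  · by_cases h2 : t.val = i.val + 1
    · rw [if_neg (by omega), if_pos (by omega), if_neg (by omega), if_neg (by omega), h2]
      push_cast; ring
    · rw [if_neg (by omega), if_neg (by omega), if_neg (by omega), if_neg (by omega)]
      push_cast; ring

/-- The form of a path on a combination of two (rescaled) fundamental weights. -/
lemma gf_FF {n : ℕ} (i j : Fin n) (a b : ℝ) (w : Fin n → ℝ)
    (hw : ∀ t, w t = a * FF n (i.val + 1) (t.val + 1) + b * FF n (j.val + 1) (t.val + 1)) :
    gf (pathM n) w w = (n + 1) * (a * w i + b * w j) := by
  have e : w = a • (fun s : Fin n => FF n (i.val + 1) (s.val + 1)) +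
      b • (fun s : Fin n => FF n (j.val + 1) (s.val + 1)) := by
    funext t; simp [hw]
  have : ∀ t, w t * kv (pathM n) t w =
      (if t = i then w i * (a * (n + 1)) else 0) + (if t = j then w j * (b * (n+1)) else 0) := by
    intro t
    have : kv (pathM n) t w = a * (if t = i then (n + 1 : ℝ) else 0) +
        b * (if t = j then (n + 1 : ℝ) else 0) := by
      conv_lhs => rw [e]
      rw [map_add, map_smul, map_smul, kv_FF, kv_FF]; rfl
    rw [this]
    rw [mul_add]
    congr 1
    · split_ifs with h
      · rw [h]
      · ring
    · split_ifs with h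
      · rw [h]
      · ring
  unfold gf
  simp_rw [this]
  rw [Finset.sum_add_distrib, Finset.sum_ite_eq', Finset.sum_ite_eq', if_pos (Finset.mem_univ _),
    if_pos (Finset.mem_univ _)]
  ring

/-- Necessary condition for a vertex attached to a path: the test vector is a multiple of the
projection of the new simple root to the orthogonal complement of the path. -/
lemma hook_bound {n : ℕ} {i : Fin n} {k : ℕ} (hk : 3 ≤ k) (h : PD (hook n i k)) :
    kk k ^ 2 * ((i.val + 1) * (n - i.val)) < 2 * (n + 1) := by
  have h1 := h (fun | none => n + 1 | some t => (-kk k) * FF n (i.val + 1) (t.val + 1))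
    (fun h0 => by have := congrFun h0 none; simp at this; linarith)
  rw [hook, gf_att, gf_FF i i (-kk k) 0 _ (fun t => by simp)] at h1
  rw [max_eq_left (by omega)] at h1
  simp only [Function.comp, FF, le_refl, if_true] at h1
  push_cast at h1
  have hn : (0:ℝ) < n + 1 := by positivity
  refine lt_of_mul_lt_mul_left (a := (n + 1 : ℝ)) ?_ hn.le
  linarith

/-- Necessary condition for two end vertices attached to a path, from a test vector whose component on
the path is `y` and `z` times the fundamental weights at `i` and `j`. The parameters `p` and `r` are
upper bounds for `2 / kk k ^ 2` and `2 / kk k' ^ 2`. -/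
lemma two_leaf_bound {n : ℕ} {i j : Fin n} {k k' : ℕ} (hk : 3 ≤ k) (hk' : 3 ≤ k')
    (h : PD (att (hook n i k) (some j) k')) (p r y z : ℝ) (hp : 2 ≤ p * kk k ^ 2)
    (hr : 2 ≤ r * kk k' ^ 2) (hyz : y ≠ 0) :
    y ^ 2 * FF n (i.val + 1) (i.val + 1) + 2 * y * z * FF n (i.val + 1) (j.val + 1) +
      z ^ 2 * FF n (j.val + 1) (j.val + 1) < (n + 1) * (p * y ^ 2 + r * z ^ 2) := by
  have hkn : kk k < 0 := kk_neg_of (by omega) (by omega)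
  have hkn' : kk k' < 0 := kk_neg_of (by omega) (by omega)
  have hn : (0:ℝ) < n + 1 := by positivity
  set Y := y / (-kk k) with hY
  set Z := z / (-kk k') with hZ
  have eY : kk k * Y = -y := by rw [hY, div_neg, mul_neg, mul_div_cancel₀ _ hkn.ne]
  have eZ : kk k' * Z = -z := by rw [hZ, div_neg, mul_neg, mul_div_cancel₀ _ hkn'.ne]
  have h1 := h (fun
      | none => (n + 1) * Z
      | some none => (n + 1) * Y
      | some (some t) => y * FF n (i.val + 1) (t.val + 1) + z * FF n (j.val + 1) (t.val + 1))
    (fun h0 => by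
      have := congrFun h0 (some none)
      simp at this
      rcases this with h | h
      · linarith
      · rw [h] at eY; apply hyz; linarith)
  rw [gf_att, hook, gf_att, gf_FF i j y z _ (fun t => by simp only [Function.comp])] at h1
  rw [max_eq_left (by omega), max_eq_left (by omega)] at h1
  simp only [Function.comp] at h1
  rw [FF_comm n (j.val + 1) (i.val + 1)] at h1
  have hpy : 2 * Y ^ 2 ≤ p * y ^ 2 := by
    have : y ^ 2 = kk k ^ 2 * Y ^ 2 := by rw [← mul_pow, eY]; ring
    rw [this]; linarith [mul_le_mul_of_nonneg_right hp (sq_nonneg Y)]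
  have hrz : 2 * Z ^ 2 ≤ r * z ^ 2 := by
    have : z ^ 2 = kk k' ^ 2 * Z ^ 2 := by rw [← mul_pow, eZ]; ring
    rw [this]; linarith [mul_le_mul_of_nonneg_right hr (sq_nonneg Z)]
  generalize FF n (i.val + 1) (i.val + 1) = q1 at *
  generalize FF n (i.val + 1) (j.val + 1) = q2 at *
  generalize FF n (j.val + 1) (j.val + 1) = q3 at *
  have e1 : 2 * kk k * (y * q1 + z * q2) * ((n + 1) * Y) = - 2 * y * (y * q1 + z * q2) * (n + 1) := by
    linear_combination 2 * (y * q1 + z * q2) * (n + 1) * eY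
  have e2 : 2 * kk k' * (y * q2 + z * q3) * ((n + 1) * Z) = - 2 * z * (y * q2 + z * q3) * (n + 1) := by
    linear_combination 2 * (y * q2 + z * q3) * (n + 1) * eZ
  rw [e1, e2] at h1
  refine lt_of_mul_lt_mul_left (a := (n + 1 : ℝ)) ?_ hn.le
  have h3 := mul_le_mul_of_nonneg_left hpy (show (0:ℝ) ≤ (n+1)^2 by positivity)
  have h4 := mul_le_mul_of_nonneg_left hrz (show (0:ℝ) ≤ (n+1)^2 by positivity)
  linarith

/-- Necessary condition for a branch of two vertices attached to a path. -/
lemma chain_bound {n : ℕ} {i : Fin n} {k k' : ℕ} (hk : 3 ≤ k) (hk' : 3 ≤ k')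
    (h : PD (att (hook n i k) none k')) :
    2 * kk k ^ 2 * ((i.val + 1) * (n - i.val)) + (n + 1) * kk k' ^ 2 < 4 * (n + 1) := by
  have hn : (0:ℝ) < n + 1 := by positivity
  have h1 := h (fun
      | none => -(n + 1) * kk k'
      | some none => 2 * (n + 1)
      | some (some t) => (-2 * kk k) * FF n (i.val + 1) (t.val + 1))
    (fun h0 => by
      have := congrFun h0 (some none)
      simp at this
      linarith)
  rw [gf_att, hook, gf_att, gf_FF i i (-2 * kk k) 0 _ (fun t => by simp)] at h1
  rw [max_eq_left (by omega), max_eq_left (by omega)] at h1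
  simp only [Function.comp, FF, le_refl, if_true] at h1
  push_cast at h1
  refine lt_of_mul_lt_mul_left (a := (n + 1 : ℝ)) ?_ hn.le
  linarith

/-- Reversal of the path. -/
lemma hook_rev (n : ℕ) (i : Fin n) (k : ℕ) : CIso (hook n i k) (hook n i.rev k) := by
  refine att_congr Fin.revPerm (fun x y => ?_) i k
  simp only [pathM_apply, Fin.revPerm_apply, Fin.rev_inj, Fin.val_rev]
  have := x.2; have := y.2
  split_ifs <;> first | rfl | omega

/-- The order in which two end vertices are attached does not matter. -/
lemma att_swap {X : Type*} [DecidableEq X] (c : CoxeterMatrix X) (i j : X) (k k' : ℕ) :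
    CIso (att (att c i k) (some j) k') (att (att c j k') (some i) k) := by
  refine ⟨Equiv.swap none (some none), ?_⟩
  have h1 : ∀ x : X, Equiv.swap none (some none) (some (some x)) = some (some x) := fun x =>
    Equiv.swap_apply_of_ne_of_ne (by simp) (by simp)
  rintro (_ | _ | x) (_ | _ | y) <;>
    simp [h1, att_ss, att_sn, att_ns, att_nn]

/-- A path with a vertex attached to its end with label `3` is a longer path. -/
lemma path_app (n : ℕ) : CIso (hook (n + 1) (Fin.last n) 3) (pathM (n + 2)) := by
  refine ⟨finSuccEquivLast.symm, ?_⟩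
  rintro (_ | x) (_ | y)
  · simp [hook, att_nn, pathM_apply]
  · have := y.2
    simp only [hook, att_ns, finSuccEquivLast_symm_none, finSuccEquivLast_symm_some, pathM_apply,
      Fin.ext_iff, Fin.val_last, Fin.val_castSucc]
    split_ifs <;> omega
  · have := x.2
    simp only [hook, att_sn, finSuccEquivLast_symm_none, finSuccEquivLast_symm_some, pathM_apply,
      Fin.ext_iff, Fin.val_last, Fin.val_castSucc]
    split_ifs <;> omega
  · simp [hook, att_ss, pathM_apply, Fin.ext_iff]

/-- Attaching a vertex with label `3` to the last vertex of the path lengthens the path. -/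
lemma hook_last (n : ℕ) (i : Fin (n + 1)) (k : ℕ) :
    CIso (att (hook (n + 1) i k) (some (Fin.last n)) 3) (hook (n + 2) i.castSucc k) := by
  refine (att_swap _ _ _ _ _).trans ?_
  obtain ⟨e, he⟩ : ∃ e : Option (Fin (n + 1)) ≃ Fin (n + 2),
      (∀ x y, (pathM (n + 2)).M (e x) (e y) = (hook (n + 1) (Fin.last n) 3).M x y) ∧
      e (some i) = i.castSucc := by
    refine ⟨finSuccEquivLast.symm, ?_, by simp⟩
    rintro (_ | x) (_ | y)
    · simp [hook, att_nn, pathM_apply]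
    · have := y.2
      simp only [hook, att_ns, finSuccEquivLast_symm_none, finSuccEquivLast_symm_some, pathM_apply,
        Fin.ext_iff, Fin.val_last, Fin.val_castSucc]
      split_ifs <;> omega
    · have := x.2
      simp only [hook, att_sn, finSuccEquivLast_symm_none, finSuccEquivLast_symm_some, pathM_apply,
        Fin.ext_iff, Fin.val_last, Fin.val_castSucc]
      split_ifs <;> omega
    · simp [hook, att_ss, pathM_apply, Fin.ext_iff]
  have := att_congr e he.1 (some i) k
  rwa [he.2] at this

lemma hook2_rev {n : ℕ} (i j : Fin n) (k k' : ℕ) :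
    CIso (att (hook n i k) (some j) k') (att (hook n i.rev k) (some j.rev) k') := by
  refine att_congr (Fin.revPerm.optionCongr) ?_ (some j) k'
  rintro (_ | x) (_ | y)
  · rfl
  · simp [hook, att_ns]
  · simp [hook, att_sn]
  · simp only [hook, Equiv.optionCongr_apply, Option.map_some, att_ss, pathM_apply,
      Fin.revPerm_apply, Fin.rev_inj, Fin.val_rev]
    have := x.2; have := y.2
    split_ifs <;> first | rfl | omega

/-- Attaching a vertex with label `3` to the first vertex of the path lengthens the path. -/
lemma hook_first (n : ℕ) (i : Fin (n + 1)) (k : ℕ) :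
    CIso (att (hook (n + 1) i k) (some 0) 3) (hook (n + 2) i.succ k) := by
  refine (hook2_rev _ _ _ _).trans ?_
  rw [Fin.rev_zero]
  refine (hook_last _ _ _).trans ?_
  have := hook_rev (n + 2) i.rev.castSucc k
  rwa [Fin.rev_castSucc, Fin.rev_rev] at this

end CoxRep

/-! ### Classification of the positive definite diagrams -/

namespace CoxRep

set_option linter.unusedSectionVars false
set_option linter.unusedSimpArgs false

/-- The diagram of type `F_4`. -/
def matF : CoxeterMatrix (Option (Option (Fin 2))) := att (hook 2 0 4) none 3

/-- The parameters for which `hook n i k` is a diagram of type `B`, `D`, `E`, `H` or `I₂`. Types `A`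
and `F₄` are treated separately. -/
def Good (n i k : ℕ) : Prop :=
  (i = 0 ∧ k = 4 ∧ 1 ≤ n) ∨ (i = 1 ∧ k = 3 ∧ 3 ≤ n) ∨ (i = 2 ∧ k = 3 ∧ 5 ≤ n ∧ n ≤ 7) ∨
    (i = 0 ∧ k = 5 ∧ 2 ≤ n ∧ n ≤ 3) ∨ (i = 0 ∧ n = 1 ∧ 5 ≤ k)

/-- Normal forms of the connected diagrams of finite type: `path` is type `A`, `exc` is type `F₄`, and
`hook` comprises the remaining types. -/
inductive NF {X : Type*} (c : CoxeterMatrix X) : Prop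
  | path (n : ℕ) (hn : 1 ≤ n) (h : CIso c (pathM n))
  | hook (n k : ℕ) (i : Fin n) (h : CIso c (hook n i k)) (hg : Good n i k)
  | exc (h : CIso c matF)

lemma NF.iso {X Y : Type*} {c : CoxeterMatrix X} {c' : CoxeterMatrix Y} (hi : CIso c c')
    (h : NF c) : NF c' := by
  cases h with
  | path n hn h => exact .path n hn (hi.symm.trans h)
  | hook n k i h hg => exact .hook n k i (hi.symm.trans h) hg
  | exc h => exact .exc (hi.symm.trans h)

/-- A positive definite path with one attached vertex has a normal form; the attaching vertex is taken
in the first half of the path. -/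
lemma nf_hook_aux {n : ℕ} {i : Fin n} {k : ℕ} (hk : 3 ≤ k) (h : PD (hook n i k))
    (hle : 2 * i.val + 1 ≤ n) : NF (hook n i k) := by
  have hb := hook_bound hk h
  have hi := i.2
  have hsplit : i.val = 0 ∨ 1 ≤ i.val := by omega
  -- `a ≤ b` are the numbers of vertices on the two sides of `i`, counting `i` in both
  obtain ⟨a, b, ha, hb2, hab⟩ : ∃ a b : ℝ, a = i.val + 1 ∧ b = n - i.val ∧ a ≤ b := by
    refine ⟨_, _, rfl, rfl, ?_⟩
    have : (2 * i.val + 1 : ℝ) ≤ n := by exact_mod_cast hle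
    linarith
  have hN : (n : ℝ) + 1 = a + b := by rw [ha, hb2]; ring
  rw [← ha, ← hb2, hN] at hb
  have ha1 : 1 ≤ a := by rw [ha]; have : (0:ℝ) ≤ i.val := by positivity
                         linarith
  have hab0 : 0 ≤ a * b := by nlinarith
  rcases Nat.lt_or_ge 3 k with hk4 | hk3
  · -- a label at least `4` forces an end vertex
    have h0 : i.val = 0 := by
      by_contra hne
      have : (1:ℝ) ≤ i.val := by exact_mod_cast Nat.one_le_iff_ne_zero.mpr hne
      have := kk_sq_four hk4
      nlinarith
    have ha' : a = 1 := by rw [ha, h0]; simp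
    have hb' : b = n := by rw [hb2, h0]; simp
    rw [ha', hb', one_mul] at hb
    have hn : (1:ℝ) ≤ n := by exact_mod_cast (show 1 ≤ n by omega)
    refine .hook n k i (.rfl' _) ?_
    rcases Nat.lt_or_ge 4 k with hk5 | hk5
    · rcases Nat.lt_or_ge 5 k with hk6 | hk6
      · have := kk_sq_six hk6
        have h1 : (n:ℝ) < 2 := by nlinarith
        have h2 : n < 2 := by exact_mod_cast h1
        unfold Good; omega
      · have := kk_sq_five hk5
        have h1 : (n:ℝ) < 4 := by nlinarith
        have h2 : n < 4 := by exact_mod_cast h1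
        unfold Good; omega
    · unfold Good; omega
  · have hk' : k = 3 := by omega
    subst hk'
    rw [kk_three] at hb
    have h3 : i.val < 3 := by
      by_contra hne
      have : (3:ℝ) ≤ i.val := by exact_mod_cast (show 3 ≤ i.val by omega)
      nlinarith
    rcases Nat.lt_or_ge i.val 1 with h0 | h0
    · obtain ⟨m, rfl⟩ : ∃ m, n = m + 1 := ⟨n - 1, by omega⟩
      have : i = 0 := Fin.ext (by rw [Fin.val_zero]; omega)
      subst this
      refine .path (m + 2) (by omega) ((hook_rev _ _ _).trans ?_)
      rw [Fin.rev_zero]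
      exact path_app m
    · refine .hook n 3 i (.rfl' _) ?_
      rcases Nat.lt_or_ge i.val 2 with h2 | h2
      · unfold Good; omega
      · have hi2 : i.val = 2 := by omega
        have ha' : a = 3 := by rw [ha, hi2]; norm_num
        have hb' : b = n - 2 := by rw [hb2, hi2]; norm_num
        rw [ha', hb'] at hb
        have h1 : (n:ℝ) < 8 := by linarith
        have h2 : n < 8 := by exact_mod_cast h1
        unfold Good; omega

lemma nf_hook {n : ℕ} {i : Fin n} {k : ℕ} (hk : 3 ≤ k) (h : PD (hook n i k)) :
    NF (hook n i k) := by
  rcases Nat.lt_or_ge n (2 * i.val + 1) with h1 | h1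
  · have := hook_rev n i k
    refine NF.iso this.symm (nf_hook_aux hk (h.iso this) ?_)
    rw [Fin.val_rev]; have := i.2; omega
  · exact nf_hook_aux hk h h1

/-- A label at least `4` at one end only allows an edge with label `3` at the other end. -/
lemma two_leaf_end {n : ℕ} {i j : Fin n} {k k' : ℕ} (hi : i.val = 0) (hk : 4 ≤ k) (hk' : 3 ≤ k')
    (h : PD (att (hook n i k) (some j) k')) : j.val + 1 = n ∧ k' = 3 := by
  have hj := j.2
  have b1 := two_leaf_bound (by omega) hk' h 1 2 (n - j.val) 1
    (by linarith [kk_sq_four hk]) (by linarith [kk_sq_three hk'])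
    (by have : (j.val:ℝ) < n := by exact_mod_cast hj
        linarith)
  have e1 : FF n (i.val + 1) (i.val + 1) = n := by
    simp only [FF, hi]; simp
  have e2 : FF n (i.val + 1) (j.val + 1) = n - j.val := by
    rw [FF_comm]
    simp only [FF, hi]; rw [if_pos (by omega)]; push_cast; ring
  have e3 : FF n (j.val + 1) (j.val + 1) = (j.val + 1) * (n - j.val) := by
    simp only [FF]; rw [if_pos le_rfl]; push_cast; ring
  rw [e1, e2, e3] at b1
  have hn : (0:ℝ) < n + 1 := by positivity
  have h1 : (n:ℝ) < j.val + 2 := by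
    have : 0 < ((n:ℝ) + 1) * (j.val + 2 - n) := by nlinarith
    have := pos_of_mul_pos_right this hn.le
    linarith
  have h2 : n < j.val + 2 := by exact_mod_cast h1
  have hjn : j.val + 1 = n := by omega
  refine ⟨hjn, ?_⟩
  by_contra hne
  have b2 := two_leaf_bound (by omega) hk' h 1 1 1 1
    (by linarith [kk_sq_four hk]) (by linarith [kk_sq_four (show 4 ≤ k' by omega)]) one_ne_zero
  rw [e1, e2, e3] at b2
  have : (n:ℝ) = j.val + 1 := by exact_mod_cast hjn.symm
  rw [this] at b2
  linarith

lemma two_leaf_end_last {n : ℕ} {i j : Fin n} {k k' : ℕ} (hi : i.val + 1 = n) (hk : 4 ≤ k)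
    (hk' : 3 ≤ k') (h : PD (att (hook n i k) (some j) k')) : j.val = 0 ∧ k' = 3 := by
  have := two_leaf_end (by rw [Fin.val_rev]; omega) hk hk' (h.iso (hook2_rev _ _ _ _))
  rw [Fin.val_rev] at this
  have := j.2
  omega

/-- Two end vertices cannot both be attached to interior vertices of a path. -/
lemma two_leaf_inner {n : ℕ} {i j : Fin n} {k k' : ℕ} (hk : 3 ≤ k) (hk' : 3 ≤ k')
    (hi : 1 ≤ i.val) (hj' : j.val + 2 ≤ n) (hij : i.val ≤ j.val)
    (h : PD (att (hook n i k) (some j) k')) : False := by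
  have b1 := two_leaf_bound hk hk' h 2 2 1 1
    (by linarith [kk_sq_three hk]) (by linarith [kk_sq_three hk']) one_ne_zero
  have e1 : FF n (i.val + 1) (i.val + 1) = (i.val + 1) * (n - i.val) := by
    simp only [FF]; rw [if_pos le_rfl]; push_cast; ring
  have e2 : FF n (i.val + 1) (j.val + 1) = (i.val + 1) * (n - j.val) := by
    rw [FF_comm]
    simp only [FF]; rw [if_pos (by omega)]; push_cast; ring
  have e3 : FF n (j.val + 1) (j.val + 1) = (j.val + 1) * (n - j.val) := by
    simp only [FF]; rw [if_pos le_rfl]; push_cast; ring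
  rw [e1, e2, e3] at b1
  obtain ⟨p, hp⟩ : ∃ p : ℕ, i.val = p + 1 := ⟨i.val - 1, by omega⟩
  obtain ⟨q, hq⟩ : ∃ q : ℕ, j.val = p + 1 + q := ⟨j.val - (p + 1), by omega⟩
  obtain ⟨r, hr⟩ : ∃ r : ℕ, n = p + q + 3 + r := ⟨n - (p + q + 3), by omega⟩
  rw [hp, hq, hr] at b1
  push_cast at b1
  have hp0 : (0:ℝ) ≤ p := by positivity
  have hq0 : (0:ℝ) ≤ q := by positivity
  have hr0 : (0:ℝ) ≤ r := by positivity
  nlinarith [mul_nonneg hp0 hq0, mul_nonneg hp0 hr0, mul_nonneg hq0 hr0]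

lemma two_leaf_inner' {n : ℕ} {i j : Fin n} {k k' : ℕ} (hk : 3 ≤ k) (hk' : 3 ≤ k')
    (hi : 1 ≤ i.val) (hi' : i.val + 2 ≤ n)
    (h : PD (att (hook n i k) (some j) k')) : j.val = 0 ∨ j.val + 1 = n := by
  by_contra hcon
  have := j.2
  rcases le_total i.val j.val with hij | hij
  · exact two_leaf_inner hk hk' hi (by omega) hij h
  · exact two_leaf_inner hk' hk (by omega) hi' hij (h.iso (att_swap _ _ _ _ _))

/-- A second end vertex attached to a path either extends the path or is impossible. -/
lemma nf_two_leaf {n : ℕ} {i j : Fin n} {k k' : ℕ} (hk : 3 ≤ k) (hk' : 3 ≤ k')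
    (hi : (i.val = 0 ∧ 4 ≤ k) ∨ (1 ≤ i.val ∧ i.val + 2 ≤ n))
    (h : PD (att (hook n i k) (some j) k')) : NF (att (hook n i k) (some j) k') := by
  have hin := i.2
  have hend : (j.val = 0 ∨ j.val + 1 = n) ∧ k' = 3 := by
    rcases hi with ⟨h0, h4⟩ | ⟨h0, h2⟩
    · have := two_leaf_end h0 h4 hk' h
      omega
    · have hj := two_leaf_inner' hk hk' h0 h2 h
      refine ⟨hj, ?_⟩
      by_contra hne
      have hs := h.iso (att_swap _ _ _ _ _)
      rcases hj with hj | hj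
      · have := two_leaf_end hj (by omega) hk hs
        omega
      · have := two_leaf_end_last hj (by omega) hk hs
        omega
  obtain ⟨hj, rfl⟩ := hend
  obtain ⟨m, rfl⟩ : ∃ m, n = m + 1 := ⟨n - 1, by omega⟩
  rcases hj with hj | hj
  · have : j = 0 := Fin.ext hj
    subst this
    have hiso := hook_first m i k
    exact NF.iso hiso.symm (nf_hook hk (h.iso hiso))
  · have : j = Fin.last m := Fin.ext (by simp; omega)
    subst this
    have hiso := hook_last m i k
    exact NF.iso hiso.symm (nf_hook hk (h.iso hiso))

/-- The symmetry of `hook n i k` exchanging the attached vertex with the first vertex of the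
path, in the cases `n = 1` and `i = 1`, `k = 3`. -/
lemma hook_flip {n : ℕ} [NeZero n] {i : Fin n} {k : ℕ} (h : n = 1 ∨ (i.val = 1 ∧ k = 3)) (k' : ℕ) :
    CIso (att (hook n i k) none k') (att (hook n i k) (some 0) k') := by
  have := att_congr (c := hook n i k) (c' := hook n i k) (Equiv.swap none (some 0)) ?_ none k'
  · simpa using this
  have h1 : ∀ x : Fin n, x ≠ 0 → Equiv.swap none (some 0) (some x) = some x := fun x hx =>
    Equiv.swap_apply_of_ne_of_ne (by simp) (by simpa using hx)
  have hi := i.2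
  have key : ∀ y : Fin n, y ≠ 0 → (pathM n).M 0 y = if y = i then max k 2 else 2 := by
    intro y hy
    have hy' : y.val ≠ 0 := fun e => hy (Fin.ext (by simpa using e))
    rw [pathM_apply, if_neg (Ne.symm hy)]
    have := y.2
    rcases h with h | ⟨h, h3⟩
    · omega
    · have z : (0 : Fin n).val = 0 := by simp
      simp only [h3, Fin.ext_iff, h]
      split_ifs <;> omega
  have e0 : Equiv.swap (none : Option (Fin n)) (some 0) none = some 0 := Equiv.swap_apply_left _ _
  have e1 : Equiv.swap (none : Option (Fin n)) (some 0) (some 0) = none := Equiv.swap_apply_right _ _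
  rintro (_ | x) (_ | y)
  · rw [e0, hook, att_ss, (pathM n).diagonal]; rfl
  · by_cases hy : y = 0
    · subst hy; rw [e0, e1, (hook n i k).symmetric]
    · rw [e0, h1 y hy, hook, att_ss, att_ns, key y hy]
  · by_cases hx : x = 0
    · subst hx; rw [e0, e1, (hook n i k).symmetric]
    · rw [e0, h1 x hx, hook, att_ss, att_sn, (pathM n).symmetric, key x hx]
  · by_cases hx : x = 0 <;> by_cases hy : y = 0
    · subst hx hy; rw [e1, hook, att_nn, att_ss, (pathM n).diagonal]
    · subst hx; rw [e1, h1 y hy, hook, att_ns, att_ss, key y hy]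
    · subst hy; rw [e1, h1 x hx, hook, att_sn, att_ss, (pathM n).symmetric, key x hx]
    · rw [h1 x hx, h1 y hy]

/-- A vertex attached to the end of the branch of a normal form. -/
lemma nf_chain {n : ℕ} {i : Fin n} {k k' : ℕ} (hk : 3 ≤ k) (hk' : 3 ≤ k') (hg : Good n i k)
    (h : PD (att (hook n i k) none k')) : NF (att (hook n i k) none k') := by
  have hi := i.2
  have : NeZero n := ⟨by omega⟩
  by_cases hf : n = 1 ∨ (i.val = 1 ∧ k = 3)
  · have hiso := hook_flip hf k'
    refine NF.iso hiso.symm (nf_two_leaf hk hk' ?_ (h.iso hiso))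
    unfold Good at hg; omega
  have hb := chain_bound hk hk' h
  have hn2 : 2 ≤ n := by omega
  have hn2' : (2:ℝ) ≤ n := by exact_mod_cast hn2
  have h3 := kk_sq_three hk'
  by_cases h0 : i.val = 0
  · rw [h0] at hb
    push_cast at hb
    have h4 : 4 ≤ k := by unfold Good at hg; omega
    by_cases h5 : 5 ≤ k
    · have := kk_sq_five h5
      nlinarith
    · have hk4 : k = 4 := by omega
      subst hk4
      have hn3 : (n:ℝ) < 3 := by
        have := kk_sq_four (le_refl 4)
        nlinarith
      have hn3' : n < 3 := by exact_mod_cast hn3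
      have : n = 2 := by omega
      subst this
      have hi0 : i = 0 := Fin.ext h0
      subst hi0
      have : k' = 3 := by
        by_contra hne
        have := kk_sq_four (show 4 ≤ k' by omega)
        have := kk_sq_four (le_refl 4)
        push_cast at hb
        nlinarith
      subst this
      exact .exc (.rfl' _)
  · have hk3 : k = 3 := by unfold Good at hg; omega
    have hi2 : i.val = 2 := by unfold Good at hg; omega
    have hn5 : 5 ≤ n := by unfold Good at hg; omega
    have hn5' : (5:ℝ) ≤ n := by exact_mod_cast hn5
    rw [hk3, hi2, kk_three] at hb
    push_cast at hb
    nlinarith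

/-- The diagram of type `F₄` cannot be extended. -/
lemma nf_exc {x : Option (Option (Fin 2))} {k : ℕ} (hk : 3 ≤ k) (h : PD (att matF x k)) :
    False := by
  have hkk : kk k ≤ -1 := by
    have := kk_anti (by norm_num) hk; rwa [kk_three] at this
  have h2 : √2 ^ 2 = 2 := Real.sq_sqrt (by norm_num)
  have key : ∀ a b c d e : ℝ, e ≠ 0 →
      0 < 2 * a ^ 2 + 2 * b ^ 2 - 2 * a * b - 2 * √2 * b * c + 2 * c ^ 2 - 2 * c * d + 2 * d ^ 2 +
        2 * kk k * (match x with | none => d | some none => c | some (some t) => ![b, a] t) * e +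
        2 * e ^ 2 := by
    intro a b c d e he
    have := h (fun
      | none => e
      | some none => d
      | some (some none) => c
      | some (some (some t)) => ![b, a] t) (fun h0 => he (by have := congrFun h0 none; simpa using this))
    have hm : max k 2 = k := by omega
    rw [gf_att, matF, gf_att, hook, gf_att, hm] at this
    simp [gf, kv_apply, Fin.sum_univ_two, pathM_apply, kk_one, kk_three, kk_four] at this
    rcases x with _ | _ | t
    · simp at this ⊢; nlinarith
    · simp at this ⊢; nlinarith
    · fin_cases t <;> simp at this ⊢ <;> nlinarith
  rcases x with _ | _ | t
  · have := key (√2) (2 * √2) 3 2 1 one_ne_zero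
    simp at this; nlinarith
  · have := key 0 (√2) 2 1 1 one_ne_zero
    simp at this; nlinarith
  · fin_cases t
    · have := key 1 2 (√2) 0 1 one_ne_zero
      simp at this; nlinarith
    · have := key 2 3 (2 * √2) (√2) 1 one_ne_zero
      simp at this; nlinarith

/-- A positive definite diagram obtained from a normal form by attaching a vertex has a normal form. -/
lemma nf_att {X : Type*} [Fintype X] [DecidableEq X] {c : CoxeterMatrix X} {i : X} {k : ℕ}
    (hc : NF c) (hk : 3 ≤ k) (h : PD (att c i k)) : NF (att c i k) := by
  cases hc with
  | path n hn hi =>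
    obtain ⟨e, he⟩ := hi
    have hiso := att_congr e he i k
    exact NF.iso hiso.symm (nf_hook hk (h.iso hiso))
  | hook n k' j hi hg =>
    obtain ⟨e, he⟩ := hi
    have hiso := att_congr e he i k
    refine NF.iso hiso.symm ?_
    replace h := h.iso hiso
    have hk' : 3 ≤ k' := by unfold Good at hg; omega
    generalize e i = x at *
    rcases x with _ | x
    · exact nf_chain hk' hk hg h
    · by_cases hf : (j.val = 0 ∧ 4 ≤ k') ∨ (1 ≤ j.val ∧ j.val + 2 ≤ n)
      · exact nf_two_leaf hk' hk hf h
      · unfold Good at hg; omega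
  | exc hi =>
    obtain ⟨e, he⟩ := hi
    exact (nf_exc hk (h.iso (att_congr e he i k))).elim

/-- Classification of the connected positive definite diagrams. -/
theorem classification {X : Type*} [Fintype X] [DecidableEq X] [Nonempty X] (c : CoxeterMatrix X)
    (h : PD c) (hc : Conn c Set.univ) : NF c := by
  refine diagram_induction (fun Y _ _ c => NF c) ?_ ?_ ?_ X c h hc
  · intro Y _ _ _ c
    refine .path 1 le_rfl ⟨Equiv.ofUnique Y (Fin 1), fun x y => ?_⟩
    rw [Subsingleton.elim x y, c.diagonal, (pathM 1).diagonal]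
  · intro Y _ _ c i k h1 h2 h3
    exact nf_att h1 h2 h3
  · intro Y Z _ _ _ _ c c' hi h
    exact NF.iso hi h

end CoxRep

/-! ### Orders of the groups of types A, B and D -/

namespace CoxRep

set_option linter.unusedSectionVars false
set_option linter.unusedSimpArgs false

/-- Indicator with values in `ℝ`. -/
noncomputable def ind (a b : ℕ) : ℝ := if a = b then 1 else 0

lemma ind_self (a : ℕ) : ind a a = 1 := if_pos rfl
lemma ind_ne {a b : ℕ} (h : a ≠ b) : ind a b = 0 := if_neg h
lemma ind_nonneg (a b : ℕ) : 0 ≤ ind a b := by unfold ind; split_ifs <;> norm_num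
lemma ind_succ (a b : ℕ) : ind (a + 1) (b + 1) = ind a b := by simp [ind]

lemma kk_path {n : ℕ} (s t : Fin n) : kk ((pathM n).M s t) =
    2 * ind s.val t.val - ind (s.val + 1) t.val - ind s.val (t.val + 1) := by
  simp only [pathM_apply, Fin.ext_iff, ind]
  split_ifs <;> first | omega | norm_num [kk_one, kk_two, kk_three]

lemma succ_embeds (n : ℕ) (x y : Fin n) :
    (pathM (n + 1)).M x.succ y.succ = (pathM n).M x y := by
  simp [pathM_apply, Fin.ext_iff]

lemma castSucc_embeds (n : ℕ) (x y : Fin n) :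
    (pathM (n + 1)).M x.castSucc y.castSucc = (pathM n).M x y := by
  simp [pathM_apply, Fin.ext_iff]

/-- The orbit of the first fundamental weight consists of the `n + 2` weights of the natural
representation. -/
lemma card_path_step (n : ℕ) [Finite (pathM (n + 1)).Group] :
    Nat.card (pathM (n + 1)).Group = (n + 2) * Nat.card (pathM n).Group := by
  have := card_orbit (pathM (n + 1)) (pathM n) 0 (Fin.succ_injective n) (succ_embeds n)
    (fun s => by simp [Fin.exists_succ_eq])
    (ι := Fin (n + 2)) (fun s t => kk ((pathM (n + 1)).M s t)) (fun _ => 1) (fun _ => one_pos)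
    (fun _ _ => rfl) (fun i t => ind i.val t.val - ind i.val (t.val + 1)) ?_ ?_ 0 ?_ ?_ ?_
  · simpa using this
  · intro i j hij
    by_contra hne
    have hne' : i.val ≠ j.val := fun e => hne (Fin.ext e)
    -- the larger of the two indices is `t + 1` for some `t`
    wlog hlt : i.val < j.val generalizing i j
    · exact this hij.symm (Ne.symm hne) hne'.symm (by omega)
    have hj := j.2
    have := congrFun hij ⟨j.val - 1, by omega⟩
    simp only at this
    rw [Nat.sub_add_cancel (by omega), ind_self, ind_ne (by omega : i.val ≠ j.val),
      ind_ne (by omega : j.val ≠ j.val - 1)] at this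
    have := ind_nonneg i.val (j.val - 1)
    linarith
  · intro i s
    have hs := s.2
    by_cases h1 : i.val = s.val
    · refine ⟨s.succ, fun t => ?_⟩
      simp only [kk_path, h1, Fin.val_succ, ind_succ, ind_self, ind_ne (show s.val ≠ s.val + 1 by omega)]
      ring
    by_cases h2 : i.val = s.val + 1
    · refine ⟨s.castSucc, fun t => ?_⟩
      simp only [kk_path, h2, Fin.val_castSucc, ind_succ, ind_self, ind_ne (show s.val + 1 ≠ s.val by omega)]
      ring
    · refine ⟨i, fun t => ?_⟩
      simp only [ind_ne h1, ind_ne h2]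
      ring
  · intro i hi
    by_contra hne
    have h0 : i.val ≠ 0 := fun e => hne (Fin.ext e)
    have hi2 := i.2
    have := hi ⟨i.val - 1, by omega⟩
    simp only at this
    rw [Nat.sub_add_cancel (by omega), ind_self, ind_ne (by omega : i.val ≠ i.val - 1)] at this
    linarith
  · simp [ind]
  · intro t ht
    have : t.val ≠ 0 := fun e => ht (Fin.ext (by simpa using e))
    simp [ind, this, eq_comm]

/-- The group of type `A_n` has order `(n + 1)!`. -/
theorem card_path (n : ℕ) (hfin : Finite (pathM n).Group) :
    Nat.card (pathM n).Group = (n + 1).factorial := by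
  induction n with
  | zero =>
    have : Subsingleton (pathM 0).Group := by
      refine ⟨fun a b => ?_⟩
      have key : ∀ a : (pathM 0).Group, a = 1 := by
        intro a
        induction a using (pathM 0).toCoxeterSystem.simple_induction_left with
        | one => rfl
        | mul_simple_left w s => exact s.elim0
      rw [key a, key b]
    rw [Nat.card_unique]; rfl
  | succ n ih =>
    have := hfin
    have := finite_emb (pathM (n + 1)) (pathM n) (Fin.succ_injective n) (succ_embeds n)
    rw [card_path_step, ih this, Nat.factorial_succ (n + 1)]

/-- Values of the signed coordinate functionals `± e_m`. -/
noncomputable def ev (b : Bool) (m k : ℕ) : ℝ := (if b then 1 else -1) * ind m k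

lemma ev_inj {n : ℕ} {p q : Bool × Fin (n + 1)}
    (h0 : ev p.1 p.2.val 0 = ev q.1 q.2.val 0)
    (hs : ∀ t : Fin n, ev p.1 p.2.val (t.val + 1) - ev p.1 p.2.val t.val =
      ev q.1 q.2.val (t.val + 1) - ev q.1 q.2.val t.val) : p = q := by
  have key : ∀ k ≤ n, ev p.1 p.2.val k = ev q.1 q.2.val k := by
    intro k
    induction k with
    | zero => intro _; exact h0
    | succ k ih =>
      intro hk
      have h1 := ih (by omega)
      have h2 := hs ⟨k, by omega⟩
      simp only at h2
      linarith
  have := key p.2.val (by have := p.2.2; omega)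
  obtain ⟨b, m⟩ := p
  obtain ⟨b', m'⟩ := q
  simp only [ev, ind_self] at this
  by_cases hm : m'.val = m.val
  · rw [hm, ind_self] at this
    have : m' = m := Fin.ext hm
    subst this
    cases b <;> cases b' <;> first | rfl | (norm_num at this)
  · rw [ind_ne hm] at this
    cases b <;> cases b' <;> norm_num at this

/-- The action of the path generators on the functionals `± e_m`. -/
lemma ev_path {n : ℕ} (p : Bool × Fin (n + 1)) (s : Fin n) :
    ∃ q : Bool × Fin (n + 1), ∀ k : ℕ, ev q.1 q.2.val k = ev p.1 p.2.val k +
      (ind k s.val - ind k (s.val + 1)) * (ev p.1 p.2.val (s.val + 1) - ev p.1 p.2.val s.val) := by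
  obtain ⟨b, m⟩ := p
  have hc : ∀ a b, ind a b = ind b a := fun a b => by simp [ind, eq_comm]
  by_cases h1 : m.val = s.val
  · refine ⟨(b, s.succ), fun k => ?_⟩
    simp only [ev, h1, Fin.val_succ, ind_self, ind_ne (show s.val ≠ s.val + 1 by omega), hc k]
    ring
  by_cases h2 : m.val = s.val + 1
  · refine ⟨(b, s.castSucc), fun k => ?_⟩
    simp only [ev, h2, Fin.val_castSucc, ind_self, ind_ne (show s.val + 1 ≠ s.val by omega), hc k]
    ring
  · refine ⟨(b, m), fun k => ?_⟩
    simp only [ev, ind_ne h1, ind_ne h2]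
    ring

/-- The only dominant one among the functionals `± e_m` is `e_n`. -/
lemma ev_dom {n : ℕ} {p : Bool × Fin (n + 1)}
    (h : ∀ t : Fin n, 0 ≤ ev p.1 p.2.val (t.val + 1) - ev p.1 p.2.val t.val)
    (h0 : ev p.1 p.2.val 0 < 0 → False) : p = (true, Fin.last n) := by
  obtain ⟨b, m⟩ := p
  have hm := m.2
  cases b
  · exfalso
    by_cases hm0 : m.val = 0
    · apply h0; simp [ev, hm0, ind_self]
    · have := h ⟨m.val - 1, by omega⟩
      simp only [ev] at this
      rw [Nat.sub_add_cancel (by omega), ind_self, ind_ne (by omega : m.val ≠ m.val - 1)] at this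
      norm_num at this
  · by_cases hl : m.val = n
    · have : m = Fin.last n := Fin.ext hl
      rw [this]
    · exfalso
      have := h ⟨m.val, by omega⟩
      simp only [ev] at this
      rw [ind_self, ind_ne (by omega : m.val ≠ m.val + 1)] at this
      norm_num at this

/-- Removing the far end vertex from a diagram of type `B`. -/
lemma card_B_step (n : ℕ) [Finite (hook (n + 1) 0 4).Group] {Y : Type*} [Fintype Y] [DecidableEq Y]
    (c' : CoxeterMatrix Y) {f : Y → Option (Fin (n + 1))} (hf : Function.Injective f)
    (h : ∀ x y, (hook (n + 1) 0 4).M (f x) (f y) = c'.M x y)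
    (hr : ∀ s, s ≠ some (Fin.last n) ↔ s ∈ Set.range f) :
    Nat.card (hook (n + 1) 0 4).Group = (2 * (n + 2)) * Nat.card c'.Group := by
  have h2 : √2 * √2 = 2 := Real.mul_self_sqrt (by norm_num)
  have hl : ∀ t : Fin (n+1), kk ((hook (n + 1) 0 4).M none (some t)) = - √2 * ind t.val 0 := by
    intro t
    rw [hook, att_ns]; simp only [Fin.ext_iff, Fin.val_zero, ind]
    split_ifs <;> simp [kk_four, kk_two]
  have := card_orbit (hook (n + 1) 0 4) c' (some (Fin.last n)) hf h hr
    (ι := Bool × Fin (n + 2))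
    (fun s t => match s, t with
      | some s, some t => kk ((pathM (n + 1)).M s t)
      | none, some t => -2 * ind t.val 0
      | some s, none => - ind s.val 0
      | none, none => 2)
    (fun | none => √2 | some _ => 1) (by rintro (_ | s) <;> simp) ?_
    (fun p s => match s with
      | none => ev p.1 p.2.val 0
      | some t => ev p.1 p.2.val (t.val + 1) - ev p.1 p.2.val t.val) ?_ ?_
    (true, Fin.last (n + 1)) ?_ ?_ ?_
  · rw [this]; simp
  · rintro (_ | s) (_ | t)
    · rw [hook, att_nn, kk_one]
    · rw [hl]; linear_combination (- ind t.val 0) * h2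
    · rw [(hook _ _ _).symmetric, hl]; ring
    · rfl
  · intro p q hpq
    exact ev_inj (congrFun hpq none) fun t => congrFun hpq (some t)
  · rintro p (_ | s)
    · refine ⟨(if p.2.val = 0 then !p.1 else p.1, p.2), ?_⟩
      by_cases hp : p.2.val = 0
      · simp only [hp, if_true]
        obtain ⟨b, m⟩ := p
        rintro (_ | t)
        · cases b <;> simp [ev, ind_self] <;> norm_num
        · have : ind t.val 0 = ind 0 t.val := by simp [ind, eq_comm]
          cases b <;> simp [ev, ind_self, this, ind_ne (show 0 ≠ t.val + 1 by omega)] <;> ring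
      · simp only [hp, if_false]
        rintro (_ | t) <;> simp [ev, ind_ne hp]
    · obtain ⟨q, hq⟩ := ev_path p s
      refine ⟨q, ?_⟩
      rintro (_ | t)
      · simp only
        rw [hq, ind_ne (show 0 ≠ s.val + 1 by omega), show ind 0 s.val = ind s.val 0 by simp [ind, eq_comm]]
        try ring
      · simp only
        rw [hq, hq, kk_path, ind_succ]
        have e1 : ind (t.val + 1) s.val = ind s.val (t.val + 1) := by simp [ind, eq_comm]
        have e2 : ind t.val s.val = ind s.val t.val := by simp [ind, eq_comm]
        have e3 : ind t.val (s.val + 1) = ind (s.val + 1) t.val := by simp [ind, eq_comm]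
        rw [e1, e2, e3]
        ring
  · intro p hp
    exact ev_dom (fun t => hp (some t)) fun h => absurd (hp none) (not_le.mpr h)
  · simp [ev, ind]
  · rintro (_ | t) ht
    · simp [ev, ind]
    · have ht' : t.val ≠ n := fun e => ht (by rw [Option.some_inj]; exact Fin.ext e)
      have := t.2
      simp only [ev, Fin.val_last]
      rw [ind_ne (by omega), ind_ne (by omega)]; simp

lemma map_castSucc_range (n : ℕ) (s : Option (Fin (n + 1))) :
    s ≠ some (Fin.last n) ↔ s ∈ Set.range (Option.map (Fin.castSucc (n := n))) := by
  rcases s with _ | s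
  · simp
  · constructor
    · intro h
      have hs : s.val ≠ n := fun e => h (by rw [Option.some_inj]; exact Fin.ext e)
      exact ⟨some ⟨s.val, by have := s.2; omega⟩, rfl⟩
    · rintro ⟨_ | t, ht⟩ h
      · simp at ht
      · rw [← ht] at h
        simp only [Option.map_some, Option.some_inj, Fin.ext_iff, Fin.val_castSucc, Fin.val_last] at h
        have := t.2; omega

lemma map_castSucc_embeds (n : ℕ) (i : Fin n) (k : ℕ) (x y : Option (Fin n)) :
    (hook (n + 1) i.castSucc k).M (x.map Fin.castSucc) (y.map Fin.castSucc) =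
      (hook n i k).M x y := by
  rcases x with _ | x <;> rcases y with _ | y
  · rfl
  · simp [hook, att_ns]
  · simp [hook, att_sn]
  · exact castSucc_embeds n x y

/-- The group of type `B_{n+2}` has order `2^(n+2) (n+2)!`. -/
theorem card_B (n : ℕ) (hfin : Finite (hook (n + 1) 0 4).Group) :
    Nat.card (hook (n + 1) 0 4).Group = 2 ^ (n + 2) * (n + 2).factorial := by
  induction n with
  | zero =>
    have hM : ∀ x y : Fin 1, (hook 1 0 4).M ((fun _ => none : Fin 1 → Option (Fin 1)) x)
        ((fun _ => none : Fin 1 → Option (Fin 1)) y) = (pathM 1).M x y := fun x y => by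
      fin_cases x; fin_cases y; rfl
    have hinj : Function.Injective (fun _ => none : Fin 1 → Option (Fin 1)) := by decide
    have : Finite (hook 1 0 4).Group := hfin
    have := finite_emb (hook 1 0 4) (pathM 1) hinj hM
    rw [card_B_step 0 (pathM 1) hinj hM (by decide), card_path _ this]; decide
  | succ n ih =>
    have hM := map_castSucc_embeds (n + 1) 0 4
    have hinj := Option.map_injective (Fin.castSucc_injective (n + 1))
    have : Finite (hook (n + 2) 0 4).Group := hfin
    have := finite_emb (hook (n + 2) 0 4) (hook (n + 1) 0 4) hinj hM
    rw [card_B_step (n + 1) (hook (n + 1) 0 4) hinj hM (map_castSucc_range (n + 1)), ih this,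
      Nat.factorial_succ (n + 2)]
    ring

/-- Removing the far end vertex from a diagram of type `D`. -/
lemma card_D_step (n : ℕ) [Finite (hook (n + 2) 1 3).Group] {Y : Type*} [Fintype Y] [DecidableEq Y]
    (c' : CoxeterMatrix Y) {f : Y → Option (Fin (n + 2))} (hf : Function.Injective f)
    (h : ∀ x y, (hook (n + 2) 1 3).M (f x) (f y) = c'.M x y)
    (hr : ∀ s, s ≠ some (Fin.last (n + 1)) ↔ s ∈ Set.range f) :
    Nat.card (hook (n + 2) 1 3).Group = (2 * (n + 3)) * Nat.card c'.Group := by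
  have hl : ∀ t : Fin (n+2), kk ((hook (n + 2) 1 3).M none (some t)) = - ind t.val 1 := by
    intro t
    rw [hook, att_ns]; simp only [Fin.ext_iff, Fin.val_one, ind]
    split_ifs <;> simp [kk_three, kk_two]
  have := card_orbit (hook (n + 2) 1 3) c' (some (Fin.last (n + 1))) hf h hr
    (ι := Bool × Fin (n + 3))
    (fun s t => kk ((hook (n + 2) 1 3).M s t)) (fun _ => 1) (fun _ => one_pos) (fun _ _ => rfl)
    (fun p s => match s with
      | none => ev p.1 p.2.val 0 + ev p.1 p.2.val 1
      | some t => ev p.1 p.2.val (t.val + 1) - ev p.1 p.2.val t.val) ?_ ?_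
    (true, Fin.last (n + 2)) ?_ ?_ ?_
  · rw [this]; simp
  · intro p q hpq
    refine ev_inj ?_ fun t => congrFun hpq (some t)
    have h1 := congrFun hpq none
    have h2 := congrFun hpq (some 0)
    simp only [Fin.val_zero, zero_add] at h1 h2
    linarith
  · rintro p (_ | s)
    · have hq : ∃ q : Bool × Fin (n + 3), ∀ k, ev q.1 q.2.val k = ev p.1 p.2.val k -
          (ind k 0 + ind k 1) * (ev p.1 p.2.val 0 + ev p.1 p.2.val 1) := by
        obtain ⟨b, m⟩ := p
        have hc : ∀ a b, ind a b = ind b a := fun a b => by simp [ind, eq_comm]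
        have e01 : ind 0 1 = 0 := ind_ne (by omega)
        have e10 : ind 1 0 = 0 := ind_ne (by omega)
        by_cases h0 : m.val = 0
        · refine ⟨(!b, 1), fun k => ?_⟩
          simp only [ev, h0, Fin.val_one, hc k, e01, ind_self]
          cases b <;> simp
        by_cases h1 : m.val = 1
        · refine ⟨(!b, 0), fun k => ?_⟩
          simp only [ev, h1, Fin.val_zero, hc k, e10, ind_self]
          cases b <;> simp
        · refine ⟨(b, m), fun k => ?_⟩
          simp only [ev, ind_ne h0, ind_ne h1]; ring
      obtain ⟨q, hq⟩ := hq
      refine ⟨q, ?_⟩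
      rintro (_ | t)
      · simp only
        rw [hq, hq, hook, att_nn, kk_one]
        simp [ind]; ring
      · simp only
        rw [hq, hq, hl, ind_ne (show t.val + 1 ≠ 0 by omega), show ind (t.val + 1) 1 = ind t.val 0 from ind_succ _ _]
        ring
    · obtain ⟨q, hq⟩ := ev_path p s
      refine ⟨q, ?_⟩
      rintro (_ | t)
      · simp only
        rw [hq, hq, (hook _ _ _).symmetric, hl, ind_ne (show 0 ≠ s.val + 1 by omega),
          show ind 1 (s.val + 1) = ind 0 s.val from ind_succ _ _,
          show ind 1 s.val = ind s.val 1 by simp [ind, eq_comm]]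
        ring
      · simp only
        rw [hq, hq, hook, att_ss, kk_path, ind_succ]
        have e1 : ind (t.val + 1) s.val = ind s.val (t.val + 1) := by simp [ind, eq_comm]
        have e2 : ind t.val s.val = ind s.val t.val := by simp [ind, eq_comm]
        have e3 : ind t.val (s.val + 1) = ind (s.val + 1) t.val := by simp [ind, eq_comm]
        rw [e1, e2, e3]
        ring
  · intro p hp
    refine ev_dom (fun t => hp (some t)) fun h => ?_
    have h1 := hp none
    have h2 : ev p.1 p.2.val 1 ≤ 0 := by
      unfold ev at h ⊢
      have := ind_nonneg p.2.val 0
      have := ind_nonneg p.2.val 1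
      cases hp1 : p.1 <;> simp only [hp1, if_true, if_false, Bool.false_eq_true] at h ⊢ <;> linarith
    simp only at h1
    linarith
  · simp [ev, ind]
  · rintro (_ | t) ht
    · simp [ev, ind]
    · have ht' : t.val ≠ n + 1 := fun e => ht (by rw [Option.some_inj]; exact Fin.ext e)
      have := t.2
      simp only [ev, Fin.val_last]
      rw [ind_ne (by omega), ind_ne (by omega)]; simp

/-- The group of type `D_{n+3}` has order `2^(n+2) (n+3)!`. -/
theorem card_D (n : ℕ) (hfin : Finite (hook (n + 2) 1 3).Group) :
    Nat.card (hook (n + 2) 1 3).Group = 2 ^ (n + 2) * (n + 3).factorial := by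
  induction n with
  | zero =>
    obtain ⟨e, he⟩ := path_app 1
    have hM : ∀ x y, (hook 2 1 3).M (e.symm x) (e.symm y) = (pathM 3).M x y := fun x y => by
      have := he (e.symm x) (e.symm y)
      rw [e.apply_symm_apply, e.apply_symm_apply] at this
      exact this.symm
    have : Finite (hook 2 1 3).Group := hfin
    have := finite_emb (hook 2 1 3) (pathM 3) e.symm.injective hM
    rw [card_iso (hook 2 1 3) (pathM 3) e.symm.bijective hM, card_path _ this]; decide
  | succ n ih =>
    have hM := map_castSucc_embeds (n + 2) 1 3
    have hinj := Option.map_injective (Fin.castSucc_injective (n + 2))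
    have : Finite (hook (n + 3) 1 3).Group := hfin
    have := finite_emb (hook (n + 3) 1 3) (hook (n + 2) 1 3) hinj hM
    rw [card_D_step (n + 1) (hook (n + 2) 1 3) hinj hM (map_castSucc_range (n + 2)), ih this,
      Nat.factorial_succ (n + 3)]
    ring

end CoxRep

/-! ### Orbits of fundamental weights over the golden integers -/

namespace CoxRep
set_option linter.unusedSectionVars false
set_option linter.unusedSimpArgs false

/-- Elements `a + b φ` of the ring of golden integers, as pairs `(a, b)`. -/
abbrev Zg := ℤ × ℤ

/-- The operation `a - c * b` on golden integers. -/
def Zg.op (a c b : Zg) : Zg :=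
  (a.1 - (c.1 * b.1 + c.2 * b.2), a.2 - (c.1 * b.2 + c.2 * b.1 + c.2 * b.2))

/-- A sufficient condition for a golden integer to be negative, from `1.6 < φ < 1.7`. -/
def Zg.neg (a : Zg) : Bool := 10 * a.1 + 16 * a.2 < 0 && 10 * a.1 + 17 * a.2 < 0

/-- The real value of a golden integer. -/
noncomputable def Zg.val (a : Zg) : ℝ := a.1 + a.2 * Real.goldenRatio

lemma Zg.val_op (a c b : Zg) : (Zg.op a c b).val = a.val - c.val * b.val := by
  have h := Real.goldenRatio_sq
  unfold Zg.op Zg.val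
  push_cast
  linear_combination (c.2 * b.2 : ℝ) * h

lemma Zg.val_inj {a b : Zg} (h : a.val = b.val) : a = b := by
  unfold Zg.val at h
  by_cases h2 : a.2 = b.2
  · rw [h2] at h
    have h1 : (a.1 : ℝ) = b.1 := by linarith
    exact Prod.ext (by exact_mod_cast h1) h2
  · exfalso
    have h3 : (a.2 - b.2 : ℝ) ≠ 0 := sub_ne_zero.mpr (by exact_mod_cast h2)
    apply Real.goldenRatio_irrational
    refine ⟨((b.1 - a.1 : ℤ) : ℚ) / ((a.2 - b.2 : ℤ) : ℚ), ?_⟩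
    push_cast
    rw [div_eq_iff h3]
    linarith

lemma Zg.val_neg {a : Zg} (h : a.neg = true) : a.val < 0 := by
  have h5 : √5 * √5 = 5 := Real.mul_self_sqrt (by norm_num)
  have h0 : 0 ≤ √5 := Real.sqrt_nonneg _
  have hlo : 16 ≤ 10 * Real.goldenRatio := by unfold Real.goldenRatio; nlinarith
  have hhi : 10 * Real.goldenRatio ≤ 17 := by unfold Real.goldenRatio; nlinarith
  simp only [Zg.neg, Bool.and_eq_true, decide_eq_true_eq] at h
  have h1 : 10 * (a.1 : ℝ) + 16 * a.2 < 0 := by exact_mod_cast h.1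
  have h2 : 10 * (a.1 : ℝ) + 17 * a.2 < 0 := by exact_mod_cast h.2
  unfold Zg.val
  rcases le_total (0 : ℝ) a.2 with hb | hb
  · nlinarith
  · nlinarith

lemma Zg.val_zero : Zg.val 0 = 0 := by simp [Zg.val]
lemma Zg.val_one : Zg.val (1, 0) = 1 := by simp [Zg.val]

/-- The numbers of a list are distinct. -/
def dist : List ℕ → Bool
  | [] => true
  | a :: l => l.all (fun b => !Nat.beq a b) && dist l

lemma dist_nodup : ∀ l : List ℕ, dist l = true → l.Nodup
  | [], _ => List.nodup_nil
  | a :: l, h => by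
    simp only [dist, Bool.and_eq_true, List.all_eq_true, Bool.not_eq_true'] at h
    refine List.nodup_cons.mpr ⟨fun ha => ?_, dist_nodup l h.2⟩
    have := h.1 a ha
    rw [Nat.beq_refl] at this
    exact absurd this (by decide)

section
variable {X : Type} [DecidableEq X] (els : List X) (pos : X → ℕ) (C : X → X → Zg)

/-- The coordinate of a weight, given by its list of coordinates. -/
def crd (y : List Zg) (s : X) : Zg := y.getD (pos s) 0

/-- The simple reflection `s` acting on a weight in the coordinates given by fundamental weights. -/
def reflW (y : List Zg) (s : X) : List Zg :=
  els.map fun t => Zg.op (crd pos y t) (C s t) (crd pos y s)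

/-- The levels of the orbit of the weights in `cur`, going down from dominant weights. -/
def levels : ℕ → List (List Zg) → List (List (List Zg))
  | 0, _ => []
  | k + 1, cur => cur :: levels k ((cur.flatMap fun y => els.filterMap fun s =>
      if crd pos y s = 0 ∨ Zg.neg (crd pos y s) then none else some (reflW els pos C y s)).foldr
      (fun y acc => if acc.contains y then acc else y :: acc) [])

/-- Each level is closed under reflections, up to the neighbouring levels. -/
def closedL : List (List Zg) → List (List (List Zg)) → Bool
  | _, [] => true
  | prev, cur :: rest => (cur.all fun y => els.all fun s =>
      if crd pos y s = 0 then true else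
      if Zg.neg (crd pos y s) then prev.contains (reflW els pos C y s)
      else (rest.headD []).contains (reflW els pos C y s)) && closedL cur rest

/-- A numerical code for weights, used to see that weights are distinct: weights with distinct codes
are distinct. -/
def code (y : List Zg) : ℕ := y.foldl (fun n a => 4096 * n + (64 * (a.1 + 32) + (a.2 + 32)).toNat) 0

/-- The fundamental weight of `s0`. -/
def fund (s0 : X) : List Zg := els.map fun t => if t = s0 then (1, 0) else 0

/-- The certificate that the orbit of the fundamental weight of `s0` has `N` elements. -/
def chk (s0 : X) (k N : ℕ) : Bool :=
  let L := levels els pos C k [fund els s0]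
  L.flatten.length == N && closedL els pos C [] L && dist (L.flatten.map code) &&
  L.flatten.all fun y => y == els.map (crd pos y) &&
    (y == fund els s0 || els.any fun s => Zg.neg (crd pos y s))

variable {els pos C}

/-- If the levels pass the test `closedL`, then their union is closed under simple
reflections, up to the level `prev` preceding them. -/
lemma closedL_mem : ∀ (Ls : List (List (List Zg))) (prev : List (List Zg)),
    closedL els pos C prev Ls = true → ∀ y ∈ Ls.flatten, ∀ s ∈ els,
      crd pos y s = 0 ∨ reflW els pos C y s ∈ prev ++ Ls.flatten
  | [], _, _ => by simp
  | cur :: rest, prev, h => by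
    intro y hy s hs
    simp only [closedL, Bool.and_eq_true, List.all_eq_true] at h
    obtain ⟨h1, h2⟩ := h
    simp only [List.flatten_cons, List.mem_append] at hy ⊢
    rcases hy with hy | hy
    · have := h1 y hy s hs
      split_ifs at this with h3 h4
      · exact Or.inl h3
      · exact Or.inr (Or.inl (by simpa using this))
      · refine Or.inr (Or.inr (Or.inr ?_))
        cases rest with
        | nil => simp at this
        | cons a l => simp at this ⊢; exact Or.inl this
    · rcases closedL_mem rest cur h2 y hy s hs with h3 | h3
      · exact Or.inl h3
      · rw [List.mem_append] at h3
        exact Or.inr (Or.inr h3)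

lemma crd_map (hels : ∀ t, els[pos t]? = some t) (f : X → Zg) (t : X) :
    crd pos (els.map f) t = f t := by
  simp [crd, List.getD, hels t]

/-- A valid certificate gives the index of the parabolic subgroup of `c` obtained by
removing the vertex `s0`. -/
theorem card_of_chk {Y : Type} [Fintype X] [Fintype Y] [DecidableEq Y] {c : CoxeterMatrix X}
    {c' : CoxeterMatrix Y} [Finite c.Group] (s0 : X) {f : Y → X} (hf : Function.Injective f)
    (h : ∀ x y, c.M (f x) (f y) = c'.M x y) (hr : ∀ s, s ≠ s0 ↔ s ∈ Set.range f)
    (hels : ∀ t, els[pos t]? = some t) (d : X → ℝ) (hd : ∀ s, 0 < d s)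
    (hC : ∀ s t, kk (c.M s t) * d s = (C s t).val * d t) {k N : ℕ}
    (hchk : chk els pos C s0 (k + 1) N = true) :
    Nat.card c.Group = N * Nat.card c'.Group := by
  have hmem : ∀ t, t ∈ els := fun t => List.mem_of_getElem? (hels t)
  simp only [chk] at hchk
  set Ls := levels els pos C (k + 1) [fund els s0] with hLs
  set L := Ls.flatten with hL
  simp only [Bool.and_eq_true, List.all_eq_true, beq_iff_eq, Bool.or_eq_true, List.any_eq_true]
    at hchk
  obtain ⟨⟨⟨hlen, hclos⟩, hdist⟩, hall⟩ := hchk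
  have hnd : L.Nodup := List.Nodup.of_map _ (dist_nodup _ hdist)
  have hfund : fund els s0 ∈ L := by
    rw [hL, hLs, levels, List.flatten_cons]; simp
  obtain ⟨i0, hi0⟩ := List.mem_iff_get.mp hfund
  have := card_orbit c c' s0 hf h hr (ι := Fin L.length) (fun s t => (C s t).val) d hd hC
    (fun i t => (crd pos (L.get i) t).val) ?_ ?_ i0 ?_ ?_ ?_
  · rw [this, Fintype.card_fin, hlen]
  · intro i j hij
    have h1 : L.get i = L.get j := by
      rw [(hall _ (L.get_mem i)).1, (hall _ (L.get_mem j)).1]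
      congr 1
      funext t
      exact Zg.val_inj (congrFun hij t)
    exact hnd.get_inj_iff.mp h1
  · intro i s
    rcases closedL_mem Ls [] hclos _ (L.get_mem i) s (hmem s) with h1 | h1
    · exact ⟨i, fun t => by simp only [h1, Zg.val_zero]; ring⟩
    · obtain ⟨j, hj⟩ := List.mem_iff_get.mp h1
      refine ⟨j, fun t => ?_⟩
      have hj' : L.get j = _ := hj
      rw [hj', reflW, crd_map hels, Zg.val_op]
  · intro i hi
    rcases (hall _ (L.get_mem i)).2 with h1 | ⟨s, _, h1⟩
    · exact hnd.get_inj_iff.mp (h1.trans hi0.symm)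
    · exact absurd (hi s) (not_le.mpr (Zg.val_neg h1))
  · simp only [hi0, fund, crd_map hels]; simp [Zg.val_one]
  · intro t ht
    simp only [hi0, fund, crd_map hels, if_neg ht, Zg.val_zero]
end

/-- Position of a vertex of a hook diagram, the extra vertex being last. -/
def posH {n : ℕ} : Option (Fin n) → ℕ
  | none => n
  | some i => i.val

/-- The vertices of a hook diagram, the extra vertex being last. -/
def elsH (n : ℕ) : List (Option (Fin n)) := (List.finRange n).map some ++ [none]

/-- The Cartan matrix of a diagram with labels at most `3` or equal to `5`. -/
def cartan {X : Type} (c : CoxeterMatrix X) (s t : X) : Zg :=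
  match c.M s t with
  | 1 => (2, 0)
  | 2 => 0
  | 3 => (-1, 0)
  | _ => (0, -1)

lemma kk_cartan {X : Type} (c : CoxeterMatrix X) (s t : X)
    (h : c.M s t = 1 ∨ c.M s t = 2 ∨ c.M s t = 3 ∨ c.M s t = 5) :
    kk (c.M s t) = (cartan c s t).val := by
  unfold cartan Zg.val
  rcases h with h | h | h | h <;> rw [h] <;> simp [kk_one, kk_two, kk_three, kk_five]

set_option maxRecDepth 100000 in
lemma chk_E6 : chk (elsH 5) posH (cartan (hook 5 2 3)) (some (Fin.last 4)) 17 27 = true := by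
  decide +kernel
set_option maxRecDepth 100000 in
lemma chk_E7 : chk (elsH 6) posH (cartan (hook 6 2 3)) (some (Fin.last 5)) 28 56 = true := by
  decide +kernel
set_option maxRecDepth 100000 in
lemma chk_E8 : chk (elsH 7) posH (cartan (hook 7 2 3)) (some (Fin.last 6)) 60 240 = true := by
  decide +kernel
set_option maxRecDepth 100000 in
lemma chk_H3 : chk (elsH 2) posH (cartan (hook 2 0 5)) (some (Fin.last 1)) 12 12 = true := by
  decide +kernel
set_option maxRecDepth 100000 in
lemma chk_H4 : chk (elsH 3) posH (cartan (hook 3 0 5)) (some (Fin.last 2)) 62 120 = true := by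
  decide +kernel

lemma elsH_pos (n : ℕ) (t : Option (Fin n)) : (elsH n)[posH t]? = some t := by
  rcases t with _ | t
  · simp [elsH, posH]
  · simp [elsH, posH, List.getElem?_append]

/-- The step from a hook diagram to the one with the far end vertex removed. -/
lemma card_hook_step {n : ℕ} (i : Fin n) (m : ℕ) (hfin : Finite (hook (n + 1) i.castSucc m).Group)
    (hlab : ∀ s t, (hook (n + 1) i.castSucc m).M s t = 1 ∨ (hook (n + 1) i.castSucc m).M s t = 2 ∨
      (hook (n + 1) i.castSucc m).M s t = 3 ∨ (hook (n + 1) i.castSucc m).M s t = 5)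
    {k N : ℕ} (hchk : chk (elsH (n + 1)) posH (cartan (hook (n + 1) i.castSucc m))
      (some (Fin.last n)) (k + 1) N = true) :
    Nat.card (hook (n + 1) i.castSucc m).Group = N * Nat.card (hook n i m).Group ∧
      Finite (hook n i m).Group := by
  have hM := map_castSucc_embeds n i m
  have hinj := Option.map_injective (Fin.castSucc_injective n)
  refine ⟨?_, finite_emb (hook (n + 1) i.castSucc m) (hook n i m) hinj hM⟩
  exact card_of_chk (some (Fin.last n)) hinj hM (map_castSucc_range n) (elsH_pos _) (fun _ => 1)
    (fun _ => one_pos) (fun s t => by rw [kk_cartan _ _ _ (hlab s t)]) hchk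

end CoxRep

/-! ### Orders of the exceptional and dihedral groups -/

namespace CoxRep

set_option linter.unusedSectionVars false
set_option linter.unusedSimpArgs false

lemma hook_lab {n : ℕ} (i : Fin n) {m : ℕ} (hm : m = 3 ∨ m = 5) (s t : Option (Fin n)) :
    (hook n i m).M s t = 1 ∨ (hook n i m).M s t = 2 ∨ (hook n i m).M s t = 3 ∨
      (hook n i m).M s t = 5 := by
  have hp : ∀ s t : Fin n, (pathM n).M s t = 1 ∨ (pathM n).M s t = 2 ∨ (pathM n).M s t = 3 ∨
      (pathM n).M s t = 5 := by
    intro s t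
    rw [pathM_apply]
    split_ifs <;> simp
  rcases s with _ | s <;> rcases t with _ | t
  · left; rfl
  · rw [hook, att_ns]; split_ifs <;> omega
  · rw [hook, att_sn]; split_ifs <;> omega
  · exact hp s t

lemma card_CIso {X Y : Type} [Fintype X] [DecidableEq X] [Fintype Y] [DecidableEq Y]
    {c : CoxeterMatrix X} {c' : CoxeterMatrix Y} (h : CIso c c') (hfin : Finite c.Group) :
    Nat.card c.Group = Nat.card c'.Group ∧ Finite c'.Group := by
  obtain ⟨e, he⟩ := h.symm
  exact ⟨card_iso c c' e.bijective he, finite_emb c c' e.injective he⟩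

lemma card_E6 (h : Finite (hook 5 2 3).Group) : Nat.card (hook 5 2 3).Group = 51840 := by
  obtain ⟨h1, h2⟩ := card_hook_step (2 : Fin 4) 3 h (hook_lab _ (Or.inl rfl)) chk_E6
  obtain ⟨h3, h4⟩ := card_CIso (hook_rev 4 2 3) h2
  have h5 := card_D 2 h4
  rw [show (hook 5 2 3) = hook 5 (Fin.castSucc 2) 3 from rfl, h1, h3]
  rw [show (hook 4 (Fin.rev 2) 3) = hook (2 + 2) 1 3 from rfl, h5]
  decide

lemma card_E7 (h : Finite (hook 6 2 3).Group) : Nat.card (hook 6 2 3).Group = 2903040 := by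
  obtain ⟨h1, h2⟩ := card_hook_step (2 : Fin 5) 3 h (hook_lab _ (Or.inl rfl)) chk_E7
  rw [show (hook 6 2 3) = hook 6 (Fin.castSucc 2) 3 from rfl, h1, card_E6 h2]

lemma card_E8 (h : Finite (hook 7 2 3).Group) : Nat.card (hook 7 2 3).Group = 696729600 := by
  obtain ⟨h1, h2⟩ := card_hook_step (2 : Fin 6) 3 h (hook_lab _ (Or.inl rfl)) chk_E8
  rw [show (hook 7 2 3) = hook 7 (Fin.castSucc 2) 3 from rfl, h1, card_E7 h2]

/-- A dihedral group of order `2 k`. -/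
lemma card_I2 {k : ℕ} (hk : 3 ≤ k) : Nat.card (hook 1 0 k).Group = 2 * k := by
  have : NeZero k := ⟨by omega⟩
  set c := hook 1 0 k with hc
  set cs := c.toCoxeterSystem
  have hlab : c.M none (some 0) = k := by
    rw [hc, hook, att_ns, if_pos rfl]; omega
  -- the rotation and its order
  set a := cs.simple none with ha
  set b := cs.simple (some 0) with hb
  have haa : a * a = 1 := cs.simple_mul_simple_self _
  have hbb : b * b = 1 := cs.simple_mul_simple_self _
  have hab : (a * b) ^ k = 1 := by
    have := cs.simple_mul_simple_pow none (some 0)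
    rwa [hlab] at this
  have haa' : ∀ g, g * a * a = g := fun g => by rw [mul_assoc, haa, mul_one]
  have hpow : ∀ w : c.Group, ∃ (n : ℕ) (e : Bool), (a * b) ^ n * (if e then a else 1) = w := by
    intro w
    induction w using cs.simple_induction_right with
    | one => exact ⟨0, false, by simp⟩
    | mul_simple_right w s ih =>
      obtain ⟨n, e, rfl⟩ := ih
      rcases s with _ | s
      · cases e
        · exact ⟨n, true, by simp [a]⟩
        · exact ⟨n, false, by simp [a]⟩
      · obtain rfl : s = 0 := Subsingleton.elim _ _
        cases e
        · -- here `b = (b a) a`, and `b a = (a b) ^ (k - 1)`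
          refine ⟨n + (k - 1), true, ?_⟩
          have h1 : (a * b) ^ (k - 1) * (a * b) = 1 := by
            rw [← pow_succ, Nat.sub_add_cancel (by omega), hab]
          have h2 : (a * b) ^ (k - 1) = b * a := by
            rw [eq_inv_of_mul_eq_one_left h1, mul_inv_rev, inv_eq_of_mul_eq_one_left haa,
              inv_eq_of_mul_eq_one_left hbb]
          rw [pow_add, h2]
          simp only [if_true, Bool.false_eq_true, if_false, mul_one]
          rw [mul_assoc, mul_assoc, haa, mul_one]
        · refine ⟨n + 1, false, ?_⟩
          simp only [if_true, Bool.false_eq_true, if_false, mul_one]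
          rw [pow_succ]
          simp only [mul_assoc]; rfl
  apply le_antisymm
  · have hsurj : Function.Surjective
        (fun p : Bool × Fin k => (a * b) ^ p.2.val * (if p.1 then a else 1)) := by
      intro w
      obtain ⟨n, e, rfl⟩ := hpow w
      refine ⟨(e, ⟨n % k, Nat.mod_lt _ (by omega)⟩), ?_⟩
      simp only
      rw [← pow_eq_pow_mod n hab]
    have := Nat.card_le_card_of_surjective _ hsurj
    simpa using this
  · have hsurj : Function.Surjective
        (fun p : Bool × Fin k => (a * b) ^ p.2.val * (if p.1 then a else 1)) := by
      intro w
      obtain ⟨n, e, rfl⟩ := hpow w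
      refine ⟨(e, ⟨n % k, Nat.mod_lt _ (by omega)⟩), ?_⟩
      simp only
      rw [← pow_eq_pow_mod n hab]
    have hfin : Finite c.Group := Finite.of_surjective _ hsurj
    let f : Option (Fin 1) → DihedralGroup k := fun s => if s = none then .sr 0 else .sr 1
    have hf : c.IsLiftable f := by
      have hlab' : c.M (some 0) none = k := by rw [c.symmetric, hlab]
      have key : ∀ x : ZMod k, (DihedralGroup.r x) ^ k = 1 := by
        intro x
        rw [DihedralGroup.r_pow]
        simp
      rintro (_ | s) (_ | t)
      · rw [c.diagonal, pow_one]; simp [f]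
      · obtain rfl : t = 0 := Subsingleton.elim _ _
        rw [hlab]; simp only [f, if_true, reduceCtorEq, if_false, DihedralGroup.sr_mul_sr, key]
      · obtain rfl : s = 0 := Subsingleton.elim _ _
        rw [hlab']; simp only [f, if_true, reduceCtorEq, if_false, DihedralGroup.sr_mul_sr, key]
      · obtain rfl : t = s := Subsingleton.elim _ _
        rw [c.diagonal, pow_one]; simp [f]
    have ha' : cs.lift ⟨f, hf⟩ a = .sr 0 := cs.lift_apply_simple hf none
    have hb' : cs.lift ⟨f, hf⟩ b = .sr 1 := cs.lift_apply_simple hf (some 0)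
    have hsurj' : Function.Surjective (cs.lift ⟨f, hf⟩) := by
      have hr : ∀ i : ZMod k, cs.lift ⟨f, hf⟩ ((a * b) ^ i.val) = .r i := by
        intro i
        rw [map_pow, map_mul, ha', hb', DihedralGroup.sr_mul_sr, DihedralGroup.r_pow]
        simp
      rintro (i | i)
      · exact ⟨_, hr i⟩
      · refine ⟨a * (a * b) ^ i.val, ?_⟩
        rw [map_mul, hr, ha', DihedralGroup.sr_mul_r, zero_add]
    have := Nat.card_le_card_of_surjective _ hsurj'
    rwa [DihedralGroup.nat_card] at this

lemma card_H3 (h : Finite (hook 2 0 5).Group) : Nat.card (hook 2 0 5).Group = 120 := by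
  obtain ⟨h1, h2⟩ := card_hook_step (0 : Fin 1) 5 h (hook_lab _ (Or.inr rfl)) chk_H3
  rw [show (hook 2 0 5) = hook 2 (Fin.castSucc 0) 5 from rfl, h1, card_I2 (by norm_num)]

lemma card_H4 (h : Finite (hook 3 0 5).Group) : Nat.card (hook 3 0 5).Group = 14400 := by
  obtain ⟨h1, h2⟩ := card_hook_step (0 : Fin 2) 5 h (hook_lab _ (Or.inr rfl)) chk_H4
  rw [show (hook 3 0 5) = hook 3 (Fin.castSucc 0) 5 from rfl, h1]
  rw [card_H3 h2]

/-- The vertices of the diagram `F₄`, along the path. -/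
def elsF : List (Option (Option (Fin 2))) := [none, some none, some (some 0), some (some 1)]

/-- Position of a vertex in the diagram `F₄`. -/
def posF : Option (Option (Fin 2)) → ℕ
  | none => 0
  | some none => 1
  | some (some i) => 2 + i.val

/-- The Cartan matrix of the root system `F₄`. -/
def cartanF (s t : Option (Option (Fin 2))) : Zg :=
  if s = t then (2, 0)
  else if posF s = 1 ∧ posF t = 2 then (-2, 0)
  else if posF s + 1 = posF t ∨ posF t + 1 = posF s then (-1, 0)
  else 0

set_option maxRecDepth 100000 in
lemma chk_F4 : chk elsF posF cartanF none 16 24 = true := by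
  decide +kernel

lemma card_F4 (h : Finite matF.Group) : Nat.card matF.Group = 1152 := by
  have hM : ∀ x y, matF.M (some x) (some y) = (hook 2 0 4).M x y := fun x y => rfl
  have hinj := Option.some_injective (Option (Fin 2))
  have hfin := finite_emb matF (hook 2 0 4) hinj hM
  have h2 : √2 * √2 = 2 := Real.mul_self_sqrt (by norm_num)
  rw [card_of_chk none hinj hM (fun s => by cases s <;> simp)
    (els := elsF) (pos := posF) (C := cartanF) ?_
    (fun s => if posF s ≤ 1 then √2 else 1) (fun s => by split_ifs <;> simp) ?_ chk_F4, card_B 1 hfin]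
  · decide
  · rintro (_ | _ | s)
    · rfl
    · rfl
    · fin_cases s <;> rfl
  · have key : ∀ s t m, matF.M s t = m → (m = 1 ∨ m = 2 ∨ m = 3 ∨ m = 4) →
        kk m * (if posF s ≤ 1 then √2 else 1) = (cartanF s t).val * (if posF t ≤ 1 then √2 else 1) →
        kk (matF.M s t) * (if posF s ≤ 1 then √2 else 1) =
          (cartanF s t).val * (if posF t ≤ 1 then √2 else 1) := by
      rintro s t m rfl _ h
      exact h
    rintro (_ | _ | s) (_ | _ | t)
    all_goals try fin_cases s
    all_goals try fin_cases t
    all_goals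
      first
      | refine key _ _ 1 rfl (by decide) ?_
      | refine key _ _ 2 rfl (by decide) ?_
      | refine key _ _ 3 rfl (by decide) ?_
      | refine key _ _ 4 rfl (by decide) ?_
    all_goals simp [kk_one, kk_two, kk_three, kk_four, cartanF, posF, Zg.val]

end CoxRep

/-! ### Types and their orders -/

namespace CoxRep

set_option linter.unusedSectionVars false
set_option linter.unusedSimpArgs false

/-- The types of finite irreducible Coxeter systems; `B n` has rank `n + 2`, `D n` has rank
`n + 3`, and the other indices are the usual ones. -/
inductive Ty
  | A (n : ℕ) | B (n : ℕ) | D (n : ℕ) | E6 | E7 | E8 | F4 | H3 | H4 | I (k : ℕ)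

/-- The Coxeter diagram `c` has type `t`. -/
def Is {X : Type*} (c : CoxeterMatrix X) : Ty → Prop
  | .A n => CIso c (pathM n)
  | .B n => CIso c (hook (n + 1) 0 4)
  | .D n => CIso c (hook (n + 2) 1 3)
  | .E6 => CIso c (hook 5 2 3)
  | .E7 => CIso c (hook 6 2 3)
  | .E8 => CIso c (hook 7 2 3)
  | .F4 => CIso c matF
  | .H3 => CIso c (hook 2 0 5)
  | .H4 => CIso c (hook 3 0 5)
  | .I k => CIso c (hook 1 0 k)

/-- The types of rank `2`. -/
def Ty.rank2 : Ty → Prop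
  | .A n => n = 2
  | .B n => n = 0
  | .I k => 5 ≤ k
  | _ => False

/-- The types of rank at least `3`. -/
def Ty.rank3 : Ty → Prop
  | .A n => 3 ≤ n
  | .B n => 1 ≤ n
  | .D n => 1 ≤ n
  | .I _ => False
  | _ => True

/-- The order of the Coxeter group of a given type. -/
def Ty.ord : Ty → ℕ
  | .A n => (n + 1).factorial
  | .B n => 2 ^ (n + 2) * (n + 2).factorial
  | .D n => 2 ^ (n + 2) * (n + 3).factorial
  | .E6 => 51840
  | .E7 => 2903040
  | .E8 => 696729600
  | .F4 => 1152
  | .H3 => 120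
  | .H4 => 14400
  | .I k => 2 * k

/-- Each normal form on at least two vertices is the diagram of a type of rank two or higher. -/
lemma NF.ty {X : Type*} [Nontrivial X] {c : CoxeterMatrix X} (h : NF c) :
    ∃ t, Is c t ∧ (t.rank2 ∨ t.rank3) := by
  rcases h with ⟨n, hn, h⟩ | ⟨n, k, i, h, hg⟩ | h
  · have h1 : n ≠ 1 := by
      rintro rfl
      obtain ⟨e, -⟩ := h
      obtain ⟨a, b, hab⟩ := exists_pair_ne X
      exact hab (e.injective (Subsingleton.elim _ _))
    refine ⟨.A n, h, ?_⟩
    simp only [Ty.rank2, Ty.rank3]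
    omega
  · rcases hg with ⟨h1, rfl, h2⟩ | ⟨h1, rfl, h2⟩ | ⟨h1, rfl, h2, h3⟩ | ⟨h1, rfl, h2, h3⟩ | ⟨h1, rfl, h2⟩
    · obtain ⟨n, rfl⟩ : ∃ m, n = m + 1 := ⟨n - 1, by omega⟩
      obtain rfl : i = 0 := Fin.ext h1
      refine ⟨.B n, h, ?_⟩
      simp only [Ty.rank2, Ty.rank3]
      omega
    · obtain ⟨n, rfl⟩ : ∃ m, n = m + 2 := ⟨n - 2, by omega⟩
      obtain rfl : i = 1 := Fin.ext h1
      refine ⟨.D n, h, Or.inr ?_⟩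
      simp only [Ty.rank3]
      omega
    · interval_cases n
      · obtain rfl : i = 2 := Fin.ext h1
        exact ⟨.E6, h, Or.inr trivial⟩
      · obtain rfl : i = 2 := Fin.ext h1
        exact ⟨.E7, h, Or.inr trivial⟩
      · obtain rfl : i = 2 := Fin.ext h1
        exact ⟨.E8, h, Or.inr trivial⟩
    · interval_cases n
      · obtain rfl : i = 0 := Fin.ext h1
        exact ⟨.H3, h, Or.inr trivial⟩
      · obtain rfl : i = 0 := Fin.ext h1
        exact ⟨.H4, h, Or.inr trivial⟩
    · obtain rfl : i = 0 := Subsingleton.elim _ _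
      exact ⟨.I k, h, Or.inl h2⟩
  · exact ⟨.F4, h, Or.inr trivial⟩

lemma Is.iso {X Y : Type*} {c : CoxeterMatrix X} {c' : CoxeterMatrix Y} {t : Ty}
    (h : Is c t) (h' : Is c' t) : CIso c c' := by
  cases t <;> exact CIso.trans h (CIso.symm h')

lemma CIso.card {X Y : Type*} [Fintype X] [DecidableEq X] [Fintype Y] [DecidableEq Y]
    {c : CoxeterMatrix X} {c' : CoxeterMatrix Y} (h : CIso c c') (hfin : Finite c.Group) :
    Nat.card c.Group = Nat.card c'.Group ∧ Finite c'.Group := by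
  obtain ⟨e, he⟩ := h.symm
  exact ⟨card_iso c c' e.bijective he, finite_emb c c' e.injective he⟩

lemma Is.card {X : Type*} [Fintype X] [DecidableEq X] {c : CoxeterMatrix X} {t : Ty}
    (h : Is c t) (ht : t.rank2 ∨ t.rank3) (hfin : Finite c.Group) :
    Nat.card c.Group = t.ord := by
  have key : ∀ {Y : Type} [Fintype Y] [DecidableEq Y] {c' : CoxeterMatrix Y} {N : ℕ},
      CIso c c' → (Finite c'.Group → Nat.card c'.Group = N) → Nat.card c.Group = N :=
    fun h h' => (h.card hfin).1.trans (h' (h.card hfin).2)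
  cases t with
  | A n => exact key h (card_path n)
  | B n => exact key h (card_B n)
  | D n => exact key h (card_D n)
  | E6 => exact key h card_E6
  | E7 => exact key h card_E7
  | E8 => exact key h card_E8
  | F4 => exact key h card_F4
  | H3 => exact key h card_H3
  | H4 => exact key h card_H4
  | I k =>
    refine key h fun _ => card_I2 ?_
    rcases ht with ht | ht
    · exact le_trans (by norm_num) (show 5 ≤ k from ht)
    · exact ht.elim

lemma rank2_ord {t t' : Ty} (h : t.rank2) (h' : t'.rank2) (hc : t.ord = t'.ord) : t = t' := by
  cases t <;> cases t' <;> simp only [Ty.rank2] at h h' <;> subst_vars <;>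
    simp [Ty.ord, Nat.factorial] at hc <;> first | rfl | omega | (subst hc; rfl)

/-- A quotient `a! / b!` of factorials is a proper power of two only when it is `b + 1`. -/
lemma fact_pow {a b e : ℕ} (he : 1 ≤ e) (hb1 : 1 ≤ b) (h : a.factorial = 2 ^ e * b.factorial) :
    b + 1 = 2 ^ e := by
  have h2 : 2 ≤ 2 ^ e := by calc 2 = 2 ^ 1 := rfl
                            _ ≤ 2 ^ e := Nat.pow_le_pow_right (by norm_num) he
  have hb : 0 < b.factorial := Nat.factorial_pos b
  have hlt : b < a := by
    by_contra hle
    have := Nat.factorial_le (not_lt.mp hle)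
    nlinarith
  by_cases hab : a = b + 1
  · rw [hab, Nat.factorial_succ] at h
    exact Nat.eq_of_mul_eq_mul_right hb h
  · -- otherwise two consecutive numbers divide a power of two
    exfalso
    have h3 : (b + 2).factorial ∣ 2 ^ e * b.factorial := h ▸ Nat.factorial_dvd_factorial (by omega)
    rw [Nat.factorial_succ, Nat.factorial_succ, ← mul_assoc] at h3
    have h4 := Nat.dvd_of_mul_dvd_mul_right hb h3
    obtain ⟨i, _, hi⟩ := (Nat.dvd_prime_pow Nat.prime_two).mp (dvd_of_mul_right_dvd h4)
    obtain ⟨j, _, hj⟩ := (Nat.dvd_prime_pow Nat.prime_two).mp (dvd_of_mul_left_dvd h4)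
    rcases i with _ | i <;> rcases j with _ | j <;> simp only [pow_zero, pow_succ] at hi hj <;>
      try omega

/-- The orders of the sporadic types differ from those of types `A`, `B`, `D`, except `5! = 120`. -/
lemma ord_sporadic {N : ℕ} (hN : N = 51840 ∨ N = 2903040 ∨ N = 696729600 ∨ N = 1152 ∨ N = 120 ∨
    N = 14400) (n : ℕ) (hn : 1 ≤ n) : ((n + 1).factorial = N → n = 4 ∧ N = 120) ∧
      2 ^ (n + 2) * (n + 2).factorial ≠ N ∧ 2 ^ (n + 2) * (n + 3).factorial ≠ N := by
  by_cases h : n ≤ 11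
  · interval_cases n <;> rcases hN with rfl | rfl | rfl | rfl | rfl | rfl <;>
      simp [Nat.factorial]
  · have h1 : (13).factorial ≤ (n + 1).factorial := Nat.factorial_le (by omega)
    have h2 : (n + 1).factorial ≤ (n + 2).factorial := Nat.factorial_le (by omega)
    have h3 : (n + 2).factorial ≤ (n + 3).factorial := Nat.factorial_le (by omega)
    have h4 : 1 ≤ 2 ^ (n + 2) := Nat.one_le_two_pow
    have h5 : N < (13).factorial := by rcases hN with rfl | rfl | rfl | rfl | rfl | rfl <;> decide
    refine ⟨fun h => by omega, fun h => ?_, fun h => ?_⟩ <;> nlinarith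

end CoxRep

/-! ### Coincidences among the orders -/

namespace CoxRep

set_option linter.unusedSectionVars false
set_option linter.unusedSimpArgs false

lemma ord_AB {n m : ℕ} : (n + 1).factorial ≠ 2 ^ (m + 2) * (m + 2).factorial := fun h => by
  have h1 := fact_pow (by omega) (by omega) h
  have h2 : m < 2 ^ m := Nat.lt_two_pow_self
  rw [pow_add] at h1
  omega

lemma ord_AD {n m : ℕ} (hm : 1 ≤ m) : (n + 1).factorial ≠ 2 ^ (m + 2) * (m + 3).factorial :=
    fun h => by
  have h1 := fact_pow (by omega) (by omega) h
  have h2 : m < 2 ^ m := Nat.lt_two_pow_self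
  rw [pow_add] at h1
  omega

lemma ord_BD {n m : ℕ} : 2 ^ (n + 2) * (n + 2).factorial ≠ 2 ^ (m + 2) * (m + 3).factorial :=
    fun h => by
  rcases Nat.lt_or_ge m n with hlt | hle
  · have h1 : (m + 3).factorial ≤ (n + 2).factorial := Nat.factorial_le (by omega)
    have h2 : 2 ^ (m + 2) < 2 ^ (n + 2) := Nat.pow_lt_pow_right (by norm_num) (by omega)
    exact absurd h (Nat.mul_lt_mul_of_lt_of_le h2 h1 (Nat.factorial_pos _)).ne'
  · have h1 : (n + 2).factorial < (m + 3).factorial :=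
      (Nat.factorial_lt (by omega)).mpr (by omega)
    have h2 : 2 ^ (n + 2) ≤ 2 ^ (m + 2) := Nat.pow_le_pow_right (by norm_num) (by omega)
    have h3 : 0 < 2 ^ (m + 2) := by positivity
    nlinarith

lemma ord_BB {n m : ℕ} (h : 2 ^ (n + 2) * (n + 2).factorial = 2 ^ (m + 2) * (m + 2).factorial) :
    n = m := by
  have key : StrictMono fun n : ℕ => 2 ^ (n + 2) * (n + 2).factorial :=
    strictMono_nat_of_lt_succ fun n => by
      have h1 : (n + 2).factorial ≤ (n + 1 + 2).factorial := Nat.factorial_le (by omega)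
      have h2 : 2 ^ (n + 2) < 2 ^ (n + 1 + 2) := Nat.pow_lt_pow_right (by norm_num) (by omega)
      exact Nat.mul_lt_mul_of_lt_of_le h2 h1 (Nat.factorial_pos _)
  exact key.injective h

lemma ord_DD {n m : ℕ} (h : 2 ^ (n + 2) * (n + 3).factorial = 2 ^ (m + 2) * (m + 3).factorial) :
    n = m := by
  have key : StrictMono fun n : ℕ => 2 ^ (n + 2) * (n + 3).factorial :=
    strictMono_nat_of_lt_succ fun n => by
      have h1 : (n + 3).factorial ≤ (n + 1 + 3).factorial := Nat.factorial_le (by omega)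
      have h2 : 2 ^ (n + 2) < 2 ^ (n + 1 + 2) := Nat.pow_lt_pow_right (by norm_num) (by omega)
      exact Nat.mul_lt_mul_of_lt_of_le h2 h1 (Nat.factorial_pos _)
  exact key.injective h

/-- The exceptional types of rank at least three. -/
def Ty.spor : Ty → Prop
  | .A _ => False
  | .B _ => False
  | .D _ => False
  | .I _ => False
  | _ => True

lemma Ty.spor_ord {t : Ty} (h : t.spor) : t.ord = 51840 ∨ t.ord = 2903040 ∨ t.ord = 696729600 ∨
    t.ord = 1152 ∨ t.ord = 120 ∨ t.ord = 14400 := by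
  cases t <;> simp_all [Ty.spor, Ty.ord]

lemma Ty.spor_inj {t t' : Ty} (h : t.spor) (h' : t'.spor) (hc : t.ord = t'.ord) : t = t' := by
  cases t <;> cases t' <;> simp_all [Ty.spor, Ty.ord]

lemma Ty.spor_120 {t : Ty} (h : t.spor) (hc : t.ord = 120) : t = .H3 := by
  cases t <;> simp_all [Ty.spor, Ty.ord]

/-- An infinite-family type and an exceptional type share an order only for `A₄` and `H₃`. -/
lemma mixed_ord {t t' : Ty} (h : t.rank3) (h1 : ¬ t.spor) (h' : t'.spor) (hc : t.ord = t'.ord) :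
    t = .A 4 ∧ t' = .H3 := by
  have hs := Ty.spor_ord h'
  cases t with
  | A n =>
    have h3 : 3 ≤ n := h
    obtain ⟨rfl, e⟩ := (ord_sporadic hs n (by omega)).1 hc
    exact ⟨rfl, Ty.spor_120 h' e⟩
  | B n => exact ((ord_sporadic hs n h).2.1 hc).elim
  | D n => exact ((ord_sporadic hs n h).2.2 hc).elim
  | I k => exact h.elim
  | _ => exact (h1 trivial).elim

/-- In rank at least three, the order determines the type up to the coincidence of `A₄` and `H₃`. -/
lemma rank3_ord {t t' : Ty} (h : t.rank3) (h' : t'.rank3) (hc : t.ord = t'.ord) :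
    t = t' ∨ (t = .A 4 ∧ t' = .H3) ∨ (t = .H3 ∧ t' = .A 4) := by
  by_cases hs : t.spor
  · by_cases hs' : t'.spor
    · exact Or.inl (Ty.spor_inj hs hs' hc)
    · exact Or.inr (Or.inr (mixed_ord h' hs' hs hc.symm).symm)
  · by_cases hs' : t'.spor
    · exact Or.inr (Or.inl (mixed_ord h hs hs' hc))
    · left
      cases t <;> try exact (hs trivial).elim
      all_goals cases t' <;> try exact (hs' trivial).elim
      all_goals first
        | exact h.elim
        | exact h'.elim
        | skip
      all_goals simp only [Ty.ord] at hc
      · rw [Nat.factorial_inj (by simp only [Ty.rank3] at h; omega)] at hc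
        congr 1; omega
      · exact (ord_AB hc).elim
      · exact (ord_AD h' hc).elim
      · exact (ord_AB hc.symm).elim
      · rw [ord_BB hc]
      · exact (ord_BD hc).elim
      · exact (ord_AD h hc.symm).elim
      · exact (ord_BD hc.symm).elim
      · rw [ord_DD hc]

/-- Some edge `s — t` labelled `3` continues to a third vertex `u` not joined to `s`. -/
def Tri {X : Type*} (c : CoxeterMatrix X) : Prop :=
  ∃ s t u, c.M s t = 3 ∧ c.M u s = 2 ∧ u ≠ t ∧ c.M t u ≠ 2

lemma Tri.of_iso {X Y : Type*} {c : CoxeterMatrix X} {c' : CoxeterMatrix Y} (h : CIso c c')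
    (h' : Tri c') : Tri c := by
  obtain ⟨e, he⟩ := h.symm
  obtain ⟨s, t, u, h1, h2, h3, h4⟩ := h'
  exact ⟨e s, e t, e u, by rw [he, h1], by rw [he, h2], fun h => h3 (e.injective h), by rwa [he]⟩

lemma tri_path (n : ℕ) : Tri (pathM (n + 3)) := by
  refine ⟨⟨0, by omega⟩, ⟨1, by omega⟩, ⟨2, by omega⟩, ?_⟩
  simp [pathM_apply, Fin.ext_iff]

lemma tri_hook0 (n k : ℕ) (hk : 3 ≤ k) : Tri (hook (n + 2) 0 k) := by
  refine ⟨some ⟨1, by omega⟩, some ⟨0, by omega⟩, none, ?_⟩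
  simp [hook, att_ss, att_sn, att_ns, pathM_apply, Fin.ext_iff]
  omega

lemma tri_hook (n i k : ℕ) (hi : i < n + 3) : Tri (hook (n + 3) ⟨i, hi⟩ k) := by
  refine ⟨some ⟨0, by omega⟩, some ⟨1, by omega⟩, some ⟨2, by omega⟩, ?_⟩
  simp [hook, att_ss, att_sn, att_ns, pathM_apply, Fin.ext_iff]

lemma tri_F : Tri matF := by
  refine ⟨none, some none, some (some 0), ?_⟩
  simp [matF, hook, att_ss, att_sn, att_ns, pathM_apply, Fin.ext_iff]

lemma Is.tri {X : Type*} {c : CoxeterMatrix X} {t : Ty} (h : Is c t) (ht : t.rank3) : Tri c := by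
  cases t with
  | A n =>
    obtain ⟨n, rfl⟩ : ∃ m, n = m + 3 := ⟨n - 3, by simp only [Ty.rank3] at ht; omega⟩
    exact Tri.of_iso h (tri_path n)
  | B n =>
    obtain ⟨n, rfl⟩ : ∃ m, n = m + 1 := ⟨n - 1, by simp only [Ty.rank3] at ht; omega⟩
    exact Tri.of_iso h (tri_hook0 n 4 (by norm_num))
  | D n =>
    obtain ⟨n, rfl⟩ : ∃ m, n = m + 1 := ⟨n - 1, by simp only [Ty.rank3] at ht; omega⟩
    exact Tri.of_iso h (tri_hook n 1 3 (by omega))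
  | E6 => exact Tri.of_iso h (tri_hook 2 2 3 (by norm_num))
  | E7 => exact Tri.of_iso h (tri_hook 3 2 3 (by norm_num))
  | E8 => exact Tri.of_iso h (tri_hook 4 2 3 (by norm_num))
  | F4 => exact Tri.of_iso h tri_F
  | H3 => exact Tri.of_iso h (tri_hook0 0 5 (by norm_num))
  | H4 => exact Tri.of_iso h (tri_hook0 1 5 (by norm_num))
  | I k => exact ht.elim

lemma Is.two {X : Type*} {c : CoxeterMatrix X} {t : Ty} (h : Is c t) (ht : t.rank2) :
    ∃ a b : X, ∀ x, x = a ∨ x = b := by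
  have key : ∀ {Y : Type} {c' : CoxeterMatrix Y}, CIso c c' → (∃ a b : Y, ∀ x, x = a ∨ x = b) →
      ∃ a b : X, ∀ x, x = a ∨ x = b := by
    rintro Y c' ⟨e, -⟩ ⟨a, b, hab⟩
    exact ⟨e.symm a, e.symm b, fun x => (hab (e x)).imp (fun h => by simp [← h]) fun h => by simp [← h]⟩
  have h2 : ∃ a b : Fin 2, ∀ x, x = a ∨ x = b := ⟨0, 1, by decide⟩
  have h3 : ∃ a b : Option (Fin 1), ∀ x, x = a ∨ x = b := ⟨none, some 0, by decide⟩
  cases t with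
  | A n =>
    obtain rfl : n = 2 := ht
    exact key h h2
  | B n =>
    obtain rfl : n = 0 := ht
    exact key h h3
  | I k => exact key h h3
  | _ => exact ht.elim

end CoxRep

/-! ### Separating rank two from higher rank -/

namespace CoxRep

open scoped commutatorElement

set_option linter.unusedSectionVars false
set_option linter.unusedSimpArgs false

section Rank

variable {W : Type*} [Group W]

/-- The commutators of a group generated by two involutions are powers of their product. -/
lemma dihedral_comm {a b : W} (ha : a * a = 1) (hb : b * b = 1) :
    ⁅Subgroup.closure {a, b}, Subgroup.closure {a, b}⁆ ≤ Subgroup.zpowers (a * b) := by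
  have hai : a⁻¹ = a := inv_eq_of_mul_eq_one_left ha
  have hbi : b⁻¹ = b := inv_eq_of_mul_eq_one_left hb
  have hc1 : a * (a * b) * a = (a * b)⁻¹ := by
    rw [← mul_assoc, ha, one_mul, mul_inv_rev, hai, hbi]
  have hc : ∀ n : ℤ, a * (a * b) ^ n = (a * b) ^ (-n) * a := by
    intro n
    have : a * (a * b) ^ n * a⁻¹ = (a * b) ^ (-n) := by
      rw [← conj_zpow, hai, hc1, inv_zpow, zpow_neg]
    rw [← this, inv_mul_cancel_right]
  have hform : ∀ h ∈ Subgroup.closure {a, b},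
      ∃ n : ℤ, h = (a * b) ^ n ∨ h = (a * b) ^ n * a := by
    intro h hh
    have hleft : ∀ x ∈ ({a, b} : Set W), ∀ y, (∃ n : ℤ, y = (a * b) ^ n ∨ y = (a * b) ^ n * a) →
        ∃ n : ℤ, x * y = (a * b) ^ n ∨ x * y = (a * b) ^ n * a := by
      have h1 : ∀ y, (∃ n : ℤ, y = (a * b) ^ n ∨ y = (a * b) ^ n * a) →
          ∃ n : ℤ, a * y = (a * b) ^ n ∨ a * y = (a * b) ^ n * a := by
        rintro y ⟨n, rfl | rfl⟩
        · exact ⟨-n, Or.inr (hc n)⟩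
        · exact ⟨-n, Or.inl (by rw [← mul_assoc, hc, mul_assoc, ha, mul_one])⟩
      rintro x (rfl | rfl) y hy
      · exact h1 y hy
      · have e : x * y = a * ((a * x) * y) := by rw [mul_assoc, ← mul_assoc a a, ha, one_mul]
        rw [e]
        apply h1
        obtain ⟨n, rfl | rfl⟩ := hy
        · exact ⟨1 + n, Or.inl (by rw [zpow_add, zpow_one])⟩
        · exact ⟨1 + n, Or.inr (by simp only [zpow_add, zpow_one, mul_assoc])⟩
    induction hh using Subgroup.closure_induction_left with
    | one => exact ⟨0, Or.inl (by simp)⟩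
    | mul_left x hx y hy ih => exact hleft x hx y ih
    | inv_mul_cancel x hx y hy ih =>
      have : x⁻¹ = x := by rcases hx with rfl | rfl <;> assumption
      rw [this]
      exact hleft x hx y ih
  have hmv : ∀ n : ℤ, (a * b) ^ n * a = a * (a * b) ^ (-n) := fun n => by rw [hc, neg_neg]
  rw [Subgroup.commutator_le]
  intro g hg h hh
  rw [commutatorElement_def]
  obtain ⟨n, rfl | rfl⟩ := hform g hg <;> obtain ⟨m, rfl | rfl⟩ := hform h hh
  · exact ⟨0, by rw [← zpow_neg, ← zpow_neg, ← zpow_add, ← zpow_add, ← zpow_add]; congr 1; omega⟩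
  · refine ⟨n + n, ?_⟩
    have e : (a * b) ^ n * ((a * b) ^ m * a) * ((a * b) ^ n)⁻¹ =
        (a * b) ^ n * (a * b) ^ m * (a * b) ^ n * a := by
      rw [← zpow_neg, mul_assoc, mul_assoc ((a * b) ^ m), hc, neg_neg]; group
    show (a * b) ^ (n + n) = _
    rw [e, mul_inv_rev, hai, mul_assoc _ a, ← mul_assoc a a, ha, one_mul, ← zpow_neg, ← zpow_add,
      ← zpow_add, ← zpow_add]
    congr 1; omega
  · refine ⟨- (m + m), ?_⟩
    have e : (a * b) ^ n * a * (a * b) ^ m * ((a * b) ^ n * a)⁻¹ = (a * b) ^ (-m) := by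
      rw [mul_assoc ((a * b) ^ n), hc, mul_inv_rev, hai, ← zpow_neg, ← mul_assoc, ← mul_assoc,
        mul_assoc _ a a, ha, mul_one, ← zpow_add, ← zpow_add]
      congr 1; omega
    show (a * b) ^ (-(m + m)) = _
    rw [e, ← zpow_neg, ← zpow_add]
    congr 1; omega
  · refine ⟨n + n - (m + m), ?_⟩
    have e : (a * b) ^ n * a * ((a * b) ^ m * a) * ((a * b) ^ n * a)⁻¹ =
        (a * b) ^ (n - m + n) * a := by
      rw [mul_inv_rev, hai, mul_assoc ((a * b) ^ n) a, ← mul_assoc a ((a * b) ^ m), hc,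
        mul_assoc _ a a, ha, mul_one, ← zpow_neg, hc, neg_neg, ← mul_assoc, ← zpow_add,
        ← zpow_add]
      congr 2
    show (a * b) ^ (n + n - (m + m)) = _
    rw [e, mul_inv_rev, hai, mul_assoc _ a, ← mul_assoc a a, ha, one_mul, ← zpow_neg, ← zpow_add]
    congr 1; omega

/-- In a finite cyclic group the elements of order three generate the same subgroup. -/
lemma cyclic_three {C : Type*} [Group C] [Finite C] [IsCyclic C] {x y : C} (hx : x ^ 3 = 1)
    (hy : y ^ 3 = 1) (h1 : x ≠ 1) : y = 1 ∨ y = x ∨ y = x ^ 2 := by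
  classical
  have := Fintype.ofFinite C
  by_contra! hne
  have h2 : x ^ 2 ≠ 1 := fun h => h1 (by rw [pow_succ, h, one_mul] at hx; exact hx)
  have h3 : x ^ 2 ≠ x := fun h => h1 (by
    rw [pow_two] at h; exact mul_eq_left.mp h)
  have hle := IsCyclic.card_pow_eq_one_le (α := C) (n := 3) (by norm_num)
  have hsub : ({1, x, x ^ 2, y} : Finset C) ⊆ Finset.univ.filter fun a => a ^ 3 = 1 := by
    intro a ha
    simp only [Finset.mem_insert, Finset.mem_singleton] at ha
    rw [Finset.mem_filter]
    refine ⟨Finset.mem_univ _, ?_⟩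
    rcases ha with rfl | rfl | rfl | rfl
    · simp
    · exact hx
    · rw [← pow_mul, mul_comm, pow_mul, hx, one_pow]
    · exact hy
  have h4 : ({1, x, x ^ 2, y} : Finset C).card = 4 := by
    rw [Finset.card_insert_of_notMem, Finset.card_insert_of_notMem, Finset.card_insert_of_notMem,
      Finset.card_singleton]
    · simpa using hne.2.2.symm
    · simp only [Finset.mem_insert, Finset.mem_singleton, not_or]
      exact ⟨h3.symm, hne.2.1.symm⟩
    · simp only [Finset.mem_insert, Finset.mem_singleton, not_or]
      exact ⟨h1.symm, h2.symm, hne.1.symm⟩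
  have := Finset.card_le_card hsub
  omega

variable {B : Type*} [Fintype B] [DecidableEq B] {M : CoxeterMatrix B} (cs : CoxeterSystem M W)

/-- A Coxeter group with a path of three vertices has no cyclic commutator subgroup: the
conjugate of `s t` by `u` does not lie in the parabolic subgroup of `s` and `t`. -/
lemma tri_not_cyclic {J : Set B} {s t u : B} (hs : s ∈ J) (ht : t ∈ J) (hu : u ∈ J)
    (h1 : M.M s t = 3) (h2 : M.M u s = 2) (h3 : u ≠ t) (h4 : M.M t u ≠ 2) {r : W}
    (hr : IsOfFinOrder r) (hle : ⁅par cs J, par cs J⁆ ≤ Subgroup.zpowers r) : False := by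
  set a := cs.simple s with ha
  set b := cs.simple t with hb
  set c := cs.simple u with hc
  have haa : a * a = 1 := cs.simple_mul_simple_self _
  have hbb : b * b = 1 := cs.simple_mul_simple_self _
  have hai : a⁻¹ = a := inv_eq_of_mul_eq_one_left haa
  have hbi : b⁻¹ = b := inv_eq_of_mul_eq_one_left hbb
  have hci : c⁻¹ = c := inv_eq_of_mul_eq_one_left (cs.simple_mul_simple_self _)
  have hx3 : (a * b) ^ 3 = 1 := by
    have := cs.simple_mul_simple_pow s t
    rwa [h1] at this
  have hst : s ≠ t := by
    rintro rfl
    rw [M.diagonal] at h1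
    omega
  have hus : u ≠ s := by
    rintro rfl
    rw [M.diagonal] at h2
    omega
  have hx1 : a * b ≠ 1 := fun h => hst (simple_inj cs (by
    rw [← hbi] at h
    exact mul_inv_eq_one.mp h))
  have hxc : ⁅b, a⁆ = a * b := by
    rw [commutatorElement_def, hai, hbi]
    have : (b * a) * (b * a) * (b * a) = 1 := by
      have e : (b * a) * (b * a) * (b * a) = b * ((a * b) ^ 3) * b⁻¹ := by
        rw [hbi]; simp only [pow_succ, pow_zero, one_mul, mul_assoc, hbb, mul_one]
      rw [e, hx3, mul_one, mul_inv_cancel]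
    have h5 := eq_inv_of_mul_eq_one_left this
    rw [mul_inv_rev, hai, hbi] at h5
    rw [← h5]
    group
  have hamem := simple_mem_par cs hs
  have hbmem := simple_mem_par cs ht
  have hcmem := simple_mem_par cs hu
  have hxm : a * b ∈ ⁅par cs J, par cs J⁆ := hxc ▸ Subgroup.commutator_mem_commutator hbmem hamem
  have hym : c * (a * b) * c⁻¹ ∈ ⁅par cs J, par cs J⁆ := by
    have e : c * (a * b) * c⁻¹ = ⁅c * b * c⁻¹, c * a * c⁻¹⁆ := by
      rw [← hxc, commutatorElement_def, commutatorElement_def]; group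
    rw [e]
    exact Subgroup.commutator_mem_commutator (mul_mem (mul_mem hcmem hbmem) (inv_mem hcmem))
      (mul_mem (mul_mem hcmem hamem) (inv_mem hcmem))
  have hfin : Finite (Subgroup.zpowers r) := hr.finite_zpowers
  have key := cyclic_three (C := Subgroup.zpowers r) (x := ⟨_, hle hxm⟩) (y := ⟨_, hle hym⟩)
    (Subtype.ext hx3) (Subtype.ext (by
      show (c * (a * b) * c⁻¹) ^ 3 = 1
      rw [conj_pow, hx3, mul_one, mul_inv_cancel]))
    (fun h => hx1 (congrArg Subtype.val h))
  have hxp : a * b ∈ par cs {s, t} :=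
    mul_mem (simple_mem_par cs (by simp)) (simple_mem_par cs (by simp))
  have hyp : c * (a * b) * c⁻¹ ∈ par cs {s, t} := by
    rcases key with h | h | h
    · rw [show c * (a * b) * c⁻¹ = 1 from congrArg Subtype.val h]
      exact one_mem _
    · rw [show c * (a * b) * c⁻¹ = a * b from congrArg Subtype.val h]
      exact hxp
    · rw [show c * (a * b) * c⁻¹ = (a * b) ^ 2 from congrArg Subtype.val h]
      exact pow_mem hxp 2
  have h5 := par_coord cs hyp (t := u) (by simp [hus, h3]) (sr s)
  have e1 : rep cs c (sr s) = sr s := by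
    rw [hc, rep_simple_apply, kv_sr, h2, kk_two, zero_smul, sub_zero]
  have e2 : rep cs b (sr s) = sr s + sr t := by
    rw [hb, rep_simple_apply, kv_sr, M.symmetric, h1, kk_three]; module
  have e3 : rep cs a (sr s + sr t) = sr t := by
    rw [ha, map_add, rep_simple_self, rep_simple_apply, kv_sr, h1, kk_three]; module
  have hne := sr_ne hus
  rw [hci, rep_mul, e1, rep_mul, rep_mul, e2, e3, hc, rep_simple_apply, kv_sr, Pi.sub_apply,
    Pi.smul_apply, sr_self, sr_ne h3, sr_ne hus] at h5
  have h6 : kk (M.M u t) < 0 := kk_neg_of (M.off_diagonal u t h3) (by rwa [M.symmetric])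
  simp at h5
  linarith

end Rank

end CoxRep

/-! ### Separating types A₄ and H₃ -/

namespace CoxRep

set_option linter.unusedSectionVars false
set_option linter.unusedSimpArgs false

section Center

/-- Of two linked finite groups of equal order, either both have trivial center or neither has. If the
second has trivial center, then the factor in it of an element of the first is unique, and by
counting this projection is injective; but it kills the center of the first group. -/
lemma Link.no_center {W : Type*} [Group W] {H H' : Subgroup W} (hl : Link H H') (hfin : Finite H)
    (hc : Nat.card H = Nat.card H') {z : W} (hz : z ∈ H) (hz1 : z ≠ 1)
    (hzc : ∀ x ∈ H, z * x = x * z) (hH' : ∀ x ∈ H', (∀ y ∈ H', x * y = y * x) → x = 1) : False := by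
  choose f hf g hg1 hg2 hfg using hl.fwd
  have hzH' : ∀ y ∈ H', z * y = y * z := by
    intro y hy
    obtain ⟨x, hx, w, h1, h2, rfl⟩ := hl.bwd y hy
    rw [← mul_assoc, hzc x hx, mul_assoc, ← h1 z hz, mul_assoc]
  have hfz : ∀ x (hx : x ∈ H), (∀ y ∈ H', x * y = y * x) → f x hx = 1 := by
    intro x hx hxy
    refine hH' _ (hf x hx) fun y hy => ?_
    have e : f x hx = x * (g x hx)⁻¹ := eq_mul_inv_of_mul_eq (hfg x hx).symm
    have e2 : (g x hx)⁻¹ * y = y * (g x hx)⁻¹ := by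
      rw [inv_mul_eq_iff_eq_mul, ← mul_assoc, hg2 x hx y hy, mul_inv_cancel_right]
    rw [e, mul_assoc, e2, ← mul_assoc, hxy y hy, mul_assoc]
  let φ : H → H' := fun x => ⟨f x x.2, hf x x.2⟩
  have hsurj : Function.Surjective φ := by
    rintro ⟨y, hy⟩
    obtain ⟨x, hx, w, h1, h2, h3⟩ := hl.bwd y hy
    refine ⟨⟨x, hx⟩, Subtype.ext ?_⟩
    show f x hx = y
    have hfxm := hf x hx
    have e : y⁻¹ * f x hx = w⁻¹ * (g x hx)⁻¹ := by
      have e1 : x = y * w⁻¹ := eq_mul_inv_of_mul_eq h3.symm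
      have e2 : f x hx = x * (g x hx)⁻¹ := eq_mul_inv_of_mul_eq (hfg x hx).symm
      rw [e2]
      nth_rewrite 1 [e1]
      group
    have h4 := hH' _ (mul_mem (inv_mem hy) hfxm) fun u hu => by
      rw [e, ← mul_inv_rev, inv_mul_eq_iff_eq_mul, ← mul_assoc, mul_assoc _ w,
        h2 u hu, ← mul_assoc, hg2 x hx u hu, mul_assoc u, mul_inv_cancel_right]
    exact (inv_mul_eq_one.mp h4).symm
  have hfin' : Finite H' := Finite.of_surjective φ hsurj
  have hbij := (Nat.bijective_iff_surjective_and_card φ).mpr ⟨hsurj, hc⟩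
  refine hz1 (congrArg Subtype.val (hbij.injective (a₁ := ⟨z, hz⟩) (a₂ := 1) (Subtype.ext ?_)))
  exact (hfz z hz hzH').trans (hfz 1 (one_mem _) fun y _ => by simp).symm

/-- The group of type `A₄` has trivial center: it maps onto the symmetric group on five letters, and
this is an isomorphism since the orders agree. -/
lemma pathM4_center (hfin : Finite (pathM 4).Group) (x : (pathM 4).Group)
    (hx : ∀ y, x * y = y * x) : x = 1 := by
  set cs := (pathM 4).toCoxeterSystem
  have hlift : ∀ i j : Fin 4, (Equiv.swap i.castSucc i.succ * Equiv.swap j.castSucc j.succ) ^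
      ((pathM 4).M i j) = (1 : Equiv.Perm (Fin 5)) := by
    simp only [pathM_apply]
    decide
  let φ : (pathM 4).Group →* Equiv.Perm (Fin 5) :=
    cs.lift ⟨fun i => Equiv.swap i.castSucc i.succ, hlift⟩
  have hφ : ∀ i, φ (cs.simple i) = Equiv.swap i.castSucc i.succ :=
    fun i => cs.lift_apply_simple _ i
  have hsurj : Function.Surjective φ := by
    rw [← MonoidHom.range_eq_top, eq_top_iff]
    intro g _
    have hg : g ∈ Submonoid.closure (Set.range fun i : Fin 4 => Equiv.swap i.castSucc i.succ) := by
      rw [Equiv.Perm.mclosure_swap_castSucc_succ]; trivial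
    have hle : Submonoid.closure (Set.range fun i : Fin 4 => Equiv.swap i.castSucc i.succ) ≤
        φ.range.toSubmonoid := by
      rw [Submonoid.closure_le]
      rintro _ ⟨i, rfl⟩
      exact ⟨cs.simple i, hφ i⟩
    exact hle hg
  have hcard : Nat.card (pathM 4).Group = Nat.card (Equiv.Perm (Fin 5)) := by
    rw [card_path 4 hfin, Nat.card_perm, Nat.card_eq_fintype_card, Fintype.card_fin]
  have hbij := (Nat.bijective_iff_surjective_and_card φ).mpr ⟨hsurj, hcard⟩
  apply hbij.injective
  rw [map_one]
  have hcomm : ∀ g, φ x * g = g * φ x := by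
    intro g
    obtain ⟨y, rfl⟩ := hsurj g
    rw [← map_mul, ← map_mul, hx]
  -- a permutation moving `i` to `j ≠ i` does not commute with a transposition of `j` and `k ≠ i`
  by_contra hne
  obtain ⟨i, hi⟩ : ∃ i, φ x i ≠ i := by
    by_contra! h
    exact hne (Equiv.ext h)
  obtain ⟨k, hk1, hk2⟩ : ∃ k : Fin 5, k ≠ i ∧ k ≠ φ x i :=
    (by decide : ∀ i j : Fin 5, ∃ k : Fin 5, k ≠ i ∧ k ≠ j) i (φ x i)
  have h := DFunLike.congr_fun (hcomm (Equiv.swap (φ x i) k)) i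
  rw [Equiv.Perm.mul_apply, Equiv.Perm.mul_apply, Equiv.swap_apply_of_ne_of_ne hi.symm hk1.symm,
    Equiv.swap_apply_left] at h
  exact hk2 h.symm

/-- Vectors of the root space of `H₃` with coordinates in the golden integers, ordered as
`none`, `some 0`, `some 1`. -/
noncomputable def toV (p : Zg × Zg × Zg) (o : Option (Fin 2)) : ℝ :=
  o.elim p.1.val fun i => if i = 0 then p.2.1.val else p.2.2.val

/-- The product of the three simple reflections of `H₃` on golden coordinates. -/
def coxH (p : Zg × Zg × Zg) : Zg × Zg × Zg :=
  let r := Zg.op (Zg.op p.2.2 (2, 0) p.2.2) (-1, 0) p.2.1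
  let q := Zg.op (Zg.op (Zg.op p.2.1 (2, 0) p.2.1) (0, -1) p.1) (-1, 0) r
  (Zg.op (Zg.op p.1 (2, 0) p.1) (0, -1) q, q, r)

lemma kv_H (v : Option (Fin 2) → ℝ) (s : Option (Fin 2)) : kv (hook 2 0 5) s v =
    (cartan (hook 2 0 5) s none).val * v none + ((cartan (hook 2 0 5) s (some 0)).val * v (some 0) +
      (cartan (hook 2 0 5) s (some 1)).val * v (some 1)) := by
  rw [kv_apply, Fintype.sum_option, Fin.sum_univ_two]
  simp only [kk_cartan (hook 2 0 5) s _ (hook_lab 0 (Or.inr rfl) s _)]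

/-- The Coxeter element of type `H₃` in coordinates over the golden integers. -/
lemma rep_coxH (p : Zg × Zg × Zg) :
    rep (hook 2 0 5).toCoxeterSystem ((hook 2 0 5).toCoxeterSystem.simple none *
      (hook 2 0 5).toCoxeterSystem.simple (some 0) * (hook 2 0 5).toCoxeterSystem.simple (some 1))
      (toV p) = toV (coxH p) := by
  set cs := (hook 2 0 5).toCoxeterSystem
  have c1 : cartan (hook 2 0 5) none none = (2, 0) := by decide
  have c2 : cartan (hook 2 0 5) none (some 0) = (0, -1) := by decide
  have c3 : cartan (hook 2 0 5) none (some 1) = 0 := by decide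
  have c4 : cartan (hook 2 0 5) (some 0) none = (0, -1) := by decide
  have c5 : cartan (hook 2 0 5) (some 0) (some 0) = (2, 0) := by decide
  have c6 : cartan (hook 2 0 5) (some 0) (some 1) = (-1, 0) := by decide
  have c7 : cartan (hook 2 0 5) (some 1) none = 0 := by decide
  have c8 : cartan (hook 2 0 5) (some 1) (some 0) = (-1, 0) := by decide
  have c9 : cartan (hook 2 0 5) (some 1) (some 1) = (2, 0) := by decide
  obtain ⟨p, q, r⟩ := p
  have s1 : ∀ p q r, rep cs (cs.simple (some 1)) (toV (p, q, r)) =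
      toV (p, q, Zg.op (Zg.op r (2, 0) r) (-1, 0) q) := by
    intro p q r
    rw [rep_simple_apply, kv_H, c7, c8, c9]
    ext o
    rcases o with _ | o
    · simp [toV, sr, Pi.single_apply]
    · fin_cases o <;> simp [toV, sr, Pi.single_apply, Zg.val_op, Zg.val_zero]
      ring
  have s2 : ∀ p q r, rep cs (cs.simple (some 0)) (toV (p, q, r)) =
      toV (p, Zg.op (Zg.op (Zg.op q (2, 0) q) (0, -1) p) (-1, 0) r, r) := by
    intro p q r
    rw [rep_simple_apply, kv_H, c4, c5, c6]
    ext o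
    rcases o with _ | o
    · simp [toV, sr, Pi.single_apply]
    · fin_cases o <;> simp [toV, sr, Pi.single_apply, Zg.val_op, Zg.val_zero]
      ring
  have s3 : ∀ p q r, rep cs (cs.simple none) (toV (p, q, r)) =
      toV (Zg.op (Zg.op p (2, 0) p) (0, -1) q, q, r) := by
    intro p q r
    rw [rep_simple_apply, kv_H, c1, c2, c3]
    ext o
    rcases o with _ | o
    · simp [toV, sr, Pi.single_apply, Zg.val_op, Zg.val_zero]
      ring
    · fin_cases o <;> simp [toV, sr, Pi.single_apply, Zg.val_op, Zg.val_zero]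
  rw [rep_mul, rep_mul, s1, s2, s3]
  rfl

/-- The fifth power of the Coxeter element of `H₃` acts as `-1`, hence is central. -/
lemma H3_center : ∃ z : (hook 2 0 5).Group, z ≠ 1 ∧ ∀ y, z * y = y * z := by
  set cs := (hook 2 0 5).toCoxeterSystem with hcs
  set w := cs.simple none * cs.simple (some 0) * cs.simple (some 1) with hw
  have hneg : ∀ s, rep cs (w ^ 5) (sr s) = - sr s := by
    have h : ∀ p, rep cs (w ^ 5) (toV p) = toV (coxH (coxH (coxH (coxH (coxH p))))) := by
      intro p
      have hst : ∀ p, rep cs w (toV p) = toV (coxH p) := rep_coxH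
      simp only [pow_succ, pow_zero, one_mul, rep_mul, hst]
    have e1 : toV ((1, 0), 0, 0) = sr none := by
      ext o
      rcases o with _ | o
      · simp [toV, sr, Zg.val_one]
      · fin_cases o <;> simp [toV, sr, Pi.single_apply, Zg.val_zero]
    have e2 : toV (0, (1, 0), 0) = sr (some 0) := by
      ext o
      rcases o with _ | o
      · simp [toV, sr, Pi.single_apply, Zg.val_zero]
      · fin_cases o <;> simp [toV, sr, Pi.single_apply, Zg.val_zero, Zg.val_one]
    have e3 : toV (0, 0, (1, 0)) = sr (some 1) := by
      ext o
      rcases o with _ | o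
      · simp [toV, sr, Pi.single_apply, Zg.val_zero]
      · fin_cases o <;> simp [toV, sr, Pi.single_apply, Zg.val_zero, Zg.val_one]
    have hv : ∀ p : Zg × Zg × Zg, toV (-p) = - toV p := by
      intro p
      ext o
      rcases o with _ | o
      · simp [toV, Zg.val]; ring
      · fin_cases o <;> simp [toV, Zg.val] <;> ring
    have d1 : coxH (coxH (coxH (coxH (coxH ((1, 0), 0, 0))))) = -((1, 0), 0, 0) := by decide
    have d2 : coxH (coxH (coxH (coxH (coxH (0, (1, 0), 0))))) = -(0, (1, 0), 0) := by decide
    have d3 : coxH (coxH (coxH (coxH (coxH (0, 0, (1, 0)))))) = -(0, 0, (1, 0)) := by decide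
    intro s
    match s with
    | none => rw [← e1, h, d1, hv]
    | some 0 => rw [← e2, h, d2, hv]
    | some 1 => rw [← e3, h, d3, hv]
  have hneg' : rep cs (w ^ 5) = -1 := by
    refine LinearMap.pi_ext fun s x => ?_
    have e : (Pi.single s x : Option (Fin 2) → ℝ) = x • sr s := by
      ext t
      simp [sr, Pi.single_apply]
    rw [e, map_smul, hneg, map_smul]
    simp
  refine ⟨w ^ 5, fun h => ?_, fun y => rep_injective cs ?_⟩
  · have := congrFun (hneg none) none
    rw [h, rep_one, Pi.neg_apply, sr_self] at this
    norm_num at this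
  · rw [map_mul, map_mul, hneg']
    refine LinearMap.ext fun v => ?_
    simp [Module.End.mul_apply]

end Center

end CoxRep

/-! ### The type of a base is determined by its group -/

namespace CoxRep

open scoped commutatorElement

set_option linter.unusedSectionVars false
set_option linter.unusedSimpArgs false

section Types

variable {W : Type*} [Group W] {B : Type*} [Fintype B] [DecidableEq B] {M : CoxeterMatrix B}
  (cs : CoxeterSystem M W) {J : Set B}

/-- A finite irreducible parabolic subgroup of rank at least two has one of the listed types. -/
lemma par_type (h1 : Conn M J) (h2 : J.Nontrivial) (h3 : Finite (par cs J)) :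
    ∃ t, Is (restr M J) t ∧ (t.rank2 ∨ t.rank3) ∧ Nat.card (par cs J) = t.ord := by
  classical
  have := h2.coe_sort
  have := Fintype.ofFinite J
  have hr : ∀ x y : J, M.M x y = (restr M J).M x y := fun _ _ => rfl
  have hcard := card_emb cs (restr M J) Subtype.val_injective hr
  rw [Subtype.range_coe] at hcard
  have hfin : Finite (restr M J).Group := by
    apply Nat.finite_of_card_ne_zero
    rw [← hcard]
    exact Nat.card_pos.ne'
  have hpd : PD (restr M J) := by
    intro v hv
    rw [← gf_extl (restr M J) Subtype.val_injective hr]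
    refine pos_def cs h1 h3 _ (fun t ht => ?_) fun h0 => hv ?_
    · exact extl_coord_out v t (by rwa [Subtype.range_coe])
    · ext x
      rw [← extl_coord Subtype.val_injective v x, h0]
      rfl
  obtain ⟨t, ht, hrk⟩ := NF.ty (classification (restr M J) hpd h1.restr)
  exact ⟨t, ht, hrk, by rw [hcard, ht.card hrk hfin]⟩

/-- The commutator subgroup of an irreducible visual subgroup of rank at least three is not contained
in that of a finite visual subgroup of rank two, since the latter is cyclic. -/
lemma rank_aux {B' : Type*} [Fintype B'] [DecidableEq B'] {M' : CoxeterMatrix B'}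
    (cs' : CoxeterSystem M' W) {J' : Set B'} {t t' : Ty} (h : Is (restr M J) t) (ht : t.rank3)
    (h' : Is (restr M' J') t') (ht' : t'.rank2) (h3' : Finite (par cs' J'))
    (hc : ⁅par cs J, par cs J⁆ ≤ ⁅par cs' J', par cs' J'⁆) : False := by
  obtain ⟨s, r, u, e1, e2, e3, e4⟩ := h.tri ht
  obtain ⟨a, b, hab⟩ := h'.two ht'
  have hJ : cs'.simple '' J' = {cs'.simple a, cs'.simple b} := by
    ext w
    constructor
    · rintro ⟨x, hx, rfl⟩
      exact (hab ⟨x, hx⟩).imp (fun h => by rw [← h]) fun h => by rw [← h]; rfl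
    · rintro (rfl | rfl)
      · exact ⟨a, a.2, rfl⟩
      · exact ⟨b, b.2, rfl⟩
  have hd := dihedral_comm (cs'.simple_mul_simple_self a) (cs'.simple_mul_simple_self b)
  rw [← hJ] at hd
  have hmem : cs'.simple a * cs'.simple b ∈ par cs' J' :=
    mul_mem (simple_mem_par cs' a.2) (simple_mem_par cs' b.2)
  have hord : IsOfFinOrder (cs'.simple a * cs'.simple b) :=
    MonoidHom.isOfFinOrder (par cs' J').subtype
      (isOfFinOrder_of_finite (⟨_, hmem⟩ : par cs' J'))
  exact tri_not_cyclic cs s.2 r.2 u.2 e1 e2 (fun h => e3 (Subtype.ext h)) e4 hord (hc.trans hd)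

/-- A visual subgroup is the Coxeter group of its diagram. -/
lemma iso_of_CIso {X : Type*} [Fintype X] [DecidableEq X] {c : CoxeterMatrix X}
    (hi : CIso (restr M J) c) : Nonempty (c.Group ≃* par cs J) := by
  obtain ⟨e, he⟩ := hi.symm
  have hinj : Function.Injective fun x => (e x : B) := Subtype.val_injective.comp e.injective
  have hrange : Set.range (fun x => (e x : B)) = J := by
    ext a
    exact ⟨fun ⟨x, hx⟩ => hx ▸ (e x).2, fun ha => ⟨e.symm ⟨a, ha⟩, by simp⟩⟩
  have := iso_emb cs c hinj fun x y => he x y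
  rwa [hrange] at this

/-- The groups of types `H₃` and `A₄`, both of order `120`, are not linked: only the first one has
a nontrivial center. -/
lemma H3_A4 {B' : Type*} [Fintype B'] [DecidableEq B'] {M' : CoxeterMatrix B'}
    (cs' : CoxeterSystem M' W) {J' : Set B'} (h : Is (restr M J) .H3) (h' : Is (restr M' J') (.A 4))
    (h3 : Finite (par cs J)) (h3' : Finite (par cs' J')) (hl : Link (par cs J) (par cs' J'))
    (hc : Nat.card (par cs J) = Nat.card (par cs' J')) : False := by
  obtain ⟨f⟩ := iso_of_CIso cs h
  obtain ⟨f'⟩ := iso_of_CIso cs' h'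
  obtain ⟨z, hz1, hz⟩ := H3_center
  have hfin : Finite (pathM 4).Group := Finite.of_equiv _ f'.symm.toEquiv
  refine hl.no_center h3 hc (f z).2 (fun e => hz1 ?_) (fun x hx => ?_) fun x hx hxy => ?_
  · exact f.injective ((Subtype.ext e : f z = 1).trans (map_one f).symm)
  · have := hz (f.symm ⟨x, hx⟩)
    have := congrArg (fun y => ((f y : par cs J) : W)) this
    simpa using this
  · have := pathM4_center hfin (f'.symm ⟨x, hx⟩) fun y => by
      apply f'.injective
      rw [map_mul, map_mul, MulEquiv.apply_symm_apply]
      exact Subtype.ext (hxy _ (f' y).2)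
    have h1 : (⟨x, hx⟩ : par cs' J') = 1 := by
      rw [← f'.apply_symm_apply ⟨x, hx⟩, this, map_one]
    exact congrArg Subtype.val h1

/-- Linked finite irreducible parabolic subgroups of equal order have isomorphic diagrams. -/
theorem type_thm {W : Type*} [Group W] {B B' : Type*} [Fintype B] [DecidableEq B]
    [Fintype B'] [DecidableEq B'] {M : CoxeterMatrix B} {M' : CoxeterMatrix B'}
    (cs : CoxeterSystem M W) (cs' : CoxeterSystem M' W) {J : Set B} {J' : Set B'}
    (h1 : Conn M J) (h2 : J.Nontrivial) (h3 : Finite (par cs J))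
    (h1' : Conn M' J') (h2' : J'.Nontrivial) (h3' : Finite (par cs' J'))
    (hl : Link (par cs J) (par cs' J')) (hc : Nat.card (par cs J) = Nat.card (par cs' J')) :
    ∃ e : J ≃ J', ∀ u v : J, M'.M (e u) (e v) = M.M u v := by
  obtain ⟨t, ht, hr, ho⟩ := par_type cs h1 h2 h3
  obtain ⟨t', ht', hr', ho'⟩ := par_type cs' h1' h2' h3'
  have hord : t.ord = t'.ord := by rw [← ho, ← ho', hc]
  have hcomm := hl.comm_eq
  suffices htt : t = t' by
    subst htt
    exact ht.iso ht'
  rcases hr with hr | hr <;> rcases hr' with hr' | hr'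
  · exact rank2_ord hr hr' hord
  · exact (rank_aux cs' cs ht' hr' ht hr h3 hcomm.ge).elim
  · exact (rank_aux cs cs' ht hr ht' hr' h3' hcomm.le).elim
  · rcases rank3_ord hr hr' hord with h | ⟨rfl, rfl⟩ | ⟨rfl, rfl⟩
    · exact h
    · exact (H3_A4 cs' cs ht' ht h3' h3 hl.symm hc.symm).elim
    · exact (H3_A4 cs cs' ht ht' h3 h3' hl hc).elim

end Types

end CoxRep

/-! ### Matching of the bases of two Coxeter generating sets -/

namespace CoxRep

open scoped commutatorElement

set_option linter.unusedSectionVars false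

section Bridge

variable {W : Type*} [Group W]

lemma IsB.of_map {B : Type*} [Fintype B] [DecidableEq B] {M : CoxeterMatrix B}
    {cs : CoxeterSystem M W} {J : Set B} (e : W ≃* W) (h : IsB (cs.map e) J) : IsB cs J :=
  ⟨h.conn, h.nontriv, (map_finite cs e).mp h.fin,
    fun J' h1 h2 h3 => h.max J' h1 h2 ((map_finite cs e).mpr h3)⟩

section

variable {m : W → W → ℕ} {S : Set W} [Fintype S] [DecidableEq S] {cm : CoxeterMatrix S}
  (cs : CoxeterSystem cm W) (hs : ∀ s : S, cs.simple s = (s : W))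
  (hm : ∀ s t : S, cm.M s t = m s t)

include hs in
lemma par_eq_closure (J : Set S) : par cs J = Subgroup.closure (Subtype.val '' J) := by
  rw [par]
  congr 1
  exact Set.image_congr fun s _ => hs s

omit [Fintype S] [DecidableEq S] in
include hm in
/-- Irreducibility in terms of the indexed description of the system. -/
lemma irred_iff (J : Set S) :
    IsIrreducibleOn m (Subtype.val '' J) ↔ J.Nonempty ∧ Conn cm J := by
  have hrel : ∀ x y : S, (x ∈ J ∧ y ∈ J ∧ x ≠ y ∧ cm.M x y ≠ 2) ↔
      ((x : W) ∈ Subtype.val '' J ∧ (y : W) ∈ Subtype.val '' J ∧ (x : W) ≠ y ∧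
        (m x y = 0 ∨ 2 < m x y)) := by
    intro x y
    simp only [Subtype.val_injective.mem_set_image, ne_eq, Subtype.coe_inj]
    refine and_congr_right fun _ => and_congr_right fun _ => and_congr_right fun hne => ?_
    have := cm.off_diagonal x y hne
    rw [hm] at *
    omega
  constructor
  · rintro ⟨h1, h2⟩
    refine ⟨Set.image_nonempty.mp h1, fun i hi j hj => ?_⟩
    have h := h2 i ⟨i, hi, rfl⟩ j ⟨j, hj, rfl⟩
    have key : ∀ b : W, Relation.ReflTransGen (fun x y => x ∈ Subtype.val '' J ∧
        y ∈ Subtype.val '' J ∧ x ≠ y ∧ (m x y = 0 ∨ 2 < m x y)) i b → ∀ j : S, (j : W) = b →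
        Relation.ReflTransGen (fun x y => x ∈ J ∧ y ∈ J ∧ x ≠ y ∧ cm.M x y ≠ 2) i j := by
      intro b hb
      induction hb with
      | refl => intro j hj; rw [Subtype.ext hj]
      | tail _ h2 ih =>
        rintro j rfl
        obtain ⟨y, hy, e⟩ := h2.1
        refine (ih y e).tail ((hrel y j).mpr ?_)
        rw [e]; exact h2
    exact key j h j rfl
  · rintro ⟨h1, h2⟩
    refine ⟨h1.image _, ?_⟩
    rintro _ ⟨i, hi, rfl⟩ _ ⟨j, hj, rfl⟩
    have h := h2 i hi j hj
    clear hj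
    induction h with
    | refl => exact .refl
    | tail _ h2 ih => exact ih.tail ((hrel _ _).mp h2)

include hs hm in
/-- Bases in terms of the indexed description of the system. -/
lemma isBase_iff (J : Set S) : IsBase m S (Subtype.val '' J) ↔ IsB cs J := by
  have hfin : ∀ J : Set S, (Subgroup.closure (Subtype.val '' J) : Set W).Finite ↔
      Finite (par cs J) := by
    intro J
    rw [par_eq_closure cs hs]; rfl
  have hcyc : ∀ J : Set S, J.Nonempty → Conn cm J →
      (¬ IsCyclic ↥(Subgroup.closure (Subtype.val '' J : Set W)) ↔ J.Nontrivial) := by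
    intro J hne hJ
    constructor
    · intro h
      by_contra hn
      rw [Set.not_nontrivial_iff] at hn
      obtain ⟨i, hi⟩ := hne
      apply h
      rw [hn.eq_singleton_of_mem hi, Set.image_singleton, ← Subgroup.zpowers_eq_closure]
      infer_instance
    · intro h hc
      obtain ⟨i, hi, j, hj, hne⟩ := exists_noncomm cs hJ h
      apply hne
      have := hc.commGroup.mul_comm
        (⟨cs.simple i, Subgroup.subset_closure ⟨i, hi, (hs i).symm⟩⟩ :
          Subgroup.closure (Subtype.val '' J : Set W))
        ⟨cs.simple j, Subgroup.subset_closure ⟨j, hj, (hs j).symm⟩⟩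
      exact congrArg Subtype.val this
  constructor
  · rintro ⟨h1, h2, h3, h4, h5⟩
    rw [irred_iff hm] at h2
    refine ⟨h2.2, (hcyc J h2.1 h2.2).mp h4, (hfin J).mp h3, fun J' g1 g2 g3 => ?_⟩
    exact Subtype.val_injective.image_injective (h5 (Subtype.val '' J') (by simp)
      (Set.image_mono g1) ((irred_iff hm J').mpr ⟨h2.1.mono g1, g2⟩) ((hfin J').mpr g3))
  · rintro ⟨h1, h2, h3, h4⟩
    refine ⟨by simp, (irred_iff hm J).mpr ⟨h2.nonempty, h1⟩, (hfin J).mpr h3,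
      (hcyc J h2.nonempty h1).mpr h2, fun B' g1 g2 g3 g4 => ?_⟩
    obtain ⟨J', rfl⟩ : ∃ J' : Set S, B' = Subtype.val '' J' :=
      ⟨Subtype.val ⁻¹' B', by rw [Subtype.image_preimage_coe, Set.inter_eq_right.mpr g1]⟩
    rw [irred_iff hm] at g3
    rw [h4 J' ((Set.image_subset_image_iff Subtype.val_injective).mp g2) g3.2
      ((hfin J').mp g4)]

end

lemma _root_.Matches.symm {B B' : Set W} (h : Matches B B') : Matches B' B := by
  obtain ⟨w, h⟩ := h
  refine ⟨w⁻¹, ?_⟩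
  rw [← h, Subgroup.map_map]
  convert Subgroup.map_id _
  ext x; simp [mul_assoc]

lemma _root_.Matches.trans {B B' B'' : Set W} (h : Matches B B') (h' : Matches B' B'') :
    Matches B B'' := by
  obtain ⟨w, h⟩ := h
  obtain ⟨v, h'⟩ := h'
  refine ⟨v * w, ?_⟩
  rw [← h', ← h, Subgroup.map_map]
  congr 1
  ext x; simp [mul_assoc]

lemma _root_.IsBase.exists_image {m : W → W → ℕ} {S B : Set W} (h : IsBase m S B) :
    ∃ J : Set S, B = Subtype.val '' J :=
  ⟨Subtype.val ⁻¹' B, by rw [Subtype.image_preimage_coe, Set.inter_eq_right.mpr h.1]⟩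

/-- Two matching bases of the same system are equal. -/
theorem base_unique {m : W → W → ℕ} {S : Set W} (hcs : IsCoxeterSystemOn m S) (hS : S.Finite)
    {B₁ B₂ : Set W} (h1 : IsBase m S B₁) (h2 : IsBase m S B₂) (h : Matches B₁ B₂) : B₁ = B₂ := by
  classical
  have := hS.fintype
  obtain ⟨cm, cs, hs, hm⟩ := hcs
  obtain ⟨J₁, rfl⟩ := h1.exists_image
  obtain ⟨J₂, rfl⟩ := h2.exists_image
  rw [isBase_iff cs hs hm] at h1 h2
  obtain ⟨w, h⟩ := h
  rw [← par_eq_closure cs hs, ← par_eq_closure cs hs] at h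
  rw [h1.unique h2 w⁻¹ fun x hx => ?_]
  rw [← h]
  exact ⟨x, hx, by simp⟩

/-- Each base matches a base of any other system, and bases of equal order matched in this way have
isomorphic diagrams. -/
theorem base_match {m m' : W → W → ℕ} {S S' : Set W} (hcs : IsCoxeterSystemOn m S)
    (hS : S.Finite) (hcs' : IsCoxeterSystemOn m' S') (hS' : S'.Finite) {B : Set W}
    (h : IsBase m S B) : ∃ B', IsBase m' S' B' ∧ Matches B B' ∧
      (Nat.card (Subgroup.closure B) = Nat.card (Subgroup.closure B') →
        ∃ e : B ≃ B', ∀ u v : B, m' (e u) (e v) = m u v) := by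
  classical
  have := hS.fintype
  have := hS'.fintype
  obtain ⟨cm, cs, hs, hm⟩ := hcs
  obtain ⟨cm', cs', hs', hm'⟩ := hcs'
  obtain ⟨J, rfl⟩ := h.exists_image
  rw [isBase_iff cs hs hm] at h
  obtain ⟨w, J', h1, h2⟩ := matching cs cs' h
  have hpar : par (cs'.map (MulAut.conj w)) J' =
      (Subgroup.closure (Subtype.val '' J')).map (MulAut.conj w).toMonoidHom := by
    rw [par_map, par_eq_closure cs' hs']
  refine ⟨Subtype.val '' J', (isBase_iff cs' hs' hm' J').mpr (h1.of_map), ?_, fun hc => ?_⟩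
  · refine Matches.symm ⟨w, ?_⟩
    rw [Subgroup.map_commutator, ← hpar, ← par_eq_closure cs hs, h2.comm_eq]
  · obtain ⟨e, he⟩ := type_thm cs (cs'.map (MulAut.conj w)) h.conn h.nontriv h.fin h1.conn
      h1.nontriv h1.fin h2 (by
        rw [par_eq_closure cs hs, hc, hpar]
        exact Nat.card_congr
          (Subgroup.equivMapOfInjective _ _ (MulAut.conj w).injective).toEquiv)
    refine ⟨((Equiv.Set.image _ J Subtype.val_injective).symm.trans e).trans
      (Equiv.Set.image _ J' Subtype.val_injective), ?_⟩
    intro u v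
    obtain ⟨u, rfl⟩ := (Equiv.Set.image _ J Subtype.val_injective).surjective u
    obtain ⟨v, rfl⟩ := (Equiv.Set.image _ J Subtype.val_injective).surjective v
    have := he u v
    rw [hm, hm'] at this
    simpa using this

/-- The basic subgroups whose commutator subgroups generate `N(F)`. -/
def Sel (F : ∀ n : ℕ, (Fin n → Fin n → ℕ) → Prop) (m : W → W → ℕ) (S B : Set W) : Prop :=
  IsBase m S B ∧ ((IsReducedBase m S B ∧ TypeIn F m B) ∨
       (¬ IsReducedBase m S B ∧ ∃ (S' : Set W) (m' : W → W → ℕ) (B' : Set W),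
          IsCoxeterSystemOn m' S' ∧ S'.Finite ∧ IsBase m' S' B' ∧
          IsReducedBase m' S' B' ∧ TypeIn F m' B' ∧ Matches B B'))

lemma _root_.TypeIn.of_equiv {F : ∀ n : ℕ, (Fin n → Fin n → ℕ) → Prop} {m m' : W → W → ℕ}
    {B B' : Set W} (h : TypeIn F m B) (e : B ≃ B') (he : ∀ u v : B, m' (e u) (e v) = m u v) :
    TypeIn F m' B' := by
  obtain ⟨n, Mt, hF, f, hf⟩ := h
  refine ⟨n, Mt, hF, e.symm.trans f, fun u v => ?_⟩
  have := he (e.symm u) (e.symm v)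
  simp only [Equiv.apply_symm_apply] at this
  rw [this, hf]; rfl

/-- Matching reduced bases have equal order. -/
lemma _root_.IsReducedBase.card_eq {m m' : W → W → ℕ} {S S' B B' : Set W}
    (hcs : IsCoxeterSystemOn m S) (hS : S.Finite) (hcs' : IsCoxeterSystemOn m' S')
    (hS' : S'.Finite) (hB : IsBase m S B) (hB' : IsBase m' S' B') (h : IsReducedBase m S B)
    (h' : IsReducedBase m' S' B') (hmm : Matches B B') :
    Nat.card (Subgroup.closure B) = Nat.card (Subgroup.closure B') :=
  le_antisymm (h S' m' B' hcs' hS' hB' hmm) (h' S m B hcs hS hB hmm.symm)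

/-- The bases selected by `F` for one system match bases selected by `F` for any other one. -/
lemma Sel.match {F : ∀ n : ℕ, (Fin n → Fin n → ℕ) → Prop} {m m' : W → W → ℕ} {S S' : Set W}
    (hcs : IsCoxeterSystemOn m S) (hS : S.Finite) (hcs' : IsCoxeterSystemOn m' S')
    (hS' : S'.Finite) {B : Set W} (h : Sel F m S B) : ∃ B', Sel F m' S' B' ∧ Matches B B' := by
  obtain ⟨hB, h⟩ := h
  obtain ⟨B', hB', hmm, htype⟩ := base_match hcs hS hcs' hS' hB
  refine ⟨B', ⟨hB', ?_⟩, hmm⟩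
  by_cases hred' : IsReducedBase m' S' B'
  · refine Or.inl ⟨hred', ?_⟩
    rcases h with ⟨hred, hF⟩ | ⟨-, S₁, m₁, B₁, h1, h2, h3, h4, h5, h6⟩
    · obtain ⟨e, he⟩ := htype (hred.card_eq hcs hS hcs' hS' hB hB' hred' hmm)
      exact hF.of_equiv e he
    · obtain ⟨B₂, g1, g2, g3⟩ := base_match h1 h2 hcs' hS' h3
      obtain rfl := base_unique hcs' hS' g1 hB' (g2.symm.trans (h6.symm.trans hmm))
      obtain ⟨e, he⟩ := g3 (h4.card_eq h1 h2 hcs' hS' h3 g1 hred' g2)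
      exact h5.of_equiv e he
  · refine Or.inr ⟨hred', ?_⟩
    rcases h with ⟨hred, hF⟩ | ⟨-, S₁, m₁, B₁, h1, h2, h3, h4, h5, h6⟩
    · exact ⟨S, m, B, hcs, hS, hB, hred, hF, hmm.symm⟩
    · exact ⟨S₁, m₁, B₁, h1, h2, h3, h4, h5, hmm.symm.trans h6⟩

/-- The universal property of the normal closure defining `N(F)`. -/
lemma NF_le_iff (F : ∀ n : ℕ, (Fin n → Fin n → ℕ) → Prop) (m : W → W → ℕ) (S : Set W)
    (N : Subgroup W) [N.Normal] : NFSubgroup F m S ≤ N ↔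
      ∀ B, Sel F m S B → ⁅Subgroup.closure B, Subgroup.closure B⁆ ≤ N := by
  rw [NFSubgroup, ← Subgroup.normalClosure_subset_iff]
  constructor
  · intro h B hB x hx
    exact h ⟨B, hB.1, hx, hB.2⟩
  · rintro h x ⟨B, hB, hx, h'⟩
    exact h B ⟨hB, h'⟩ hx

/-- One inclusion between the subgroups `N(F)` for two systems; the other one follows by symmetry. -/
theorem NF_le {F : ∀ n : ℕ, (Fin n → Fin n → ℕ) → Prop} {m m' : W → W → ℕ} {S S' : Set W}
    (hcs : IsCoxeterSystemOn m S) (hS : S.Finite) (hcs' : IsCoxeterSystemOn m' S')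
    (hS' : S'.Finite) : NFSubgroup F m S ≤ NFSubgroup F m' S' := by
  rw [NF_le_iff]
  intro B hB
  obtain ⟨B', hB', hmm⟩ := hB.match hcs hS hcs' hS'
  obtain ⟨w, hw⟩ := hmm.symm
  rw [← hw]
  have := (NF_le_iff F m' S' _).mp le_rfl B' hB'
  rintro _ ⟨x, hx, rfl⟩
  exact (inferInstance : (NFSubgroup F m' S').Normal).conj_mem x (this hx) w

end Bridge

end CoxRep

/-! ### Automorphisms and the quotient -/

namespace CoxRep

open scoped commutatorElement

set_option linter.unusedSectionVars false

section Transport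

variable {W : Type*} [Group W]

lemma closure_image (φ : W ≃* W) (B : Set W) :
    Subgroup.closure (φ '' B) = (Subgroup.closure B).map φ.toMonoidHom := by
  rw [MonoidHom.map_closure]; rfl

lemma card_closure_image (φ : W ≃* W) (B : Set W) :
    Nat.card (Subgroup.closure (φ '' B)) = Nat.card (Subgroup.closure B) := by
  rw [closure_image]
  exact (Nat.card_congr (Subgroup.equivMapOfInjective _ _ φ.injective).toEquiv).symm

variable {m m' : W → W → ℕ} {S B : Set W} (φ : W ≃* W)
  (hφ : ∀ x y, m' (φ x) (φ y) = m x y)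

include hφ

lemma transport_sys (h : IsCoxeterSystemOn m S) : IsCoxeterSystemOn m' (φ '' S) := by
  obtain ⟨cm, cs, hs, hm⟩ := h
  let e : S ≃ φ '' S := φ.toEquiv.image S
  have he : ∀ s : S, ((e s : φ '' S) : W) = φ s := fun s => rfl
  refine ⟨cm.reindex e, (cs.map φ).reindex e, ?_, ?_⟩
  · intro s
    obtain ⟨s, rfl⟩ := e.surjective s
    simp [he, hs]
  · intro s t
    obtain ⟨s, rfl⟩ := e.surjective s
    obtain ⟨t, rfl⟩ := e.surjective t
    rw [he, he, hφ, ← hm]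
    change cm.M (e.symm (e s)) (e.symm (e t)) = _
    simp

lemma transport_irred (h : IsIrreducibleOn m B) : IsIrreducibleOn m' (φ '' B) := by
  refine ⟨h.1.image _, ?_⟩
  rintro _ ⟨i, hi, rfl⟩ _ ⟨j, hj, rfl⟩
  have hh := h.2 i hi j hj
  clear hj
  induction hh with
  | refl => exact .refl
  | tail _ h2 ih =>
    obtain ⟨h1, h2, h3, h4⟩ := h2
    exact ih.tail ⟨⟨_, h1, rfl⟩, ⟨_, h2, rfl⟩, φ.injective.ne h3, by rwa [hφ]⟩

lemma transport_base (h : IsBase m S B) : IsBase m' (φ '' S) (φ '' B) := by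
  obtain ⟨h1, h2, h3, h4, h5⟩ := h
  have hφ' : ∀ x y, m (φ.symm x) (φ.symm y) = m' x y := fun x y => by rw [← hφ]; simp
  have hfin : ∀ (φ : W ≃* W) (B : Set W), (Subgroup.closure B : Set W).Finite →
      (Subgroup.closure (φ '' B) : Set W).Finite := by
    intro φ B h
    rw [closure_image, Subgroup.coe_map]
    exact h.image _
  refine ⟨Set.image_mono h1, transport_irred φ hφ h2, hfin φ B h3, fun hc => h4 ?_, ?_⟩
  · rw [closure_image] at hc
    exact isCyclic_of_surjective _
      (Subgroup.equivMapOfInjective (Subgroup.closure B) φ.toMonoidHom φ.injective).symm.surjective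
  · intro B' g1 g2 g3 g4
    have e1 : φ.symm '' B' = B := by
      refine h5 _ ?_ ?_ (transport_irred φ.symm hφ' g3) (hfin _ _ g4)
      · rintro _ ⟨x, hx, rfl⟩
        obtain ⟨y, hy, rfl⟩ := g1 hx
        simpa using hy
      · intro x hx
        exact ⟨φ x, g2 ⟨x, hx, rfl⟩, by simp⟩
    rw [← e1, ← Set.image_comp]
    ext x; simp

lemma transport_type {F : ∀ n : ℕ, (Fin n → Fin n → ℕ) → Prop} (h : TypeIn F m B) :
    TypeIn F m' (φ '' B) :=
  h.of_equiv (φ.toEquiv.image B) fun _ _ => hφ _ _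

omit hφ in
lemma transport_matches {B B' : Set W} (h : Matches B B') : Matches (φ '' B) (φ '' B') := by
  obtain ⟨w, h⟩ := h
  refine ⟨φ w, ?_⟩
  rw [closure_image, closure_image, ← Subgroup.map_commutator, ← Subgroup.map_commutator, ← h,
    Subgroup.map_map, Subgroup.map_map]
  congr 1
  ext x; simp

omit hφ in
lemma symm_image (φ : W ≃* W) (B : Set W) : φ.symm '' (φ '' B) = B := by
  rw [← Set.image_comp]; ext x; simp

lemma transport_reduced (h : IsReducedBase m S B) : IsReducedBase m' (φ '' S) (φ '' B) := by
  intro S₁ m₁ B₁ h1 h2 h3 h4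
  have hh : ∀ x y, (fun x y => m₁ (φ x) (φ y)) (φ.symm x) (φ.symm y) = m₁ x y := by simp
  have := h (φ.symm '' S₁) (fun x y => m₁ (φ x) (φ y)) (φ.symm '' B₁)
    (transport_sys φ.symm hh h1) (h2.image _) (transport_base φ.symm hh h3)
    (by have := transport_matches φ.symm h4; rwa [symm_image] at this)
  rwa [card_closure_image, ← card_closure_image φ B] at this

lemma transport_sel {F : ∀ n : ℕ, (Fin n → Fin n → ℕ) → Prop} (h : Sel F m S B) :
    Sel F m' (φ '' S) (φ '' B) := by
  obtain ⟨hB, h⟩ := h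
  have hφ' : ∀ x y, m (φ.symm x) (φ.symm y) = m' x y := fun x y => by rw [← hφ]; simp
  refine ⟨transport_base φ hφ hB, ?_⟩
  rcases h with ⟨h1, h2⟩ | ⟨h1, S₁, m₁, B₁, h2, h3, h4, h5, h6, h7⟩
  · exact Or.inl ⟨transport_reduced φ hφ h1, transport_type φ hφ h2⟩
  · refine Or.inr ⟨fun h => h1 ?_, φ '' S₁, fun x y => m₁ (φ.symm x) (φ.symm y), φ '' B₁, ?_⟩
    · have := transport_reduced φ.symm hφ' h
      rwa [symm_image, symm_image] at this
    · have hh : ∀ x y, (fun x y => m₁ (φ.symm x) (φ.symm y)) (φ x) (φ y) = m₁ x y := by simp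
      exact ⟨transport_sys φ hh h2, h3.image _, transport_base φ hh h4, transport_reduced φ hh h5,
        transport_type φ hh h6, transport_matches φ h7⟩

/-- An automorphism takes `N(F)` for `S` into `N(F)` for the image of `S`. -/
lemma transport_NF (F : ∀ n : ℕ, (Fin n → Fin n → ℕ) → Prop) :
    (NFSubgroup F m S).map φ.toMonoidHom ≤ NFSubgroup F m' (φ '' S) := by
  rw [Subgroup.map_le_iff_le_comap, NF_le_iff]
  intro B hB
  rw [← Subgroup.map_le_iff_le_comap, Subgroup.map_commutator, ← closure_image]
  exact (NF_le_iff F m' _ _).mp le_rfl _ (transport_sel φ hφ hB)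

omit hφ in
/-- `N(F)` is invariant under automorphisms. -/
theorem NF_char {F : ∀ n : ℕ, (Fin n → Fin n → ℕ) → Prop} (hcs : IsCoxeterSystemOn m S)
    (hS : S.Finite) (φ : W ≃* W) :
    (NFSubgroup F m S).map φ.toMonoidHom = NFSubgroup F m S := by
  have key : ∀ φ : W ≃* W, (NFSubgroup F m S).map φ.toMonoidHom ≤ NFSubgroup F m S := by
    intro φ
    have hh : ∀ x y, (fun x y => m (φ.symm x) (φ.symm y)) (φ x) (φ y) = m x y := by simp
    exact (transport_NF (m' := fun x y => m (φ.symm x) (φ.symm y)) φ hh F).trans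
      (NF_le (transport_sys φ hh hcs) (hS.image _) hcs hS)
  refine le_antisymm (key φ) ?_
  intro x hx
  exact ⟨φ.symm x, key φ.symm ⟨x, hx, rfl⟩, by simp⟩

end Transport

section Quotient

universe u

variable {W : Type u} [Group W] {m : W → W → ℕ} {S : Set W}

open Classical in
/-- A criterion for a quotient `W / N` to be a Coxeter group on the images of the generators: the
subgroup `N` dies in every group in which those pairs of generators commute whose commutator
`(st)²` lies in `N`. -/
theorem quot_coxeter (hcs : IsCoxeterSystemOn m S) (N : Subgroup W) [N.Normal]
    (hker : ∀ {G : Type u} [Group G] (g : W →* G),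
      (∀ s ∈ S, ∀ t ∈ S, (s * t) ^ 2 ∈ N → g s * g t = g t * g s) → N ≤ g.ker) :
    ∃ mq : W ⧸ N → W ⧸ N → ℕ, IsCoxeterSystemOn mq (QuotientGroup.mk' N '' S) := by
  obtain ⟨cm, cs, hs, hm⟩ := hcs
  set η := QuotientGroup.mk' N with hη
  have hsq : ∀ s : S, (s : W) * s = 1 := fun s => by rw [← hs]; simp
  have hinv : ∀ x : η '' S, (x : W ⧸ N) * x = 1 := by
    rintro ⟨_, s, hs, rfl⟩
    rw [← map_mul, hsq ⟨s, hs⟩, map_one]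
  let cq : CoxeterMatrix (η '' S) :=
    { M := fun x y => orderOf ((x : W ⧸ N) * y)
      isSymm := by
        ext x y
        change orderOf ((y : W ⧸ N) * x) = orderOf ((x : W ⧸ N) * y)
        rw [← orderOf_inv, mul_inv_rev, inv_eq_of_mul_eq_one_left (hinv x),
          inv_eq_of_mul_eq_one_left (hinv y)]
      diagonal := fun x => by rw [hinv, orderOf_one]
      off_diagonal := fun x y hxy => by
        rw [Ne, orderOf_eq_one_iff]
        intro h
        apply hxy
        ext
        rw [← mul_left_inj (y : W ⧸ N), h, hinv] }
  have hcq : ∀ x y, cq.M x y = orderOf ((x : W ⧸ N) * y) := fun x y => rfl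
  let f₁ : cq.Group →* W ⧸ N := cq.toCoxeterSystem.lift
    ⟨fun x => (x : W ⧸ N), fun x y => by rw [hcq, pow_orderOf_eq_one]⟩
  have hf₁ : ∀ x, f₁ (cq.simple x) = x := fun x => by
    have := cq.toCoxeterSystem.lift_apply_simple
      (f := fun x : η '' S => (x : W ⧸ N)) (fun x y => by rw [hcq, pow_orderOf_eq_one]) x
    simpa using this
  let q : S → η '' S := fun s => ⟨η s, s, s.2, rfl⟩
  have hlift : cm.IsLiftable fun s => cq.simple (q s) := by
    intro s t
    have h1 : (cq.simple (q s) * cq.simple (q t)) ^ cq.M (q s) (q t) = 1 := by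
      have := cq.toCoxeterSystem.simple_mul_simple_pow (q s) (q t)
      simpa using this
    have h2 : cq.M (q s) (q t) ∣ cm.M s t := by
      rw [hcq]
      apply orderOf_dvd_of_pow_eq_one
      have := cs.simple_mul_simple_pow s t
      rw [hs, hs] at this
      change (η s * η t) ^ _ = 1
      rw [← map_mul, ← map_pow, this, map_one]
    obtain ⟨k, hk⟩ := h2
    rw [hk, pow_mul, h1, one_pow]
  let g : W →* cq.Group := cs.lift ⟨_, hlift⟩
  have hg : ∀ s : S, g s = cq.simple (q s) := fun s => by
    rw [← hs]; exact cs.lift_apply_simple hlift s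
  have hN : N ≤ g.ker := by
    apply hker
    intro s hs t ht hst
    rw [hg ⟨s, hs⟩, hg ⟨t, ht⟩]
    have h0 : cq.M (q ⟨s, hs⟩) (q ⟨t, ht⟩) ∣ 2 := by
      rw [hcq]
      apply orderOf_dvd_of_pow_eq_one
      change (η s * η t) ^ _ = 1
      rw [← map_mul, ← map_pow]
      exact (QuotientGroup.eq_one_iff _).mpr hst
    have h1 := cq.toCoxeterSystem.simple_mul_simple_pow (q ⟨s, hs⟩) (q ⟨t, ht⟩)
    obtain ⟨k, hk⟩ := h0
    have h2 : (cq.simple (q ⟨s, hs⟩) * cq.simple (q ⟨t, ht⟩)) ^ 2 = 1 := by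
      rw [hk, pow_mul]
      have : (cq.simple (q ⟨s, hs⟩) * cq.simple (q ⟨t, ht⟩)) ^ cq.M (q ⟨s, hs⟩) (q ⟨t, ht⟩) = 1 := by
        simpa using h1
      rw [this, one_pow]
    have h3 : ∀ x, cq.simple x * cq.simple x = 1 := fun x => by
      have := cq.toCoxeterSystem.simple_mul_simple_self x
      simpa using this
    rw [pow_two] at h2
    have h4 := eq_inv_of_mul_eq_one_left h2
    rw [mul_inv_rev, inv_eq_of_mul_eq_one_left (h3 _), inv_eq_of_mul_eq_one_left (h3 _)] at h4
    exact h4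
  let f₂ : W ⧸ N →* cq.Group := QuotientGroup.lift N g hN
  have hf₂ : ∀ w, f₂ (η w) = g w := fun w => rfl
  have c1 : f₂.comp f₁ = MonoidHom.id _ := by
    apply cq.toCoxeterSystem.ext_simple
    rintro ⟨_, s, hs, rfl⟩
    have : cq.toCoxeterSystem.simple ⟨η s, s, hs, rfl⟩ = cq.simple ⟨η s, s, hs, rfl⟩ := by simp
    rw [this, MonoidHom.comp_apply, hf₁, MonoidHom.id_apply]
    exact (hf₂ s).trans (hg ⟨s, hs⟩)
  have c2 : f₁.comp f₂ = MonoidHom.id _ := by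
    apply QuotientGroup.monoidHom_ext
    apply cs.ext_simple
    intro s
    rw [hs]
    change f₁ (f₂ (η s)) = η s
    rw [hf₂, hg, hf₁]
  let E : W ⧸ N ≃* cq.Group := MonoidHom.toMulEquiv f₂ f₁ c2 c1
  refine ⟨fun x y => orderOf (x * y), cq, ⟨E⟩, fun x => ?_, fun x y => rfl⟩
  exact hf₁ x

/-- `N(F)` satisfies the criterion: as the normal closure of commutator subgroups of bases, it dies as
soon as the generators in each of these bases commute. -/
theorem NF_quot (hcs : IsCoxeterSystemOn m S)
    (F : ∀ n : ℕ, (Fin n → Fin n → ℕ) → Prop) :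
    ∃ mq : W ⧸ NFSubgroup F m S → W ⧸ NFSubgroup F m S → ℕ,
      IsCoxeterSystemOn mq (QuotientGroup.mk' (NFSubgroup F m S) '' S) := by
  refine quot_coxeter hcs _ fun {G} _ g hg => ?_
  rw [NF_le_iff]
  intro B hB
  have hle := (NF_le_iff F m S _).mp le_rfl B hB
  obtain ⟨cm, cs, hs, hm⟩ := hcs
  have hsq : ∀ s ∈ S, (s : W)⁻¹ = s := fun s hs' => by
    have := cs.inv_simple ⟨s, hs'⟩
    rwa [hs] at this
  have h1 : ∀ s ∈ B, ∀ t ∈ B, g s * g t = g t * g s := by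
    intro s hsB t htB
    refine hg s (hB.1.1 hsB) t (hB.1.1 htB) (hle ?_)
    have : (s * t) ^ 2 = ⁅s, t⁆ := by
      rw [commutatorElement_def, hsq s (hB.1.1 hsB), hsq t (hB.1.1 htB), pow_two, ← mul_assoc]
    rw [this]
    exact Subgroup.commutator_mem_commutator (Subgroup.subset_closure hsB)
      (Subgroup.subset_closure htB)
  have h2 : ∀ s ∈ Subgroup.closure B, ∀ t ∈ B, g s * g t = g t * g s := by
    intro s hs t ht
    induction hs using Subgroup.closure_induction with
    | mem x hx => exact h1 x hx t ht
    | one => simp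
    | mul x y _ _ hx hy => rw [map_mul, mul_assoc, hy, ← mul_assoc, hx, mul_assoc]
    | inv x _ hx =>
      rw [map_inv, inv_mul_eq_iff_eq_mul, ← mul_assoc, hx, mul_assoc, mul_inv_cancel, mul_one]
  have h3 : ∀ s ∈ Subgroup.closure B, ∀ t ∈ Subgroup.closure B, g s * g t = g t * g s := by
    intro s hs t ht
    induction ht using Subgroup.closure_induction with
    | mem x hx => exact h2 s hs x hx
    | one => simp
    | mul x y _ _ hx hy => rw [map_mul, ← mul_assoc, hx, mul_assoc, hy, mul_assoc]
    | inv x _ hx =>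
      rw [map_inv, eq_inv_mul_iff_mul_eq, ← mul_assoc, ← hx, mul_assoc, mul_inv_cancel, mul_one]
  rw [Subgroup.commutator_le]
  intro a ha b hb
  rw [MonoidHom.mem_ker, map_commutatorElement, commutatorElement_eq_one_iff_mul_comm]
  exact h3 a ha b hb

end Quotient

end CoxRep

/-! ### The main result -/

/-- For a family `F` of isomorphism types of finite irreducible Coxeter
systems (given as an isomorphism-invariant family of Coxeter matrices), the quotient of `W`
by `N(F)` with the images of `S` is a Coxeter system, and `N(F)` does not depend on the
choice of Coxeter generators and is characteristic. -/
theorem NF_characteristic (m : W → W → ℕ) (S : Set W)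
    (hcs : IsCoxeterSystemOn m S) (hfin : S.Finite)
    (F : ∀ n : ℕ, (Fin n → Fin n → ℕ) → Prop)
    (hFinv : ∀ (n n' : ℕ) (M1 : Fin n → Fin n → ℕ) (M2 : Fin n' → Fin n' → ℕ),
      (∃ e : Fin n ≃ Fin n', ∀ i j, M2 (e i) (e j) = M1 i j) → F n M1 → F n' M2) :
    (∃ mq : W ⧸ NFSubgroup F m S → W ⧸ NFSubgroup F m S → ℕ,
        IsCoxeterSystemOn mq (QuotientGroup.mk' (NFSubgroup F m S) '' S)) ∧
    (∀ (S' : Set W) (m' : W → W → ℕ), IsCoxeterSystemOn m' S' → S'.Finite →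
        NFSubgroup F m' S' = NFSubgroup F m S) ∧
    (∀ φ : W ≃* W, Subgroup.map φ.toMonoidHom (NFSubgroup F m S) = NFSubgroup F m S) := by
  exact ⟨CoxRep.NF_quot hcs F, fun S' m' h' hf' =>
    le_antisymm (CoxRep.NF_le h' hf' hcs hfin) (CoxRep.NF_le hcs hfin h' hf'),
    fun φ => CoxRep.NF_char hcs hfin φ⟩
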